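/- arXiv:2303.10615 — 2 statements merged into one kernel-verified Lean document; each statement's English description precedes it below -/
import Mathlib

section
/- Every Klee graph on n vertices has exactly 2^(n/2 − 1) circuit double covers. -/
namespace CiDC

open SimpleGraph

/-- A circuit in a graph: a connected 2-regular subgraph. -/
def IsCircuit {V : Type*} {G : SimpleGraph V} (H : G.Subgraph) : Prop :=
  H.Connected ∧ ∀ v ∈ H.verts, (H.neighborSet v).ncard = 2

open scoped Classical in
/-- A circuit double cover: a multiset of circuits covering every edge exactly twice
(counted with multiplicity). -/
def IsCiDC {V : Type*} (G : SimpleGraph V) (C : Multiset G.Subgraph) : Prop :=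
  (∀ H ∈ C, IsCircuit H) ∧ ∀ e ∈ G.edgeSet, C.countP (fun H => e ∈ H.edgeSet) = 2

/-- ν(G): the number of circuit double covers of `G`. -/
noncomputable def nu {V : Type*} (G : SimpleGraph V) : ℕ :=
  {C : Multiset G.Subgraph | IsCiDC G C}.ncard

/-- A cubic graph: every vertex has degree 3. -/
def IsCubic {V : Type*} (G : SimpleGraph V) : Prop :=
  ∀ v : V, (G.neighborSet v).ncard = 3


/-- Adjacency of the graph obtained by expanding the vertex `v` (with neighbors
`a`, `b`, `c`) into a triangle on three new vertices. -/
def TriangleExpansionAdj {V : Type*} (G : SimpleGraph V) (v a b c : V) :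
    ({x : V // x ≠ v} ⊕ Fin 3) → ({x : V // x ≠ v} ⊕ Fin 3) → Prop
  | Sum.inl u, Sum.inl w => G.Adj u.1 w.1
  | Sum.inr i, Sum.inr j => i ≠ j
  | Sum.inl u, Sum.inr i => (i = 0 ∧ u.1 = a) ∨ (i = 1 ∧ u.1 = b) ∨ (i = 2 ∧ u.1 = c)
  | Sum.inr i, Sum.inl u => (i = 0 ∧ u.1 = a) ∨ (i = 1 ∧ u.1 = b) ∨ (i = 2 ∧ u.1 = c)

/-- The class of Klee graphs: `K₄` is a Klee graph, and the class is closed under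
expanding a vertex (with its three distinct neighbors) into a triangle. -/
inductive IsKlee : ∀ {V : Type}, SimpleGraph V → Prop where
  | base : IsKlee (completeGraph (Fin 4))
  | expand {V : Type} {G : SimpleGraph V} (v a b c : V)
      (hab : a ≠ b) (hac : a ≠ c) (hbc : b ≠ c)
      (hnbr : G.neighborSet v = {a, b, c})
      (G' : SimpleGraph ({x : V // x ≠ v} ⊕ Fin 3))
      (hG' : ∀ p q, G'.Adj p q ↔ TriangleExpansionAdj G v a b c p q)
      (hK : IsKlee G) : IsKlee G'

/-!
Expanding a vertex into a triangle doubles the number of circuit double covers, and `K₄` has two.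

A circuit of the expanded graph meets the triangle in a set `T` of edges, and evenness forces the
edges it uses between the triangle and the rest of the graph to be those at the odd vertices of `T`.
Every such edge and every edge of the triangle is covered twice, and counting leaves only two
possibilities for the nonempty traces of a double cover: the whole triangle together with its three
single edges, or its three two-edge paths. So the triangle is either a circuit of the cover, and
every other circuit through it takes the short way around, or it is not and they all take the long
way around. In both cases contracting the triangle gives a double cover of the original graph, from
which the traces can be reconstructed. The covers of `K₄` are found by applying the same count to
one of its triangles.
-/

section Circuits

variable {V : Type*} {G : SimpleGraph V}

/-- The vertex `x` has degree `0` or `2` in `K`. -/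
def IsEvenAt (K : SimpleGraph V) (x : V) : Prop :=
  K.neighborSet x = ∅ ∨ (K.neighborSet x).ncard = 2

/-- A circuit, encoded by its edges as a graph on the whole vertex set: the vertices off the circuit
are isolated. -/
structure IsCircuitGraph (K : SimpleGraph V) : Prop where
  ne_bot : K ≠ ⊥
  isEvenAt : ∀ x, IsEvenAt K x
  reachable : ∀ x ∈ K.support, ∀ y ∈ K.support, K.Reachable x y

open scoped Classical in
/-- A circuit double cover, with circuits encoded by `IsCircuitGraph`. -/
structure IsDoubleCover (G : SimpleGraph V) (C : Multiset (SimpleGraph V)) : Prop where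
  le : ∀ K ∈ C, K ≤ G
  isCircuitGraph : ∀ K ∈ C, IsCircuitGraph K
  countP_adj : ∀ x y, G.Adj x y → C.countP (fun K => K.Adj x y) = 2

/-- The subgraph of `G` formed by the edges of `K` in `G` and their endpoints. -/
def supportSubgraph (G K : SimpleGraph V) : G.Subgraph where
  verts := (G ⊓ K).support
  Adj := (G ⊓ K).Adj
  adj_sub h := h.1
  edge_vert h := ⟨_, h⟩
  symm := (G ⊓ K).symm

lemma spanningCoe_supportSubgraph {K : SimpleGraph V} (h : K ≤ G) :
    (supportSubgraph G K).spanningCoe = K :=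
  SimpleGraph.ext (congrArg SimpleGraph.Adj (inf_eq_right.2 h))

lemma verts_supportSubgraph {K : SimpleGraph V} (h : K ≤ G) :
    (supportSubgraph G K).verts = K.support :=
  congrArg SimpleGraph.support (inf_eq_right.2 h)

lemma supportSubgraph_spanningCoe {H : G.Subgraph} (h : H.verts = H.spanningCoe.support) :
    supportSubgraph G H.spanningCoe = H :=
  Subgraph.verts_spanningCoe_injective <| Prod.ext
    ((verts_supportSubgraph H.spanningCoe_le).trans h.symm)
    (spanningCoe_supportSubgraph H.spanningCoe_le)

lemma connected_iff_reachable_spanningCoe (H : G.Subgraph) :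
    H.Connected ↔
      H.verts.Nonempty ∧ ∀ x ∈ H.verts, ∀ y ∈ H.verts, H.spanningCoe.Reachable x y := by
  rw [Subgraph.connected_iff, Subgraph.preconnected_iff, and_comm]
  refine and_congr_right fun _ => ⟨fun h x hx y hy => ?_, fun h ⟨x, hx⟩ ⟨y, hy⟩ => ?_⟩
  · exact (h ⟨x, hx⟩ ⟨y, hy⟩).map H.coeEmbeddingSpanningCoe.toHom
  · suffices ∀ z, H.spanningCoe.Reachable x z → ∀ hz : z ∈ H.verts, H.coe.Reachable ⟨x, hx⟩ ⟨z, hz⟩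
      from this y (h x hx y hy) hy
    intro z hxz
    rw [reachable_iff_reflTransGen] at hxz
    induction hxz with
    | refl => exact fun _ => Reachable.refl _
    | tail _ hbc ih =>
      have hadj : H.Adj _ _ := hbc
      exact fun hz => (ih hadj.fst_mem).trans (Adj.reachable (G := H.coe) hadj)

lemma isCircuit_iff (H : G.Subgraph) :
    IsCircuit H ↔ H.verts = H.spanningCoe.support ∧ IsCircuitGraph H.spanningCoe := by
  rw [IsCircuit, connected_iff_reachable_spanningCoe]
  constructor
  · rintro ⟨⟨⟨x, hx⟩, hreach⟩, hdeg⟩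
    have hverts : H.verts = H.spanningCoe.support := by
      refine Set.Subset.antisymm (fun y hy => ?_) fun y ⟨z, hyz⟩ => H.edge_vert hyz
      exact Set.nonempty_of_ncard_ne_zero ((hdeg y hy).trans_ne two_ne_zero)
    refine ⟨hverts, ?_, fun y => ?_, hverts ▸ hreach⟩
    · exact (support_eq_bot_iff _).not.1 (hverts ▸ Set.Nonempty.ne_empty ⟨x, hx⟩)
    · by_cases hy : y ∈ H.verts
      · exact Or.inr (hdeg y hy)
      · exact Or.inl (Set.eq_empty_of_forall_notMem fun z hyz => hy (H.edge_vert hyz))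
  · rintro ⟨hverts, hne, heven, hreach⟩
    rw [hverts]
    exact ⟨⟨Set.nonempty_iff_ne_empty.2 ((support_eq_bot_iff _).not.2 hne), hreach⟩,
      fun y hy => (heven y).resolve_left (Set.Nonempty.ne_empty hy)⟩

lemma countP_map_eq_countP_comp {α β : Type*} (f : α → β) (p : β → Prop) [DecidablePred p]
    (C : Multiset α) : (C.map f).countP p = C.countP (fun a => p (f a)) := by
  rw [Multiset.countP_map, Multiset.countP_eq_card_filter]

open scoped Classical in
lemma isDoubleCover_map_spanningCoe_iff {C : Multiset G.Subgraph}
    (hC : ∀ H ∈ C, H.verts = H.spanningCoe.support) :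
    IsDoubleCover G (C.map Subgraph.spanningCoe) ↔ IsCiDC G C := by
  have hcount (x y : V) : (C.map Subgraph.spanningCoe).countP (fun K => K.Adj x y) =
      C.countP (fun H => s(x, y) ∈ H.edgeSet) := countP_map_eq_countP_comp _ _ _
  constructor
  · rintro ⟨-, hcirc, hcov⟩
    refine ⟨fun H hH => (isCircuit_iff H).2 ⟨hC H hH, hcirc _ (Multiset.mem_map_of_mem _ hH)⟩, ?_⟩
    exact Sym2.ind fun x y hxy => (hcount x y).symm.trans (hcov x y hxy)
  · rintro ⟨hcirc, hcov⟩
    refine ⟨?_, ?_, fun x y hxy => (hcount x y).trans (hcov s(x, y) hxy)⟩ <;>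
      simp only [Multiset.mem_map, forall_exists_index, and_imp, forall_apply_eq_imp_iff₂]
    · exact fun H _ => H.spanningCoe_le
    · exact fun H hH => ((isCircuit_iff H).1 (hcirc H hH)).2

lemma IsCiDC.map_supportSubgraph_map_spanningCoe {C : Multiset G.Subgraph} (hC : IsCiDC G C) :
    (C.map Subgraph.spanningCoe).map (supportSubgraph G) = C := by
  rw [Multiset.map_map]
  exact (Multiset.map_congr rfl fun H hH =>
    supportSubgraph_spanningCoe ((isCircuit_iff H).1 (hC.1 H hH)).1).trans (Multiset.map_id C)

lemma IsDoubleCover.map_spanningCoe_map_supportSubgraph {C : Multiset (SimpleGraph V)}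
    (hC : IsDoubleCover G C) : (C.map (supportSubgraph G)).map Subgraph.spanningCoe = C := by
  rw [Multiset.map_map]
  exact (Multiset.map_congr rfl fun K hK =>
    spanningCoe_supportSubgraph (hC.le K hK)).trans (Multiset.map_id C)

lemma IsDoubleCover.isCiDC_map_supportSubgraph {C : Multiset (SimpleGraph V)}
    (hC : IsDoubleCover G C) : IsCiDC G (C.map (supportSubgraph G)) := by
  refine (isDoubleCover_map_spanningCoe_iff ?_).1 (by rwa [hC.map_spanningCoe_map_supportSubgraph])
  simp only [Multiset.mem_map, forall_exists_index, and_imp, forall_apply_eq_imp_iff₂]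
  exact fun K hK => by
    rw [verts_supportSubgraph (hC.le K hK), spanningCoe_supportSubgraph (hC.le K hK)]

lemma nu_eq_ncard_isDoubleCover (G : SimpleGraph V) : nu G = {C | IsDoubleCover G C}.ncard := by
  have himage : {C | IsDoubleCover G C} =
      Multiset.map Subgraph.spanningCoe '' {C : Multiset G.Subgraph | IsCiDC G C} := by
    refine Set.Subset.antisymm (fun C hC => ?_) (Set.image_subset_iff.2 fun C hC => ?_)
    · exact ⟨_, hC.isCiDC_map_supportSubgraph, hC.map_spanningCoe_map_supportSubgraph⟩
    · exact (isDoubleCover_map_spanningCoe_iff fun H hH =>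
        ((isCircuit_iff H).1 (hC.1 H hH)).1).2 hC
  have hinv : Set.LeftInvOn (Multiset.map (supportSubgraph G)) (Multiset.map Subgraph.spanningCoe)
      {C : Multiset G.Subgraph | IsCiDC G C} := fun _ hC => hC.map_supportSubgraph_map_spanningCoe
  rw [nu, himage, hinv.injOn.ncard_image]

lemma exists_common_neighbor_of_card_le_five [Fintype V] (hV : Fintype.card V ≤ 5)
    {K : SimpleGraph V} {x y : V} (hx : (K.neighborSet x).ncard = 2)
    (hy : (K.neighborSet y).ncard = 2) (hne : x ≠ y) (hxy : ¬K.Adj x y) :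
    ∃ z, K.Adj x z ∧ K.Adj y z := by
  by_contra! hdisj
  have hpair : ({x, y} : Set V).ncard = 2 := Set.ncard_pair hne
  have hunion : (K.neighborSet x ∪ K.neighborSet y).ncard = 4 := by
    rw [Set.ncard_union_eq (Set.disjoint_left.2 (by exact hdisj)), hx, hy]
  have hall : (K.neighborSet x ∪ K.neighborSet y ∪ {x, y}).ncard = 6 := by
    rw [Set.ncard_union_eq, hunion, hpair]
    simpa [-Set.disjoint_insert_right, Set.disjoint_right] using ⟨fun h => hxy h.symm, hxy⟩
  have := Set.ncard_le_card (K.neighborSet x ∪ K.neighborSet y ∪ {x, y})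
  rw [Nat.card_eq_fintype_card] at this
  omega

lemma isCircuitGraph_of_card_le_five [Fintype V] (hV : Fintype.card V ≤ 5)
    {K : SimpleGraph V} (hne : K ≠ ⊥) (heven : ∀ x, IsEvenAt K x) : IsCircuitGraph K := by
  have hdeg {x : V} (hx : x ∈ K.support) : (K.neighborSet x).ncard = 2 :=
    (heven x).resolve_left (Set.Nonempty.ne_empty hx)
  refine ⟨hne, heven, fun x hx y hy => ?_⟩
  by_cases hxy : x = y
  · exact hxy ▸ Reachable.refl x
  by_cases hadj : K.Adj x y
  · exact hadj.reachable
  obtain ⟨z, hxz, hyz⟩ := exists_common_neighbor_of_card_le_five hV (hdeg hx) (hdeg hy) hxy hadj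
  exact hxz.reachable.trans hyz.symm.reachable

end Circuits

section Triangle

/-- The vertices of odd degree in the set `T` of edges of a triangle with vertex set `Fin 3`.
The edge `k` is the one opposite to the vertex `k`, so that distinct `i` and `j` are joined by the
edge `-(i + j)`. -/
def boundary (T : Finset (Fin 3)) : Finset (Fin 3) :=
  {i | Xor (i + 1 ∈ T) (i + 2 ∈ T)}

/-- The edges of a triangle with both ends in `S`. -/
def innerEdges (S : Finset (Fin 3)) : Finset (Fin 3) :=
  {k | k + 1 ∈ S ∧ k + 2 ∈ S}

/-- The nonempty traces on a triangle of a double cover in which the triangle itself is a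
circuit. -/
def shortPattern : Multiset (Finset (Fin 3)) :=
  Finset.univ ::ₘ Finset.univ.val.map fun k => {k}

/-- The nonempty traces on a triangle of a double cover in which the triangle itself is not a
circuit. -/
def longPattern : Multiset (Finset (Fin 3)) :=
  Finset.univ.val.map fun k => {k}ᶜ

lemma mem_boundary {T : Finset (Fin 3)} {i : Fin 3} :
    i ∈ boundary T ↔ Xor (i + 1 ∈ T) (i + 2 ∈ T) := by
  simp [boundary]

lemma boundary_univ : boundary Finset.univ = ∅ := by
  decide

lemma boundary_eq_self_iff : ∀ {S}, boundary S = S ↔ S.card = 0 ∨ S.card = 2 := by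
  decide

lemma boundary_eq_self_iff_mem :
    ∀ {S}, boundary S = S ↔ (0 ∈ S ↔ Xor (1 ∈ S) (2 ∈ S)) := by
  decide

lemma boundary_boundary : ∀ T, boundary (boundary T) = boundary T := by
  decide

lemma eq_empty_or_eq_univ_of_boundary_eq_empty :
    ∀ {T}, boundary T = ∅ → T = ∅ ∨ T = Finset.univ := by
  decide

lemma fin_three_add_add : ∀ i : Fin 3,
    i + 1 + 1 = i + 2 ∧ i + 1 + 2 = i ∧ i + 2 + 1 = i ∧ i + 2 + 2 = i + 1 := by
  decide

lemma eq_add_one_or_eq_add_two : ∀ {i j : Fin 3}, i ≠ j → j = i + 1 ∨ j = i + 2 := by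
  decide

lemma mem_or_mem_and_mem_of_mem_ends : ∀ {T : Finset (Fin 3)} {i j : Fin 3}, i ≠ j →
    i + 1 ∈ T ∨ i + 2 ∈ T → j + 1 ∈ T ∨ j + 2 ∈ T → -(i + j) ∈ T ∨ j ∈ T ∧ i ∈ T := by
  decide

variable {α : Type*} {C : Multiset α}

lemma countP_add_two_mul_countP_and {p q r : α → Prop} [DecidablePred p] [DecidablePred q]
    [DecidablePred r] (h : ∀ a ∈ C, p a ↔ Xor (q a) (r a)) :
    C.countP p + 2 * C.countP (fun a => q a ∧ r a) = C.countP q + C.countP r := by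
  induction C using Multiset.induction with
  | empty => rfl
  | cons a C ih =>
    have ih := ih fun b hb => h b (Multiset.mem_cons_of_mem hb)
    have ha := h a (Multiset.mem_cons_self a C)
    simp only [Multiset.countP_cons, ha]
    by_cases hq : q a <;> by_cases hr : r a <;> simp [hq, hr, Xor] <;> omega

lemma countP_eq_sum_count [Fintype α] [DecidableEq α] (p : α → Prop) [DecidablePred p] :
    C.countP p = ∑ a with p a, C.count a := by
  have hsubset : ∀ a ∈ C.filter p, a ∈ ({a | p a} : Finset α) := by
    simp +contextual [Multiset.mem_filter]
  rw [Multiset.countP_eq_card_filter, ← Multiset.sum_count_eq_card hsubset]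
  exact Finset.sum_congr rfl fun a ha =>
    Multiset.count_filter_of_pos (Finset.mem_filter.1 ha).2

variable {M : Multiset (Finset (Fin 3))}

lemma countP_mem_eq_add_count (k : Fin 3) : M.countP (k ∈ ·) =
    M.count Finset.univ + M.count {k} + M.count {k + 1}ᶜ + M.count {k + 2}ᶜ := by
  have hfilter : ∀ k : Fin 3, (Finset.univ.filter (k ∈ ·)).val =
      {Finset.univ, {k}, {k + 1}ᶜ, {k + 2}ᶜ} := by decide
  rw [countP_eq_sum_count, Finset.sum, hfilter]
  simp [add_assoc]

lemma countP_mem_boundary_eq_add_count (i : Fin 3) : M.countP (i ∈ boundary ·) =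
    M.count {i + 1} + M.count {i + 2} + M.count {i + 1}ᶜ + M.count {i + 2}ᶜ := by
  have hfilter : ∀ i : Fin 3, (Finset.univ.filter (i ∈ boundary ·)).val =
      {{i + 1}, {i + 2}, {i + 1}ᶜ, {i + 2}ᶜ} := by decide
  rw [countP_eq_sum_count, Finset.sum, hfilter]
  simp [add_assoc]

lemma count_eq_of_countP_eq_two (hedge : ∀ k, M.countP (k ∈ ·) = 2)
    (hvertex : ∀ i, M.countP (i ∈ boundary ·) = 2) (k : Fin 3) :
    M.count {k} = M.count Finset.univ ∧ M.count {k}ᶜ + M.count Finset.univ = 1 := by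
  simp only [countP_mem_eq_add_count] at hedge
  simp only [countP_mem_boundary_eq_add_count] at hvertex
  have hedge₁ := hedge (k + 1)
  have hedge₂ := hedge (k + 2)
  have hvertex₁ := hvertex (k + 1)
  have hvertex₂ := hvertex (k + 2)
  simp only [fin_three_add_add] at hedge₁ hedge₂ hvertex₁ hvertex₂
  have := hedge k
  have := hvertex k
  omega

lemma filter_nonempty_eq_shortPattern_or_longPattern (hedge : ∀ k, M.countP (k ∈ ·) = 2)
    (hvertex : ∀ i, M.countP (i ∈ boundary ·) = 2) :
    M.filter Finset.Nonempty = shortPattern ∨ M.filter Finset.Nonempty = longPattern := by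
  have hcases : ∀ T : Finset (Fin 3),
      T = ∅ ∨ T = Finset.univ ∨ ∃ k, T = {k} ∨ T = {k}ᶜ := by decide
  have hcount := count_eq_of_countP_eq_two hedge hvertex
  have hfilter (T : Finset (Fin 3)) (hT : T.Nonempty) :
      (M.filter Finset.Nonempty).count T = M.count T := Multiset.count_filter_of_pos hT
  have hempty : (M.filter Finset.Nonempty).count ∅ = 0 := by simp
  have hne : ∀ k : Fin 3, ({k}ᶜ : Finset (Fin 3)).Nonempty := by decide
  have hshort : shortPattern.count ∅ = 0 ∧ shortPattern.count Finset.univ = 1 ∧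
      ∀ k, shortPattern.count {k} = 1 ∧ shortPattern.count {k}ᶜ = 0 := by decide
  have hlong : longPattern.count ∅ = 0 ∧ longPattern.count Finset.univ = 0 ∧
      ∀ k, longPattern.count {k} = 0 ∧ longPattern.count {k}ᶜ = 1 := by decide
  have huniv : M.count Finset.univ ≤ 1 := by have := hcount 0; omega
  refine (Nat.le_one_iff_eq_zero_or_eq_one.1 huniv).symm.imp ?_ ?_ <;>
  · refine fun hM => Multiset.ext.2 fun T => ?_
    obtain rfl | rfl | ⟨k, rfl | rfl⟩ := hcases T <;>
      grind [Finset.univ_nonempty, Finset.singleton_nonempty]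

end Triangle

section Expansion

variable {V : Type*} {v : V}

/-- The map collapsing the triangle which replaces `v` back to `v`. -/
def proj (v : V) : {x // x ≠ v} ⊕ Fin 3 → V :=
  Sum.elim Subtype.val fun _ => v

/-- The graph obtained from `K` by replacing `v` with the edges `T` of a triangle, whose vertex `i`
inherits the edge of `K` between `v` and `n i`. -/
def expand (n : Fin 3 ↪ {x // x ≠ v}) (T : Finset (Fin 3)) (K : SimpleGraph V) :
    SimpleGraph ({x // x ≠ v} ⊕ Fin 3) where
  Adj
    | .inl x, .inl y => K.Adj x y
    | .inl x, .inr i => x = n i ∧ K.Adj v x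
    | .inr i, .inl x => x = n i ∧ K.Adj v x
    | .inr i, .inr j => i ≠ j ∧ -(i + j) ∈ T
  symm := ⟨by
    rintro (x | i) (y | j) h
    · exact h.symm
    · exact h
    · exact h
    · exact ⟨h.1.symm, add_comm i j ▸ h.2⟩⟩
  loopless := ⟨by
    rintro (x | i) h
    · exact K.irrefl h
    · exact h.1 rfl⟩

/-- The graph obtained by collapsing the triangle which replaces `v` back to `v`. -/
def contract (K' : SimpleGraph ({x // x ≠ v} ⊕ Fin 3)) : SimpleGraph V :=
  K'.map (proj v)

open scoped Classical in
/-- The edges of the triangle replacing `v` that lie in `K'`. -/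
noncomputable def trace (K' : SimpleGraph ({x // x ≠ v} ⊕ Fin 3)) : Finset (Fin 3) :=
  {k | K'.Adj (.inr (k + 1)) (.inr (k + 2))}

open scoped Classical in
/-- The indices of the edges of `K` at `v`. -/
noncomputable def spokes (n : Fin 3 ↪ {x // x ≠ v}) (K : SimpleGraph V) : Finset (Fin 3) :=
  {i | K.Adj v (n i)}

variable {n : Fin 3 ↪ {x // x ≠ v}} {T : Finset (Fin 3)} {G K : SimpleGraph V}
  {K' : SimpleGraph ({x // x ≠ v} ⊕ Fin 3)} {x y : {x // x ≠ v}} {i j k : Fin 3}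

lemma expand_adj_inr_inl : (expand n T K).Adj (.inr i) (.inl x) ↔ x = n i ∧ K.Adj v x := Iff.rfl

lemma expand_adj_inr_inr : (expand n T K).Adj (.inr i) (.inr j) ↔ i ≠ j ∧ -(i + j) ∈ T := Iff.rfl

lemma expand_adj_inr_add_one : (expand n T K).Adj (.inr i) (.inr (i + 1)) ↔ i + 2 ∈ T := by
  have h : ∀ i : Fin 3, i ≠ i + 1 ∧ -(i + (i + 1)) = i + 2 := by decide
  rw [expand_adj_inr_inr, (h _).2, and_iff_right (h _).1]

lemma expand_adj_inr_add_two : (expand n T K).Adj (.inr i) (.inr (i + 2)) ↔ i + 1 ∈ T := by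
  have h : ∀ i : Fin 3, i ≠ i + 2 ∧ -(i + (i + 2)) = i + 1 := by decide
  rw [expand_adj_inr_inr, (h _).2, and_iff_right (h _).1]

lemma expand_adj_edge : (expand n T K).Adj (.inr (k + 1)) (.inr (k + 2)) ↔ k ∈ T := by
  have h : ∀ k : Fin 3, k + 1 ≠ k + 2 ∧ -(k + 1 + (k + 2)) = k := by decide
  rw [expand_adj_inr_inr, (h _).2, and_iff_right (h _).1]

lemma mem_trace : k ∈ trace K' ↔ K'.Adj (.inr (k + 1)) (.inr (k + 2)) := by
  simp [trace]

lemma mem_spokes : i ∈ spokes n K ↔ K.Adj v (n i) := by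
  simp [spokes]

lemma contract_adj_coe : (contract K').Adj x y ↔ K'.Adj (.inl x) (.inl y) := by
  simp only [contract, SimpleGraph.map_adj']
  constructor
  · rintro ⟨-, x' | i, y' | j, h, hx, hy⟩
    · obtain rfl : x' = x := Subtype.ext hx
      obtain rfl : y' = y := Subtype.ext hy
      exact h
    · exact (y.2 hy.symm).elim
    · exact (x.2 hx.symm).elim
    · exact (x.2 hx.symm).elim
  · exact fun h => ⟨fun hxy => h.ne (congrArg _ (Subtype.ext hxy)), _, _, h, rfl, rfl⟩

lemma contract_adj_center : (contract K').Adj v x ↔ ∃ i, K'.Adj (.inr i) (.inl x) := by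
  simp only [contract, SimpleGraph.map_adj']
  constructor
  · rintro ⟨-, x' | i, y' | j, h, hx, hy⟩
    · exact (x'.2 hx).elim
    · exact (x'.2 hx).elim
    · obtain rfl : y' = x := Subtype.ext hy
      exact ⟨i, h⟩
    · exact (x.2 hy.symm).elim
  · exact fun ⟨i, h⟩ => ⟨x.2.symm, _, _, h, rfl, rfl⟩

lemma le_of_forall_coe (hcoe : ∀ x y : {x // x ≠ v}, K.Adj x y → G.Adj x y)
    (hcenter : ∀ x : {x // x ≠ v}, K.Adj v x → G.Adj v x) : K ≤ G := by
  intro x y h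
  by_cases hx : x = v
  · subst hx
    exact hcenter ⟨y, h.ne'⟩ h
  by_cases hy : y = v
  · subst hy
    exact (hcenter ⟨x, hx⟩ h.symm).symm
  exact hcoe ⟨x, hx⟩ ⟨y, hy⟩ h

lemma expand_mono (h : K ≤ G) : expand n T K ≤ expand n Finset.univ G := by
  rintro (x | i) (y | j) hadj
  · exact h hadj
  · exact ⟨hadj.1, h hadj.2⟩
  · exact ⟨hadj.1, h hadj.2⟩
  · exact ⟨hadj.1, Finset.mem_univ _⟩

lemma trace_expand : trace (expand n T K) = T :=
  Finset.ext fun _ => mem_trace.trans expand_adj_edge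

lemma contract_expand (hK : ∀ x, K.Adj v x → ∃ i, ↑(n i) = x) : contract (expand n T K) = K := by
  refine le_antisymm ?_ ?_ <;> refine le_of_forall_coe (v := v) (fun x y => ?_) fun x => ?_
  · exact contract_adj_coe.1
  · exact fun h => (contract_adj_center.1 h).elim fun _ h => h.2
  · exact contract_adj_coe (K' := expand n T K).2
  · intro h
    obtain ⟨i, hi⟩ := hK x h
    exact contract_adj_center.2 ⟨i, (Subtype.ext hi).symm, h⟩

lemma contract_le (h : K' ≤ expand n Finset.univ G) : contract K' ≤ G :=
  le_of_forall_coe (fun _ _ hadj => h (contract_adj_coe.1 hadj)) fun _ hadj =>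
    (contract_adj_center.1 hadj).elim fun _ hadj => (h hadj).2

lemma expand_trace_contract (h : K' ≤ expand n Finset.univ G) :
    expand n (trace K') (contract K') = K' := by
  have hspoke {x : {x // x ≠ v}} {i : Fin 3} :
      (x = n i ∧ (contract K').Adj v x) ↔ K'.Adj (.inr i) (.inl x) := by
    rw [contract_adj_center]
    refine ⟨fun ⟨hx, j, hj⟩ => ?_, fun hi => ⟨(h hi).1, i, hi⟩⟩
    exact n.injective ((h hj).1.symm.trans hx) ▸ hj
  ext (x | i) (y | j)
  · exact contract_adj_coe
  · exact hspoke.trans (K'.adj_comm _ _)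
  · exact hspoke
  · by_cases hij : i = j
    · simp [hij]
    obtain rfl | rfl := eq_add_one_or_eq_add_two hij
    · simp only [expand_adj_inr_add_one, mem_trace, fin_three_add_add]
    · simp only [expand_adj_inr_add_two, mem_trace, fin_three_add_add, K'.adj_comm]

end Expansion

section Evenness

variable {V : Type*} {v : V} {n : Fin 3 ↪ {x // x ≠ v}} {T : Finset (Fin 3)} {K : SimpleGraph V}

lemma eq_empty_or_ncard_eq_two_iff {α : Type*} {f : Fin 3 → α} (hf : f.Injective) {s : Set α}
    (hs : s ⊆ Set.range f) {S : Finset (Fin 3)} (hS : ∀ i, i ∈ S ↔ f i ∈ s) :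
    s = ∅ ∨ s.ncard = 2 ↔ boundary S = S := by
  have himage : s = f '' S := by
    ext a
    refine ⟨fun ha => ?_, ?_⟩
    · obtain ⟨i, rfl⟩ := hs ha
      exact ⟨i, (hS i).2 ha, rfl⟩
    · rintro ⟨i, hi, rfl⟩
      exact (hS i).1 hi
  rw [boundary_eq_self_iff, himage, Set.image_eq_empty, Finset.coe_eq_empty, Finset.card_eq_zero,
    Set.ncard_image_of_injective _ hf, Set.ncard_coe_finset]

lemma isEvenAt_center_iff (hK : ∀ x, K.Adj v x → ∃ i, ↑(n i) = x) :
    IsEvenAt K v ↔ boundary (spokes n K) = spokes n K :=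
  eq_empty_or_ncard_eq_two_iff (Subtype.val_injective.comp n.injective) hK fun _ => mem_spokes

lemma isEvenAt_expand_inr_iff (i : Fin 3) :
    IsEvenAt (expand n T K) (.inr i) ↔ (i ∈ spokes n K ↔ i ∈ boundary T) := by
  classical
  let nbr : Fin 3 → {x // x ≠ v} ⊕ Fin 3 := ![.inl (n i), .inr (i + 1), .inr (i + 2)]
  have hnbr : nbr.Injective := by simp [nbr, Function.Injective, Fin.forall_fin_succ]
  have hrange : (expand n T K).neighborSet (.inr i) ⊆ Set.range nbr := by
    rintro (x | j) h
    · exact ⟨0, congrArg Sum.inl h.1.symm⟩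
    · obtain rfl | rfl := eq_add_one_or_eq_add_two h.1
      exacts [⟨1, rfl⟩, ⟨2, rfl⟩]
  rw [IsEvenAt, eq_empty_or_ncard_eq_two_iff hnbr hrange
    (S := {j | (expand n T K).Adj (.inr i) (nbr j)}) (by simp), boundary_eq_self_iff_mem]
  simp [nbr, expand_adj_inr_inl, expand_adj_inr_add_one, expand_adj_inr_add_two, mem_spokes,
    mem_boundary, xor_comm (i + 2 ∈ T)]

lemma isEvenAt_expand_inl_iff (hK : ∀ x, K.Adj v x → ∃ i, ↑(n i) = x) (x : {x // x ≠ v}) :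
    IsEvenAt (expand n T K) (.inl x) ↔ IsEvenAt K x := by
  have himage : K.neighborSet x = proj v '' (expand n T K).neighborSet (.inl x) := by
    ext y
    constructor
    · intro hxy
      by_cases hy : y = v
      · subst hy
        obtain ⟨i, hi⟩ := hK x hxy.symm
        exact ⟨.inr i, ⟨(Subtype.ext hi).symm, hxy.symm⟩, rfl⟩
      · exact ⟨.inl ⟨y, hy⟩, hxy, rfl⟩
    · rintro ⟨y | i, h, rfl⟩
      · exact h
      · exact h.2.symm
  have hinj : Set.InjOn (proj v) ((expand n T K).neighborSet (.inl x)) := by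
    rintro (y | i) hy (z | j) hz hyz
    · exact congrArg _ (Subtype.ext hyz)
    · exact (y.2 hyz).elim
    · exact (z.2 hyz.symm).elim
    · exact congrArg _ (n.injective (hy.1.symm.trans hz.1))
  rw [IsEvenAt, IsEvenAt, himage, Set.image_eq_empty, hinj.ncard_image]

lemma forall_isEvenAt_expand_iff (hK : ∀ x, K.Adj v x → ∃ i, ↑(n i) = x) :
    (∀ p, IsEvenAt (expand n T K) p) ↔ (∀ x, IsEvenAt K x) ∧ spokes n K = boundary T := by
  rw [Sum.forall, Finset.ext_iff]
  simp only [isEvenAt_expand_inl_iff hK, isEvenAt_expand_inr_iff]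
  refine and_congr_left fun hspokes => ⟨fun h x => ?_, fun h x => h x⟩
  by_cases hx : x = v
  · rw [hx, isEvenAt_center_iff hK, Finset.ext hspokes, boundary_boundary]
  · exact h ⟨x, hx⟩

end Evenness

section Connectivity

variable {α β : Type*} {K : SimpleGraph α} {f : α → β} {x y : α}

lemma reachable_map (h : K.Reachable x y) : (K.map f).Reachable (f x) (f y) := by
  rw [reachable_iff_reflTransGen] at h
  induction h with
  | refl => rfl
  | @tail y z _ hyz ih =>
    by_cases heq : f y = f z
    · exact heq ▸ ih
    · exact ih.trans ((map_adj' ..).2 ⟨heq, y, z, hyz, rfl, rfl⟩).reachable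

lemma reachable_of_reachable_map
    (hfiber : ∀ x ∈ K.support, ∀ y ∈ K.support, f x = f y → K.Reachable x y)
    (hx : x ∈ K.support) (hy : y ∈ K.support) (h : (K.map f).Reachable (f x) (f y)) :
    K.Reachable x y := by
  suffices ∀ b, (K.map f).Reachable (f x) b → ∀ y ∈ K.support, f y = b → K.Reachable x y from
    this _ h y hy rfl
  intro b hb
  rw [reachable_iff_reflTransGen] at hb
  induction hb with
  | refl => exact fun y hy hfy => hfiber x hx y hy hfy.symm
  | tail _ hbc ih =>
    obtain ⟨-, p, q, hpq, hp, hq⟩ := (map_adj' ..).1 hbc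
    intro y hy hfy
    exact ((ih p ⟨q, hpq⟩ hp).trans hpq.reachable).trans
      (hfiber q ⟨p, hpq.symm⟩ y hy (hq.trans hfy.symm))

lemma exists_mem_support_of_mem_support_map {b : β} (hb : b ∈ (K.map f).support) :
    ∃ x ∈ K.support, f x = b := by
  obtain ⟨c, hbc⟩ := hb
  obtain ⟨-, p, q, hpq, hp, -⟩ := (map_adj' ..).1 hbc
  exact ⟨p, ⟨q, hpq⟩, hp⟩

lemma reachable_map_of_mem_support
    (h : ∀ x ∈ K.support, ∀ y ∈ K.support, K.Reachable x y) :
    ∀ b ∈ (K.map f).support, ∀ c ∈ (K.map f).support, (K.map f).Reachable b c := by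
  intro b hb c hc
  obtain ⟨x, hx, rfl⟩ := exists_mem_support_of_mem_support_map hb
  obtain ⟨y, hy, rfl⟩ := exists_mem_support_of_mem_support_map hc
  exact reachable_map (h x hx y hy)

end Connectivity

section ExpandedCircuits

variable {V : Type*} {v : V} {n : Fin 3 ↪ {x // x ≠ v}} {T : Finset (Fin 3)} {K : SimpleGraph V}

lemma spokes_bot : spokes n ⊥ = ∅ := by
  simp [spokes]

lemma center_mem_support_of_spokes_nonempty (h : (spokes n K).Nonempty) : v ∈ K.support :=
  h.elim fun i hi => ⟨n i, mem_spokes.1 hi⟩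

lemma mem_of_inr_mem_support_expand (hT : spokes n K = boundary T) {i : Fin 3}
    (hi : .inr i ∈ (expand n T K).support) : i + 1 ∈ T ∨ i + 2 ∈ T := by
  obtain ⟨x | j, h⟩ := (mem_support _).1 hi
  · obtain ⟨rfl, h⟩ := h
    exact (mem_boundary.1 (hT ▸ mem_spokes.2 h)).imp And.left And.left
  · obtain rfl | rfl := eq_add_one_or_eq_add_two h.1
    · exact Or.inr (expand_adj_inr_add_one.1 h)
    · exact Or.inl (expand_adj_inr_add_two.1 h)

lemma reachable_expand_inr_inr {i j : Fin 3} (hi : i + 1 ∈ T ∨ i + 2 ∈ T)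
    (hj : j + 1 ∈ T ∨ j + 2 ∈ T) : (expand n T K).Reachable (.inr i) (.inr j) := by
  by_cases hij : i = j
  · rw [hij]
  have hthird : ∀ {i j : Fin 3}, i ≠ j → i ≠ -(i + j) ∧ -(i + -(i + j)) = j := by decide
  obtain h | ⟨hj, hi⟩ := mem_or_mem_and_mem_of_mem_ends hij hi hj
  · exact Adj.reachable (expand_adj_inr_inr.2 ⟨hij, h⟩)
  · have hik : (expand n T K).Adj (.inr i) (.inr (-(i + j))) :=
      expand_adj_inr_inr.2 ⟨(hthird hij).1, (hthird hij).2.symm ▸ hj⟩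
    have hjk : (expand n T K).Adj (.inr j) (.inr (-(j + i))) :=
      expand_adj_inr_inr.2 ⟨(hthird (Ne.symm hij)).1, (hthird (Ne.symm hij)).2.symm ▸ hi⟩
    exact hik.reachable.trans (add_comm i j ▸ hjk.symm.reachable)

lemma reachable_expand (hK : ∀ x, K.Adj v x → ∃ i, ↑(n i) = x) (hT : spokes n K = boundary T)
    (hreach : ∀ x ∈ K.support, ∀ y ∈ K.support, K.Reachable x y)
    {p q : {x // x ≠ v} ⊕ Fin 3} (hp : p ∈ (expand n T K).support)
    (hq : q ∈ (expand n T K).support) (hTuniv : T ≠ Finset.univ) :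
    (expand n T K).Reachable p q := by
  have hproj : ∀ p ∈ (expand n T K).support, proj v p ∈ K.support := by
    rintro (x | i) hp
    · obtain ⟨y | i, h⟩ := hp
      exacts [⟨y, h⟩, ⟨v, h.2.symm⟩]
    · refine center_mem_support_of_spokes_nonempty (n := n) (Finset.nonempty_iff_ne_empty.2 ?_)
      intro hempty
      have := mem_of_inr_mem_support_expand hT hp
      obtain rfl | rfl := eq_empty_or_eq_univ_of_boundary_eq_empty (hT ▸ hempty)
      exacts [by simp at this, hTuniv rfl]
  have hmap : (expand n T K).map (proj v) = K := contract_expand hK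
  refine reachable_of_reachable_map (f := proj v) ?_ hp hq ?_
  · rintro (x | i) hp (y | j) hq hpq
    · rw [Subtype.ext hpq]
    · exact (x.2 hpq).elim
    · exact (y.2 hpq.symm).elim
    · exact reachable_expand_inr_inr (mem_of_inr_mem_support_expand hT hp)
        (mem_of_inr_mem_support_expand hT hq)
  · rw [hmap]
    exact hreach _ (hproj p hp) _ (hproj q hq)

lemma contract_bot : contract (⊥ : SimpleGraph ({x // x ≠ v} ⊕ Fin 3)) = ⊥ := by
  ext
  simp [contract, map_adj']

/-- The triangle replacing `v`. -/
def triangle (n : Fin 3 ↪ {x // x ≠ v}) : SimpleGraph ({x // x ≠ v} ⊕ Fin 3) :=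
  expand n Finset.univ ⊥

lemma isCircuitGraph_triangle (n : Fin 3 ↪ {x // x ≠ v}) : IsCircuitGraph (triangle n) where
  ne_bot h := by
    have hadj : (triangle n).Adj (.inr (0 + 1)) (.inr (0 + 2)) :=
      expand_adj_edge.2 (Finset.mem_univ _)
    rwa [h] at hadj
  isEvenAt := (forall_isEvenAt_expand_iff (by simp)).2
    ⟨fun x => Or.inl (by ext; simp), spokes_bot.trans boundary_univ.symm⟩
  reachable := by
    rintro (x | i) hp
    · obtain ⟨y | i, h⟩ := hp
      exacts [h.elim, h.2.elim]
    · rintro (y | j) hq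
      · obtain ⟨x | i, h⟩ := hq
        exacts [h.elim, h.2.elim]
      · exact reachable_expand_inr_inr (by simp) (by simp)

lemma IsCircuitGraph.of_expand (h : IsCircuitGraph (expand n T K))
    (hK : ∀ x, K.Adj v x → ∃ i, ↑(n i) = x) (hne : K ≠ ⊥) : IsCircuitGraph K where
  ne_bot := hne
  isEvenAt := ((forall_isEvenAt_expand_iff hK).1 h.isEvenAt).1
  reachable := by
    have hmap : (expand n T K).map (proj v) = K := contract_expand hK
    exact hmap ▸ reachable_map_of_mem_support (f := proj v) h.reachable

lemma ne_univ_of_isCircuitGraph_expand (h : IsCircuitGraph (expand n T K))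
    (hK : ∀ x, K.Adj v x → ∃ i, ↑(n i) = x) (hne : K ≠ ⊥) : T ≠ Finset.univ := by
  rintro rfl
  have hspokes : spokes n K = ∅ :=
    ((forall_isEvenAt_expand_iff hK).1 h.isEvenAt).2.trans boundary_univ
  have hv : v ∉ K.support := by
    rintro ⟨x, hx⟩
    obtain ⟨i, rfl⟩ := hK x hx
    exact Finset.notMem_empty i (hspokes ▸ mem_spokes.2 hx)
  obtain ⟨x, y, hxy⟩ := ne_bot_iff_exists_adj.1 hne
  have hxv : x ≠ v := fun hx => hv (hx ▸ ⟨y, hxy⟩)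
  have hyv : y ≠ v := fun hy => hv (hy ▸ ⟨x, hxy.symm⟩)
  have htriangle : (expand n Finset.univ K).Adj (.inr 0) (.inr (0 + 1)) :=
    expand_adj_inr_add_one.2 (Finset.mem_univ _)
  have hreach := h.reachable (.inr 0) ⟨.inr (0 + 1), htriangle⟩ (.inl ⟨x, hxv⟩) ⟨.inl ⟨y, hyv⟩, hxy⟩
  have hmap : (expand n Finset.univ K).map (proj v) = K := contract_expand hK
  exact hv (mem_support_of_reachable hxv.symm (hmap ▸ reachable_map (f := proj v) hreach))

lemma isCircuitGraph_expand_iff (hK : ∀ x, K.Adj v x → ∃ i, ↑(n i) = x) :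
    IsCircuitGraph (expand n T K) ↔
      (IsCircuitGraph K ∧ spokes n K = boundary T ∧ T ≠ Finset.univ) ∨
        (K = ⊥ ∧ T = Finset.univ) := by
  constructor
  · intro h
    have hspokes := ((forall_isEvenAt_expand_iff hK).1 h.isEvenAt).2
    by_cases hne : K = ⊥
    · subst hne
      refine Or.inr ⟨rfl, ?_⟩
      refine (eq_empty_or_eq_univ_of_boundary_eq_empty (hspokes ▸ spokes_bot)).resolve_left ?_
      rintro rfl
      refine h.ne_bot (eq_bot_iff_forall_not_adj.2 ?_)
      rintro (x | i) (y | j) hadj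
      exacts [hadj, hadj.2, hadj.2, Finset.notMem_empty _ hadj.2]
    · exact Or.inl ⟨h.of_expand hK hne, hspokes, ne_univ_of_isCircuitGraph_expand h hK hne⟩
  · rintro (⟨hcirc, hspokes, hT⟩ | ⟨rfl, rfl⟩)
    · refine ⟨fun hbot => hcirc.ne_bot ?_,
        (forall_isEvenAt_expand_iff hK).2 ⟨hcirc.isEvenAt, hspokes⟩, fun p hp q hq =>
          reachable_expand hK hspokes hcirc.reachable hp hq hT⟩
      rw [← contract_expand (T := T) hK, hbot, contract_bot]
    · exact isCircuitGraph_triangle n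

end ExpandedCircuits

section ExpandedCovers

variable {V : Type*} {v : V} {n : Fin 3 ↪ {x // x ≠ v}} {τ : Finset (Fin 3) → Finset (Fin 3)}
  {G K : SimpleGraph V} {K' : SimpleGraph ({x // x ≠ v} ⊕ Fin 3)}
  {D : Multiset (SimpleGraph V)} {E C' : Multiset (SimpleGraph ({x // x ≠ v} ⊕ Fin 3))} {m : ℕ}

/-- A rule `τ` which continues a circuit using the set `S` of edges at `v` through the triangle
replacing `v`, along a set `τ S` of edges of the triangle. -/
def IsRouting (τ : Finset (Fin 3) → Finset (Fin 3)) : Prop :=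
  ∀ S, boundary S = S → boundary (τ S) = S ∧ τ S ≠ Finset.univ

/-- The expansion of `K` in which the triangle is traversed according to `τ`. A circuit through `v`
takes the long way around the triangle for `τ = id` and the short way for `τ = innerEdges`. -/
noncomputable def lift (n : Fin 3 ↪ {x // x ≠ v}) (τ : Finset (Fin 3) → Finset (Fin 3))
    (K : SimpleGraph V) : SimpleGraph ({x // x ≠ v} ⊕ Fin 3) :=
  expand n (τ (spokes n K)) K

/-- The lifts of the members of `D`, together with `m` copies of the triangle. -/
noncomputable def liftCover (n : Fin 3 ↪ {x // x ≠ v}) (m : ℕ)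
    (τ : Finset (Fin 3) → Finset (Fin 3)) (D : Multiset (SimpleGraph V)) :
    Multiset (SimpleGraph ({x // x ≠ v} ⊕ Fin 3)) :=
  Multiset.replicate m (triangle n) + D.map (lift n τ)

lemma isRouting_id : IsRouting id := by
  unfold IsRouting
  decide

lemma isRouting_innerEdges : IsRouting innerEdges := by
  unfold IsRouting
  decide

lemma isCircuitGraph_lift (hτ : IsRouting τ) (hK : ∀ x, K.Adj v x → ∃ i, ↑(n i) = x)
    (h : IsCircuitGraph K) : IsCircuitGraph (lift n τ K) := by
  obtain ⟨hboundary, hne⟩ := hτ _ ((isEvenAt_center_iff hK).1 (h.isEvenAt v))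
  exact (isCircuitGraph_expand_iff hK).2 (Or.inl ⟨h, hboundary.symm, hne⟩)

lemma contract_triangle : contract (triangle n) = ⊥ :=
  contract_expand (by simp)

lemma map_contract_map_lift (hD : ∀ K ∈ D, ∀ x, K.Adj v x → ∃ i, ↑(n i) = x) :
    (D.map (lift n τ)).map contract = D := by
  rw [Multiset.map_map]
  exact (Multiset.map_congr rfl fun K hK => contract_expand (hD K hK)).trans (Multiset.map_id D)

lemma spokes_contract_eq_boundary_trace (hn : ∀ x, G.Adj v x ↔ ∃ i, ↑(n i) = x)
    (hle : K' ≤ expand n Finset.univ G) (h : IsCircuitGraph K') :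
    spokes n (contract K') = boundary (trace K') := by
  have heven := h.isEvenAt
  rw [← expand_trace_contract hle] at heven
  exact ((forall_isEvenAt_expand_iff fun x hx => (hn x).1 (contract_le hle hx)).1 heven).2

lemma isCircuitGraph_contract (hn : ∀ x, G.Adj v x ↔ ∃ i, ↑(n i) = x)
    (hle : K' ≤ expand n Finset.univ G) (h : IsCircuitGraph K') (hne : trace K' ≠ Finset.univ) :
    IsCircuitGraph (contract K') := by
  rw [← expand_trace_contract hle] at h
  obtain ⟨hcontract, -⟩ | ⟨-, htrace⟩ :=
    (isCircuitGraph_expand_iff fun x hx => (hn x).1 (contract_le hle hx)).1 h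
  exacts [hcontract, (hne htrace).elim]

lemma eq_triangle_of_trace_eq_univ (hn : ∀ x, G.Adj v x ↔ ∃ i, ↑(n i) = x)
    (hle : K' ≤ expand n Finset.univ G) (h : IsCircuitGraph K') (htrace : trace K' = Finset.univ) :
    K' = triangle n := by
  rw [← expand_trace_contract hle] at h ⊢
  obtain ⟨-, -, hne⟩ | ⟨hcontract, -⟩ :=
    (isCircuitGraph_expand_iff fun x hx => (hn x).1 (contract_le hle hx)).1 h
  exacts [(hne htrace).elim, by rw [hcontract, htrace, triangle]]

lemma lift_contract (hn : ∀ x, G.Adj v x ↔ ∃ i, ↑(n i) = x)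
    (hle : K' ≤ expand n Finset.univ G) (h : IsCircuitGraph K')
    (hτ : τ (boundary (trace K')) = trace K') : lift n τ (contract K') = K' := by
  rw [lift, spokes_contract_eq_boundary_trace hn hle h, hτ, expand_trace_contract hle]

open scoped Classical in
lemma countP_adj_center_map_contract (hle : ∀ K' ∈ C', K' ≤ expand n Finset.univ G) (i : Fin 3) :
    (C'.map contract).countP (fun K => K.Adj v (n i)) =
      C'.countP (fun K' => K'.Adj (.inr i) (.inl (n i))) := by
  rw [countP_map_eq_countP_comp]
  refine Multiset.countP_congr rfl fun K' hK' => ?_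
  rw [contract_adj_center, eq_iff_iff]
  refine ⟨fun ⟨j, hj⟩ => ?_, fun h => ⟨i, h⟩⟩
  exact n.injective (hle K' hK' hj).1 ▸ hj

lemma forall_adj_iff_of_symmetric {P : V → V → Prop} (hP : ∀ x y, P x y → P y x)
    (hn : ∀ x, G.Adj v x ↔ ∃ i, ↑(n i) = x) :
    (∀ x y, G.Adj x y → P x y) ↔
      (∀ x y : {x // x ≠ v}, G.Adj x y → P x y) ∧ ∀ i, P v (n i) := by
  refine ⟨fun h => ⟨fun x y => h x y, fun i => h _ _ ((hn _).2 ⟨i, rfl⟩)⟩, ?_⟩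
  rintro ⟨hcoe, hcenter⟩ x y hxy
  by_cases hx : x = v
  · subst hx
    obtain ⟨i, rfl⟩ := (hn y).1 hxy
    exact hcenter i
  by_cases hy : y = v
  · subst hy
    obtain ⟨i, rfl⟩ := (hn x).1 hxy.symm
    exact hP _ _ (hcenter i)
  exact hcoe ⟨x, hx⟩ ⟨y, hy⟩ hxy

lemma forall_adj_expand_iff_of_symmetric
    {P : {x // x ≠ v} ⊕ Fin 3 → {x // x ≠ v} ⊕ Fin 3 → Prop} (hP : ∀ p q, P p q → P q p)
    (hn : ∀ x, G.Adj v x ↔ ∃ i, ↑(n i) = x) :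
    (∀ p q, (expand n Finset.univ G).Adj p q → P p q) ↔
      ((∀ x y : {x // x ≠ v}, G.Adj x y → P (.inl x) (.inl y)) ∧
        ∀ i, P (.inr i) (.inl (n i))) ∧ ∀ k, P (.inr (k + 1)) (.inr (k + 2)) := by
  constructor
  · exact fun h => ⟨⟨fun x y => h (.inl x) (.inl y), fun i => h _ _ ⟨rfl, (hn _).2 ⟨i, rfl⟩⟩⟩,
      fun k => h _ _ (expand_adj_edge.2 (Finset.mem_univ k))⟩
  · rintro ⟨⟨hcoe, hspoke⟩, hedge⟩ (x | i) (y | j) hpq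
    · exact hcoe x y hpq
    · exact hpq.1 ▸ hP _ _ (hspoke j)
    · exact hpq.1 ▸ hspoke i
    · obtain rfl | rfl := eq_add_one_or_eq_add_two hpq.1
      · simpa only [fin_three_add_add] using hedge (i + 2)
      · simpa only [fin_three_add_add] using hP _ _ (hedge (i + 1))

open scoped Classical in
lemma countP_adj_expand_iff (hn : ∀ x, G.Adj v x ↔ ∃ i, ↑(n i) = x)
    (hle : ∀ K' ∈ C', K' ≤ expand n Finset.univ G) :
    (∀ p q, (expand n Finset.univ G).Adj p q → C'.countP (fun K' => K'.Adj p q) = 2) ↔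
      (∀ x y, G.Adj x y → (C'.map contract).countP (fun K => K.Adj x y) = 2) ∧
        ∀ k, (C'.map trace).countP (k ∈ ·) = 2 := by
  rw [forall_adj_expand_iff_of_symmetric (by simp only [adj_comm, imp_self, implies_true]) hn,
    forall_adj_iff_of_symmetric (by simp only [adj_comm, imp_self, implies_true]) hn]
  simp only [countP_adj_center_map_contract hle]
  simp only [countP_map_eq_countP_comp, contract_adj_coe, mem_trace]

open scoped Classical in
lemma IsDoubleCover.countP_mem_boundary_trace (h : IsDoubleCover (expand n Finset.univ G) C')
    (hn : ∀ x, G.Adj v x ↔ ∃ i, ↑(n i) = x) (i : Fin 3) :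
    (C'.map trace).countP (i ∈ boundary ·) = 2 := by
  have hcover := ((countP_adj_expand_iff hn h.le).1 h.countP_adj).1 v (n i) ((hn _).2 ⟨i, rfl⟩)
  rw [countP_map_eq_countP_comp] at hcover ⊢
  rw [← hcover]
  refine Multiset.countP_congr rfl fun K' hK' => ?_
  rw [← mem_spokes, spokes_contract_eq_boundary_trace hn (h.le K' hK') (h.isCircuitGraph K' hK')]

lemma contract_liftCover (hD : ∀ K ∈ D, ∀ x, K.Adj v x → ∃ i, ↑(n i) = x) :
    (liftCover n m τ D).map contract = Multiset.replicate m ⊥ + D := by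
  rw [liftCover, Multiset.map_add, Multiset.map_replicate, contract_triangle,
    map_contract_map_lift hD]

lemma trace_liftCover : (liftCover n m τ D).map trace =
    Multiset.replicate m Finset.univ + D.map fun K => τ (spokes n K) := by
  rw [liftCover, Multiset.map_add, Multiset.map_replicate, triangle, trace_expand,
    Multiset.map_map]
  exact congrArg _ (Multiset.map_congr rfl fun _ _ => trace_expand)

open scoped Classical in
lemma countP_adj_replicate_bot_add (x y : V) :
    (Multiset.replicate m ⊥ + D).countP (fun K : SimpleGraph V => K.Adj x y) =
      D.countP (fun K => K.Adj x y) := by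
  rw [Multiset.countP_add, Nat.add_eq_right, Multiset.countP_eq_zero]
  intro K hK
  rw [Multiset.eq_of_mem_replicate hK]
  exact not_false

open scoped Classical in
lemma isDoubleCover_liftCover (hn : ∀ x, G.Adj v x ↔ ∃ i, ↑(n i) = x) (hτ : IsRouting τ)
    (hD : IsDoubleCover G D) (hcount : ∀ k, m + D.countP (fun K => k ∈ τ (spokes n K)) = 2) :
    IsDoubleCover (expand n Finset.univ G) (liftCover n m τ D) := by
  have hcenter : ∀ K ∈ D, ∀ x, K.Adj v x → ∃ i, ↑(n i) = x :=
    fun K hK x hx => (hn x).1 (hD.le K hK hx)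
  have hmem {K' : SimpleGraph ({x // x ≠ v} ⊕ Fin 3)} (hK' : K' ∈ liftCover n m τ D) :
      K' = triangle n ∨ ∃ K ∈ D, lift n τ K = K' :=
    (Multiset.mem_add.1 hK').imp Multiset.eq_of_mem_replicate Multiset.mem_map.1
  have hle : ∀ K' ∈ liftCover n m τ D, K' ≤ expand n Finset.univ G := fun K' hK' => by
    obtain rfl | ⟨K, hK, rfl⟩ := hmem hK'
    exacts [expand_mono bot_le, expand_mono (hD.le K hK)]
  refine ⟨hle, fun K' hK' => ?_, (countP_adj_expand_iff hn hle).2 ⟨fun x y hxy => ?_, fun k => ?_⟩⟩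
  · obtain rfl | ⟨K, hK, rfl⟩ := hmem hK'
    exacts [isCircuitGraph_triangle n,
      isCircuitGraph_lift hτ (hcenter K hK) (hD.isCircuitGraph K hK)]
  · rw [contract_liftCover hcenter, countP_adj_replicate_bot_add, hD.countP_adj x y hxy]
  · rw [trace_liftCover, Multiset.countP_add, countP_map_eq_countP_comp]
    have htriangle : (Multiset.replicate m Finset.univ).countP (k ∈ ·) = m := by
      simp [Multiset.countP_eq_card.2, Multiset.mem_replicate]
    rw [htriangle, hcount k]

lemma isDoubleCover_map_contract (hn : ∀ x, G.Adj v x ↔ ∃ i, ↑(n i) = x)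
    (h : IsDoubleCover (expand n Finset.univ G) (Multiset.replicate m (triangle n) + E))
    (hE : ∀ K' ∈ E, trace K' ≠ Finset.univ) : IsDoubleCover G (E.map contract) := by
  have hmem {K'} (hK' : K' ∈ E) : K' ∈ Multiset.replicate m (triangle n) + E :=
    Multiset.mem_add.2 (Or.inr hK')
  refine ⟨?_, ?_, fun x y hxy => ?_⟩
  · simp only [Multiset.mem_map, forall_exists_index, and_imp, forall_apply_eq_imp_iff₂]
    exact fun K' hK' => contract_le (h.le K' (hmem hK'))
  · simp only [Multiset.mem_map, forall_exists_index, and_imp, forall_apply_eq_imp_iff₂]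
    exact fun K' hK' => isCircuitGraph_contract hn (h.le K' (hmem hK'))
      (h.isCircuitGraph K' (hmem hK')) (hE K' hK')
  · have hcount := ((countP_adj_expand_iff hn h.le).1 h.countP_adj).1 x y hxy
    rwa [Multiset.map_add, Multiset.map_replicate, contract_triangle,
      countP_adj_replicate_bot_add] at hcount

lemma liftCover_map_contract (hn : ∀ x, G.Adj v x ↔ ∃ i, ↑(n i) = x)
    (h : IsDoubleCover (expand n Finset.univ G) (Multiset.replicate m (triangle n) + E))
    (hE : ∀ K' ∈ E, τ (boundary (trace K')) = trace K') :
    liftCover n m τ (E.map contract) = Multiset.replicate m (triangle n) + E := by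
  rw [liftCover, Multiset.map_map]
  refine congrArg _ ((Multiset.map_congr rfl fun K' hK' => ?_).trans (Multiset.map_id E))
  have hmem : K' ∈ Multiset.replicate m (triangle n) + E := Multiset.mem_add.2 (Or.inr hK')
  exact lift_contract hn (h.le K' hmem) (h.isCircuitGraph K' hmem) (hE K' hK')

lemma trace_eq_empty_or_mem {P : Multiset (Finset (Fin 3))}
    (hP : (E.map trace).filter Finset.Nonempty = P) (hK' : K' ∈ E) : trace K' = ∅ ∨ trace K' ∈ P :=
  (trace K').eq_empty_or_nonempty.imp_right fun hne =>
    hP ▸ Multiset.mem_filter.2 ⟨Multiset.mem_map_of_mem _ hK', hne⟩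

lemma IsDoubleCover.exists_liftCover_id_eq (hC' : IsDoubleCover (expand n Finset.univ G) C')
    (hn : ∀ x, G.Adj v x ↔ ∃ i, ↑(n i) = x)
    (hlong : (C'.map trace).filter Finset.Nonempty = longPattern) :
    ∃ D, IsDoubleCover G D ∧ liftCover n 0 id D = C' := by
  have hpattern : ∀ T, T = ∅ ∨ T ∈ longPattern → T ≠ Finset.univ ∧ boundary T = T := by decide
  have htrace := fun K' (hK' : K' ∈ C') => hpattern _ (trace_eq_empty_or_mem hlong hK')
  have hC'₀ : Multiset.replicate 0 (triangle n) + C' = C' := by simp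
  have hcover :
      IsDoubleCover (expand n Finset.univ G) (Multiset.replicate 0 (triangle n) + C') := by
    rwa [hC'₀]
  exact ⟨C'.map contract,
    isDoubleCover_map_contract hn hcover fun K' hK' => (htrace K' hK').1,
    (liftCover_map_contract hn hcover fun K' hK' => (htrace K' hK').2).trans hC'₀⟩

lemma IsDoubleCover.exists_liftCover_innerEdges_eq
    (hC' : IsDoubleCover (expand n Finset.univ G) C') (hn : ∀ x, G.Adj v x ↔ ∃ i, ↑(n i) = x)
    (hshort : (C'.map trace).filter Finset.Nonempty = shortPattern) :
    ∃ D, IsDoubleCover G D ∧ liftCover n 1 innerEdges D = C' := by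
  have hmem : Finset.univ ∈ (C'.map trace).filter Finset.Nonempty :=
    hshort ▸ Multiset.mem_cons_self _ _
  obtain ⟨K', hK', htraceK'⟩ := Multiset.mem_map.1 (Multiset.mem_filter.1 hmem).1
  obtain rfl : K' = triangle n :=
    eq_triangle_of_trace_eq_univ hn (hC'.le K' hK') (hC'.isCircuitGraph K' hK') htraceK'
  obtain ⟨E, rfl⟩ := Multiset.exists_cons_of_mem hK'
  rw [Multiset.map_cons, htraceK', Multiset.filter_cons_of_pos _ Finset.univ_nonempty,
    shortPattern, Multiset.cons_inj_right] at hshort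
  have hpattern : ∀ T, T = ∅ ∨ T ∈ Finset.univ.val.map (fun k : Fin 3 => ({k} : Finset (Fin 3))) →
      T ≠ Finset.univ ∧ innerEdges (boundary T) = T := by decide
  have htrace := fun K' (hK' : K' ∈ E) => hpattern _ (trace_eq_empty_or_mem hshort hK')
  have hE₁ : Multiset.replicate 1 (triangle n) + E = triangle n ::ₘ E := by simp
  exact ⟨E.map contract,
    isDoubleCover_map_contract hn (hE₁ ▸ hC') fun K' hK' => (htrace K' hK').1,
    (liftCover_map_contract hn (hE₁ ▸ hC') fun K' hK' => (htrace K' hK').2).trans hE₁⟩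

open scoped Classical in
lemma IsDoubleCover.countP_mem_spokes (hD : IsDoubleCover G D)
    (hn : ∀ x, G.Adj v x ↔ ∃ i, ↑(n i) = x) (i : Fin 3) :
    D.countP (fun K => i ∈ spokes n K) = 2 := by
  simpa only [mem_spokes] using hD.countP_adj v (n i) ((hn _).2 ⟨i, rfl⟩)

open scoped Classical in
lemma IsDoubleCover.countP_mem_innerEdges_spokes (hD : IsDoubleCover G D)
    (hn : ∀ x, G.Adj v x ↔ ∃ i, ↑(n i) = x) (k : Fin 3) :
    D.countP (fun K => k ∈ innerEdges (spokes n K)) = 1 := by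
  have hxor : ∀ K ∈ D, k ∈ spokes n K ↔ Xor (k + 1 ∈ spokes n K) (k + 2 ∈ spokes n K) := by
    intro K hK
    rw [← mem_boundary, (isEvenAt_center_iff fun x hx => (hn x).1 (hD.le K hK hx)).1
      ((hD.isCircuitGraph K hK).isEvenAt v)]
  have hcount := countP_add_two_mul_countP_and hxor
  simp only [hD.countP_mem_spokes hn] at hcount
  simp only [innerEdges, Finset.mem_filter_univ]
  omega

lemma setOf_isDoubleCover_expand (hn : ∀ x, G.Adj v x ↔ ∃ i, ↑(n i) = x) :
    {C' | IsDoubleCover (expand n Finset.univ G) C'} =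
      liftCover n 0 id '' {D | IsDoubleCover G D} ∪
        liftCover n 1 innerEdges '' {D | IsDoubleCover G D} := by
  refine Set.Subset.antisymm (fun C' hC' => ?_) (Set.union_subset ?_ ?_)
  · obtain hshort | hlong := filter_nonempty_eq_shortPattern_or_longPattern
      ((countP_adj_expand_iff hn hC'.le).1 hC'.countP_adj).2 (hC'.countP_mem_boundary_trace hn)
    · exact Or.inr (hC'.exists_liftCover_innerEdges_eq hn hshort)
    · exact Or.inl (hC'.exists_liftCover_id_eq hn hlong)
  · rintro _ ⟨D, hD, rfl⟩
    exact isDoubleCover_liftCover hn isRouting_id hD fun k => by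
      simpa using hD.countP_mem_spokes hn k
  · rintro _ ⟨D, hD, rfl⟩
    exact isDoubleCover_liftCover hn isRouting_innerEdges hD fun k => by
      rw [hD.countP_mem_innerEdges_spokes hn k]

lemma injOn_liftCover (hn : ∀ x, G.Adj v x ↔ ∃ i, ↑(n i) = x) :
    Set.InjOn (liftCover n m τ) {D | IsDoubleCover G D} := by
  intro D₁ hD₁ D₂ hD₂ h
  have hcontract := congrArg (Multiset.map contract) h
  rwa [contract_liftCover fun K hK x hx => (hn x).1 (hD₁.le K hK hx),
    contract_liftCover fun K hK x hx => (hn x).1 (hD₂.le K hK hx), add_right_inj] at hcontract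

lemma disjoint_image_liftCover (hn : ∀ x, G.Adj v x ↔ ∃ i, ↑(n i) = x)
    {τ' : Finset (Fin 3) → Finset (Fin 3)} :
    Disjoint (liftCover n 0 τ '' {D | IsDoubleCover G D})
      (liftCover n 1 τ' '' {D | IsDoubleCover G D}) := by
  rw [Set.disjoint_left]
  rintro _ ⟨D, hD, rfl⟩ ⟨D', hD', h⟩
  have hcontract := congrArg (Multiset.map contract) h
  rw [contract_liftCover fun K hK x hx => (hn x).1 (hD.le K hK hx),
    contract_liftCover fun K hK x hx => (hn x).1 (hD'.le K hK hx)] at hcontract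
  have hbot : ⊥ ∈ Multiset.replicate 1 ⊥ + D' := by simp
  rw [hcontract, Multiset.replicate_zero, zero_add] at hbot
  exact (hD.isCircuitGraph ⊥ hbot).ne_bot rfl

theorem encard_isDoubleCover_expand (hn : ∀ x, G.Adj v x ↔ ∃ i, ↑(n i) = x) :
    {C' | IsDoubleCover (expand n Finset.univ G) C'}.encard =
      2 * {D | IsDoubleCover G D}.encard := by
  rw [setOf_isDoubleCover_expand hn, Set.encard_union_eq (disjoint_image_liftCover hn),
    (injOn_liftCover hn).encard_image, (injOn_liftCover hn).encard_image, two_mul]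

end ExpandedCovers

section CompleteGraph

/-- The mod 2 sum of the faces of the tetrahedron on `Fin 4` opposite to the vertices `k.succ` with
`k ∈ T`. Every even subgraph of `K₄` has this form for a unique `T`, which is the set of its edges
on the triangle `1, 2, 3`. -/
def faceSum (T : Finset (Fin 3)) : SimpleGraph (Fin 4) where
  Adj x y := x ≠ y ∧ (T.map (Fin.succEmb 3) \ {x, y}).card = 1
  symm := ⟨fun x y h => ⟨h.1.symm, Finset.pair_comm x y ▸ h.2⟩⟩
  loopless := ⟨fun _ h => h.1 rfl⟩

instance (T : Finset (Fin 3)) : DecidableRel (faceSum T).Adj :=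
  fun x y => inferInstanceAs (Decidable (x ≠ y ∧ (T.map (Fin.succEmb 3) \ {x, y}).card = 1))

open scoped Classical in
/-- The edges of `K` on the triangle `1, 2, 3`. -/
noncomputable def rim (K : SimpleGraph (Fin 4)) : Finset (Fin 3) :=
  {k | K.Adj (k + 1).succ (k + 2).succ}

variable {K : SimpleGraph (Fin 4)} {C : Multiset (SimpleGraph (Fin 4))} {k : Fin 3}

lemma mem_rim : k ∈ rim K ↔ K.Adj (k + 1).succ (k + 2).succ := by
  simp [rim]

lemma faceSum_adj_succ_succ :
    ∀ {T k}, (faceSum T).Adj (k + 1).succ (k + 2).succ ↔ k ∈ T := by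
  decide

lemma faceSum_adj_zero_succ : ∀ {T i}, (faceSum T).Adj 0 i.succ ↔ i ∈ boundary T := by
  decide

lemma rim_faceSum (T : Finset (Fin 3)) : rim (faceSum T) = T :=
  Finset.ext fun _ => mem_rim.trans faceSum_adj_succ_succ

lemma faceSum_empty : faceSum ∅ = ⊥ := by
  ext
  simp [faceSum]

lemma isCircuitGraph_faceSum {T : Finset (Fin 3)} (hT : T.Nonempty) :
    IsCircuitGraph (faceSum T) := by
  refine isCircuitGraph_of_card_le_five (by simp) (fun hbot => ?_) fun x => ?_
  · obtain ⟨k, hk⟩ := hT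
    have hadj := faceSum_adj_succ_succ.2 hk
    rwa [hbot] at hadj
  · have hdegree : ∀ T x, (faceSum T).degree x = 0 ∨ (faceSum T).degree x = 2 := by decide
    rw [IsEvenAt, ← coe_neighborFinset, Finset.coe_eq_empty, Set.ncard_coe_finset,
      ← Finset.card_eq_zero]
    exact hdegree T x

lemma adj_zero_succ_iff (h : ∀ x, IsEvenAt K x) (i : Fin 3) :
    K.Adj 0 i.succ ↔ i ∈ boundary (rim K) := by
  classical
  let nbr : Fin 3 → Fin 4 := ![0, (i + 1).succ, (i + 2).succ]
  have hnbr : nbr.Injective := by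
    revert i
    decide
  have hrange : K.neighborSet i.succ ⊆ Set.range nbr := by
    have hcases : ∀ (i : Fin 3) (x : Fin 4), i.succ ≠ x →
        ∃ j, ![0, (i + 1).succ, (i + 2).succ] j = x := by decide
    exact fun x hx => hcases i x hx.ne
  have heven := (eq_empty_or_ncard_eq_two_iff hnbr hrange
    (S := {j | K.Adj i.succ (nbr j)}) (by simp)).1 (h i.succ)
  simpa [nbr, boundary_eq_self_iff_mem, mem_boundary, mem_rim, fin_three_add_add,
    K.adj_comm i.succ 0, K.adj_comm i.succ (i + 2).succ,
    xor_comm (K.Adj i.succ (i + 1).succ)] using heven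

lemma faceSum_rim (h : ∀ x, IsEvenAt K x) : faceSum (rim K) = K := by
  have hsucc (k : Fin 3) : (faceSum (rim K)).Adj (k + 1).succ (k + 2).succ ↔
      K.Adj (k + 1).succ (k + 2).succ := faceSum_adj_succ_succ.trans mem_rim
  have hzero (i : Fin 3) : (faceSum (rim K)).Adj 0 i.succ ↔ K.Adj 0 i.succ :=
    faceSum_adj_zero_succ.trans (adj_zero_succ_iff h i).symm
  ext x y
  induction x using Fin.cases with
  | zero =>
    induction y using Fin.cases with
    | zero => simp only [SimpleGraph.irrefl]
    | succ j => exact hzero j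
  | succ i =>
    induction y using Fin.cases with
    | zero => rw [adj_comm, K.adj_comm, hzero]
    | succ j =>
      by_cases hij : i = j
      · simp only [hij, SimpleGraph.irrefl]
      obtain rfl | rfl := eq_add_one_or_eq_add_two hij
      · simpa only [fin_three_add_add] using hsucc (i + 2)
      · rw [adj_comm, K.adj_comm]
        simpa only [fin_three_add_add] using hsucc (i + 1)

lemma isDoubleCover_map_faceSum {P : Multiset (Finset (Fin 3))} (hP : ∀ T ∈ P, T.Nonempty)
    (hcount : ∀ x y, x ≠ y → P.countP (fun T => (faceSum T).Adj x y) = 2) :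
    IsDoubleCover (completeGraph (Fin 4)) (P.map faceSum) := by
  refine ⟨fun K _ => le_top, ?_, fun x y hxy => ?_⟩
  · simp only [Multiset.mem_map, forall_exists_index, and_imp, forall_apply_eq_imp_iff₂]
    exact fun T hT => isCircuitGraph_faceSum (hP T hT)
  · rw [countP_map_eq_countP_comp, ← hcount x y hxy]
    congr

lemma IsDoubleCover.map_rim_eq (hC : IsDoubleCover (completeGraph (Fin 4)) C) :
    C.map rim = shortPattern ∨ C.map rim = longPattern := by
  classical
  have hne : ∀ T ∈ C.map rim, T.Nonempty := by
    simp only [Multiset.mem_map, forall_exists_index, and_imp, forall_apply_eq_imp_iff₂]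
    intro K hK
    rw [Finset.nonempty_iff_ne_empty]
    intro hempty
    refine (hC.isCircuitGraph K hK).ne_bot ?_
    rw [← faceSum_rim (hC.isCircuitGraph K hK).isEvenAt, hempty, faceSum_empty]
  rw [← Multiset.filter_eq_self.2 hne]
  refine filter_nonempty_eq_shortPattern_or_longPattern (fun k => ?_) fun i => ?_ <;>
    rw [countP_map_eq_countP_comp]
  · rw [← hC.countP_adj (k + 1).succ (k + 2).succ (by revert k; decide)]
    exact Multiset.countP_congr rfl fun K _ => by rw [mem_rim]
  · rw [← hC.countP_adj 0 i.succ (by revert i; decide)]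
    exact Multiset.countP_congr rfl fun K hK => by
      rw [adj_zero_succ_iff (hC.isCircuitGraph K hK).isEvenAt]

lemma setOf_isDoubleCover_completeGraph :
    {C | IsDoubleCover (completeGraph (Fin 4)) C} =
      Multiset.map faceSum '' {shortPattern, longPattern} := by
  refine Set.Subset.antisymm (fun C hC => ⟨C.map rim, hC.map_rim_eq, ?_⟩) ?_
  · rw [Multiset.map_map]
    exact (Multiset.map_congr rfl fun K hK =>
      faceSum_rim (hC.isCircuitGraph K hK).isEvenAt).trans (Multiset.map_id C)
  · rintro _ ⟨P, rfl | rfl, rfl⟩ <;> exact isDoubleCover_map_faceSum (by decide) (by decide)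

theorem encard_isDoubleCover_completeGraph :
    {C | IsDoubleCover (completeGraph (Fin 4)) C}.encard = 2 := by
  have hinj : Function.Injective faceSum := Function.LeftInverse.injective rim_faceSum
  rw [setOf_isDoubleCover_completeGraph, (Multiset.map_injective hinj).encard_image,
    Set.encard_pair (by decide)]

end CompleteGraph

lemma exists_embedding_fin_three {α : Type*} {a b c : α} (hab : a ≠ b) (hac : a ≠ c)
    (hbc : b ≠ c) : ∃ n : Fin 3 ↪ α, n 0 = a ∧ n 1 = b ∧ n 2 = c :=
  ⟨⟨![a, b, c], by
    simp [Function.Injective, Fin.forall_fin_succ, hab, hac, hbc, hab.symm, hac.symm, hbc.symm]⟩,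
    rfl, rfl, rfl⟩

lemma exists_eq_expand {V : Type*} {G : SimpleGraph V} {v a b c : V} (hab : a ≠ b) (hac : a ≠ c)
    (hbc : b ≠ c) (hnbr : G.neighborSet v = {a, b, c})
    {G' : SimpleGraph ({x : V // x ≠ v} ⊕ Fin 3)}
    (hG' : ∀ p q, G'.Adj p q ↔ TriangleExpansionAdj G v a b c p q) :
    ∃ n : Fin 3 ↪ {x // x ≠ v},
      (∀ x, G.Adj v x ↔ ∃ i, ↑(n i) = x) ∧ G' = expand n Finset.univ G := by
  have hadj (x : V) : G.Adj v x ↔ x = a ∨ x = b ∨ x = c := Set.ext_iff.1 hnbr x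
  obtain ⟨n, hn₀, hn₁, hn₂⟩ := exists_embedding_fin_three
    (a := (⟨a, ((hadj a).2 (by simp)).ne'⟩ : {x // x ≠ v}))
    (b := ⟨b, ((hadj b).2 (by simp)).ne'⟩) (c := ⟨c, ((hadj c).2 (by simp)).ne'⟩)
    (by simpa using hab) (by simpa using hac) (by simpa using hbc)
  have hn (x : V) : G.Adj v x ↔ ∃ i, ↑(n i) = x := by
    simp [hadj, hn₀, hn₁, hn₂, Fin.exists_fin_succ, @eq_comm _ x]
  have hspoke (x : {x // x ≠ v}) (i : Fin 3) :
      (i = 0 ∧ x.1 = a) ∨ (i = 1 ∧ x.1 = b) ∨ (i = 2 ∧ x.1 = c) ↔ x = n i ∧ G.Adj v x := by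
    rw [and_iff_left_of_imp fun h => (hn x).2 ⟨i, congrArg _ h.symm⟩]
    fin_cases i <;> simp [hn₀, hn₁, hn₂, Subtype.ext_iff]
  refine ⟨n, hn, ?_⟩
  ext (x | i) (y | j) <;> rw [hG']
  · rfl
  · exact hspoke x j
  · exact hspoke y i
  · exact (and_iff_left (Finset.mem_univ _)).symm

lemma card_subtype_ne_sum_fin_three {V : Type*} [Finite V] (v : V) :
    Nat.card ({x // x ≠ v} ⊕ Fin 3) = Nat.card V + 2 := by
  classical
  have := Fintype.ofFinite V
  have := Fintype.card_pos_iff.2 ⟨v⟩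
  simp only [Nat.card_eq_fintype_card, Fintype.card_sum, Fintype.card_fin,
    Fintype.card_subtype_compl, ne_eq, Fintype.card_unique]
  omega

theorem IsKlee.exists_card_eq_and_encard_isDoubleCover_eq {V : Type} {G : SimpleGraph V}
    (h : IsKlee G) : ∃ m, Nat.card V = 2 * (m + 1) ∧ {C | IsDoubleCover G C}.encard = 2 ^ m := by
  induction h with
  | base => exact ⟨1, by simp, by rw [encard_isDoubleCover_completeGraph, pow_one]⟩
  | expand v a b c hab hac hbc hnbr G' hG' _ ih =>
    obtain ⟨m, hcard, hcovers⟩ := ih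
    obtain ⟨n, hn, rfl⟩ := exists_eq_expand hab hac hbc hnbr hG'
    have := Nat.finite_of_card_ne_zero (hcard.trans_ne (by positivity))
    refine ⟨m + 1, ?_, ?_⟩
    · rw [card_subtype_ne_sum_fin_three, hcard]
      ring
    · rw [encard_isDoubleCover_expand hn, hcovers, pow_succ']

/-- Every Klee graph on `n` vertices has exactly `2^(n/2 - 1)` circuit double covers. -/
theorem stmt10 {V : Type} [Fintype V] (G : SimpleGraph V) (hK : IsKlee G) :
    nu G = 2 ^ (Fintype.card V / 2 - 1) := by
  obtain ⟨m, hcard, hcovers⟩ := hK.exists_card_eq_and_encard_isDoubleCover_eq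
  have hexponent : Fintype.card V / 2 - 1 = m := by
    rw [← Nat.card_eq_fintype_card]
    omega
  rw [nu_eq_ncard_isDoubleCover, Set.ncard, hcovers, hexponent]
  simp

end CiDC
end

section
/- Let G be a cyclically 4-edge-connected cubic simple graph containing a 4-cycle v1v2v3v4 (with edges v1v2, v2v3, v3v4, v4v1), and for each i let ui be the third neighbor of vi outside the cycle; assume u1, u2, u3, u4 are pairwise distinct, none of them lies on the cycle, and none of u1u2, u2u3, u3u4, u1u4 is an edge of G. Let G1 be the graph obtained from G by deleting v1, v2, v3, v4 and adding the edges u1u4 and u2u3, and let G2 be obtained by deleting v1, v2, v3, v4 and adding the edges u1u2 and u3u4. Then ν(G) ≥ 4 · min{ν(G1), ν(G2)}. -/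
namespace CiDC

open SimpleGraph

/-- The set of edges of `G` between `S` and its complement. -/
def edgeCutOf {V : Type*} (G : SimpleGraph V) (S : Set V) : Set (Sym2 V) :=
  {e | ∃ u v : V, e = s(u, v) ∧ G.Adj u v ∧ u ∈ S ∧ v ∉ S}

/-- An edge cut: a nonempty set of edges of the form `E(S, V \ S)`. -/
def IsEdgeCut {V : Type*} (G : SimpleGraph V) (F : Set (Sym2 V)) : Prop :=
  F.Nonempty ∧ ∃ S : Set V, F = edgeCutOf G S

/-- A set of edges is circuit-separating if after its removal at least two of the
resulting components contain a circuit. -/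
def CircuitSeparating {V : Type*} (G : SimpleGraph V) (F : Set (Sym2 V)) : Prop :=
  ∃ H₁ H₂ : (G.deleteEdges F).Subgraph,
    IsCircuit H₁ ∧ IsCircuit H₂ ∧
      ∃ x ∈ H₁.verts, ∃ y ∈ H₂.verts, ¬ (G.deleteEdges F).Reachable x y

/-- Cyclically 4-edge-connected: every circuit-separating edge cut has size at least 4. -/
def CyclicallyFourEdgeConnected {V : Type*} (G : SimpleGraph V) : Prop :=
  ∀ F : Set (Sym2 V), IsEdgeCut G F → CircuitSeparating G F → 4 ≤ F.ncard

/-- 2-edge-connected: connected and bridgeless. -/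
def TwoEdgeConnected {V : Type*} (G : SimpleGraph V) : Prop :=
  G.Connected ∧ ∀ e : Sym2 V, ¬ G.IsBridge e

/-- 3-edge-connected: connected, and still connected after deleting any ≤ 2 edges. -/
def ThreeEdgeConnected {V : Type*} (G : SimpleGraph V) : Prop :=
  G.Connected ∧ ∀ F : Set (Sym2 V), F.ncard ≤ 2 → (G.deleteEdges F).Connected

/-!
Cutting the circuits of a double cover of `G` along the 4-cycle leaves a multiset of strands: closed
circuits that avoid the 4-cycle, and four pairwise distinct paths that together use each of the four
spokes `vᵢuᵢ` twice. Up to subdividing the two new edges, `G₁` is `G` without `v₁v₂` and `v₃v₄`, and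
`G₂` is `G` without `v₂v₃` and `v₄v₁`, so their double covers can be cut in the same way.

Given the strands, a double cover is determined by a finite code: which disjoint paths with
complementary ends lie on a common circuit, and which edges of the 4-cycle close up each circuit.
A code yields a double cover of `G` as soon as it uses all edges of the 4-cycle equally often, and
at most twice, because copies of the 4-cycle itself can be added. For each of the finitely many
patterns of path ends and disjoint pairs, counting codes shows that twice the number of covers of
`G₁` plus twice the number of covers of `G₂` with the given strands is at most the number of covers
of `G` with these strands. Summing over the strands gives `2ν(G₁) + 2ν(G₂) ≤ ν(G)`.
-/

open Finset

section EdgeSets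

variable {V : Type*} {K P Q S X Y : Finset (Sym2 V)} {e : Sym2 V} {x : V}

/-- The edge set `X` is closed in `S` if it contains every edge of `S` that shares a vertex with an
edge of `X`; for `X ⊆ S` this says that `X` is a union of connected components of `S`. -/
def IsClosedIn (X S : Finset (Sym2 V)) : Prop :=
  ∀ e ∈ X, ∀ f ∈ S, ∀ x ∈ e, x ∈ f → f ∈ X

theorem IsClosedIn.sdiff [DecidableEq (Sym2 V)] (h : IsClosedIn X S) : IsClosedIn (S \ X) S := by
  intro e he f hf x hxe hxf
  rw [mem_sdiff] at he ⊢
  exact ⟨hf, fun hfX => he.2 (h f hfX e he.1 x hxf hxe)⟩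

/-- An edge set is connected if it is nonempty and has no proper nonempty closed subset; isolated
vertices are ignored. -/
def IsConnectedSet (K : Finset (Sym2 V)) : Prop :=
  K.Nonempty ∧ ∀ X ⊆ K, X.Nonempty → IsClosedIn X K → X = K

theorem IsConnectedSet.subset_of_isClosedIn (hK : IsConnectedSet K) (hKS : K ⊆ S)
    (hX : IsClosedIn X S) (heK : e ∈ K) (heX : e ∈ X) : K ⊆ X := by
  classical
  have hcl : IsClosedIn (X ∩ K) K := fun c hc f hf x hxc hxf =>
    mem_inter.2 ⟨hX c (mem_inter.1 hc).1 f (hKS hf) x hxc hxf, hf⟩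
  exact inter_eq_right.1 (hK.2 _ inter_subset_right ⟨e, mem_inter.2 ⟨heX, heK⟩⟩ hcl)

/-- No edge of `P` shares a vertex with an edge of `Q`. -/
def VertexDisjoint (P Q : Finset (Sym2 V)) : Prop :=
  ∀ e ∈ P, ∀ f ∈ Q, ∀ x ∈ e, x ∉ f

theorem VertexDisjoint.symm (h : VertexDisjoint P Q) : VertexDisjoint Q P :=
  fun f hf e he x hxf hxe => h e he f hf x hxe hxf

theorem VertexDisjoint.disjoint (h : VertexDisjoint P Q) : Disjoint P Q :=
  disjoint_left.2 fun e heP heQ => h e heP e heQ _ e.out_fst_mem e.out_fst_mem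

open scoped Classical in
/-- The connected components of an edge set, as edge sets. -/
noncomputable def components (S : Finset (Sym2 V)) : Finset (Finset (Sym2 V)) :=
  {X ∈ S.powerset | IsClosedIn X S ∧ IsConnectedSet X}

theorem mem_components : X ∈ components S ↔ X ⊆ S ∧ IsClosedIn X S ∧ IsConnectedSet X := by
  simp [components]

theorem eq_of_mem_components (hX : X ∈ components S) (hY : Y ∈ components S) (heX : e ∈ X)
    (heY : e ∈ Y) : X = Y := by
  rw [mem_components] at hX hY
  exact (hX.2.2.subset_of_isClosedIn hX.1 hY.2.1 heX heY).antisymm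
    (hY.2.2.subset_of_isClosedIn hY.1 hX.2.1 heY heX)

theorem vertexDisjoint_of_mem_components (hX : X ∈ components S) (hY : Y ∈ components S)
    (hne : X ≠ Y) : VertexDisjoint X Y := fun e he f hf x hxe hxf =>
  hne (eq_of_mem_components hX hY
    ((mem_components.1 hX).2.1 e he f ((mem_components.1 hY).1 hf) x hxe hxf) hf)

-- The component of `e` is a closed subset of `S` containing `e` of least cardinality.
theorem exists_mem_components (he : e ∈ S) : ∃ X ∈ components S, e ∈ X := by
  classical
  let closed := S.powerset.filter fun X => IsClosedIn X S ∧ e ∈ X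
  have hS : S ∈ closed := by
    simp only [closed, mem_filter, mem_powerset]
    exact ⟨Subset.rfl, fun _ _ f hf _ _ _ => hf, he⟩
  obtain ⟨X, hX, hmin⟩ := exists_min_image closed card ⟨S, hS⟩
  simp only [closed, mem_filter, mem_powerset] at hX hmin
  obtain ⟨hXS, hcl, heX⟩ := hX
  refine ⟨X, mem_components.2 ⟨hXS, hcl, ⟨e, heX⟩, fun Y hYX hne hYcl => ?_⟩, heX⟩
  have closed_trans {Z} (hZX : Z ⊆ X) (hZ : IsClosedIn Z X) : IsClosedIn Z S :=
    fun c hc f hf x hxc hxf => hZ c hc f (hcl c (hZX hc) f hf x hxc hxf) x hxc hxf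
  by_cases heY : e ∈ Y
  · exact eq_of_subset_of_card_le hYX (hmin Y ⟨hYX.trans hXS, closed_trans hYX hYcl, heY⟩)
  · have hle := hmin (X \ Y) ⟨sdiff_subset.trans hXS, closed_trans sdiff_subset hYcl.sdiff,
      mem_sdiff.2 ⟨heX, heY⟩⟩
    have := card_lt_card (sdiff_ssubset hYX hne)
    omega

theorem components_empty : components (∅ : Finset (Sym2 V)) = ∅ :=
  eq_empty_of_forall_notMem fun _ hX =>
    (mem_components.1 hX).2.2.1.ne_empty (subset_empty.1 (mem_components.1 hX).1)

theorem IsConnectedSet.components_eq (hK : IsConnectedSet K) : components K = {K} := by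
  ext X
  rw [mem_components, mem_singleton]
  constructor
  · rintro ⟨hXK, hcl, hX⟩
    exact hK.2 X hXK hX.1 hcl
  · rintro rfl
    exact ⟨Subset.rfl, fun _ _ f hf _ _ _ => hf, hK⟩

variable [DecidableEq V]

/-- The number of edges of the edge set `K` at the vertex `x`. -/
def edgeDegree (K : Finset (Sym2 V)) (x : V) : ℕ := #{e ∈ K | x ∈ e}

theorem edgeDegree_eq_zero : edgeDegree K x = 0 ↔ ∀ e ∈ K, x ∉ e := by
  simp [edgeDegree, filter_eq_empty_iff]

theorem edgeDegree_ne_zero : edgeDegree K x ≠ 0 ↔ ∃ e ∈ K, x ∈ e := by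
  simp [edgeDegree_eq_zero]

theorem edgeDegree_mono (h : P ⊆ Q) (x : V) : edgeDegree P x ≤ edgeDegree Q x :=
  card_le_card (filter_subset_filter _ h)

theorem edgeDegree_union (h : Disjoint P Q) (x : V) :
    edgeDegree (P ∪ Q) x = edgeDegree P x + edgeDegree Q x := by
  rw [edgeDegree, filter_union, card_union_of_disjoint (disjoint_filter_filter h)]
  rfl

theorem edgeDegree_insert (h : e ∉ K) (x : V) :
    edgeDegree (insert e K) x = (if x ∈ e then 1 else 0) + edgeDegree K x := by
  rw [insert_eq, edgeDegree_union (disjoint_singleton_left.2 h), edgeDegree, filter_singleton]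
  split_ifs <;> rfl

theorem edgeDegree_image_map {W : Type*} [DecidableEq W] {f : V → W} (hf : f.Injective)
    (K : Finset (Sym2 V)) (x : V) : edgeDegree (K.image (Sym2.map f)) (f x) = edgeDegree K x := by
  rw [edgeDegree, filter_image, card_image_of_injective _ (Sym2.map.injective hf), edgeDegree]
  congr 1
  ext e
  simp [Sym2.mem_map, hf.eq_iff]

theorem isClosedIn_iff_edgeDegree (h : X ⊆ S) :
    IsClosedIn X S ↔ ∀ x, edgeDegree X x = 0 ∨ edgeDegree X x = edgeDegree S x := by
  have edges_eq (x : V) : edgeDegree X x = edgeDegree S x ↔ ∀ f ∈ S, x ∈ f → f ∈ X := by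
    have hsub : X.filter (x ∈ ·) ⊆ S.filter (x ∈ ·) := filter_subset_filter _ h
    have hcard : edgeDegree X x = edgeDegree S x ↔ X.filter (x ∈ ·) = S.filter (x ∈ ·) :=
      ⟨fun hc => eq_of_subset_of_card_le hsub hc.ge, fun hc => congrArg card hc⟩
    rw [hcard, Subset.antisymm_iff, and_iff_right hsub]
    simp only [subset_iff, mem_filter]
    grind
  simp only [edges_eq, edgeDegree_eq_zero, IsClosedIn]
  refine ⟨fun hcl x => ?_, fun hX e he f hf x hxe hxf => ?_⟩
  · by_contra! hne
    obtain ⟨⟨e, he, hxe⟩, f, hf, hxf, hfX⟩ := hne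
    exact hfX (hcl e he f hf x hxe hxf)
  · exact (hX x).resolve_left (fun h0 => h0 e he hxe) f hf hxf

/-- The vertices covered by an edge set. -/
def support (K : Finset (Sym2 V)) : Finset V := K.biUnion Sym2.toFinset

theorem mem_support : x ∈ support K ↔ ∃ e ∈ K, x ∈ e := by
  simp [support]

theorem sum_edgeDegree_support (hK : ∀ e ∈ K, ¬ e.IsDiag) :
    ∑ x ∈ support K, edgeDegree K x = 2 * #K := by
  have hcard (e : Sym2 V) (he : e ∈ K) : #{x ∈ support K | x ∈ e} = 2 := by
    rw [← Sym2.card_toFinset_of_not_isDiag e (hK e he)]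
    congr 1
    ext x
    simpa using fun hx => mem_support.2 ⟨e, he, hx⟩
  calc ∑ x ∈ support K, edgeDegree K x = ∑ e ∈ K, #{x ∈ support K | x ∈ e} :=
        sum_card_bipartiteAbove_eq_sum_card_bipartiteBelow (fun x e => x ∈ e)
    _ = 2 * #K := by rw [sum_congr rfl hcard, sum_const, smul_eq_mul, mul_comm]

theorem card_support_singleton_le (e : Sym2 V) : #(support {e}) ≤ 2 := by
  induction e with | _ a b => simpa [support, Sym2.toFinset_mk_eq] using card_le_two

theorem card_support_insert_le (hx : x ∈ support K) (hxe : x ∈ e) :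
    #(support (insert e K)) ≤ #(support K) + 1 := by
  obtain ⟨y, rfl⟩ := hxe
  have hsub : support (insert s(x, y) K) ⊆ insert y (support K) := by
    intro z
    simp only [support, biUnion_insert, mem_union, mem_insert, Sym2.mem_toFinset, Sym2.mem_iff]
    rintro ((rfl | rfl) | hz)
    exacts [Or.inr hx, Or.inl rfl, Or.inr hz]
  exact (card_le_card hsub).trans (card_insert_le _ _)

-- An inclusion-maximal `X ⊆ K` satisfying the bound is closed in `K`.
theorem IsConnectedSet.card_support_le (hK : IsConnectedSet K) : #(support K) ≤ #K + 1 := by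
  obtain ⟨e, he⟩ := hK.1
  let small := K.powerset.filter fun X => X.Nonempty ∧ #(support X) ≤ #X + 1
  have hsmall : {e} ∈ small := by simp [small, he, card_support_singleton_le]
  obtain ⟨X, hX, hmax⟩ := exists_max_image small card ⟨_, hsmall⟩
  simp only [small, mem_filter, mem_powerset] at hX hmax
  obtain ⟨hXK, hne, hcard⟩ := hX
  suffices hcl : IsClosedIn X K from hK.2 X hXK hne hcl ▸ hcard
  intro c hc f hf x hxc hxf
  by_contra hfX
  have hins := hmax (insert f X) ⟨insert_subset hf hXK, insert_nonempty _ _, by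
    grw [card_support_insert_le (mem_support.2 ⟨c, hc, hxc⟩) hxf, hcard, card_insert_of_notMem hfX]⟩
  rw [card_insert_of_notMem hfX] at hins
  omega

theorem IsConnectedSet.card_edgeDegree_one (hK : IsConnectedSet K) (hloop : ∀ e ∈ K, ¬ e.IsDiag)
    (hdeg : ∀ x, edgeDegree K x ≤ 2) :
    #{x ∈ support K | edgeDegree K x = 1} = 0 ∨ #{x ∈ support K | edgeDegree K x = 1} = 2 := by
  have hsum : #{x ∈ support K | edgeDegree K x = 1} + ∑ x ∈ support K, edgeDegree K x
      = 2 * #(support K) := by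
    rw [card_filter, ← sum_add_distrib, sum_const_nat (m := 2) _, mul_comm]
    intro x hx
    have hpos := edgeDegree_ne_zero.2 (mem_support.1 hx)
    have hle := hdeg x
    split_ifs <;> omega
  rw [sum_edgeDegree_support hloop] at hsum
  have := hK.card_support_le
  omega

theorem VertexDisjoint.isClosedIn_union (h : VertexDisjoint P Q) : IsClosedIn P (P ∪ Q) := by
  intro e he f hf x hxe hxf
  exact (mem_union.1 hf).resolve_right fun hfQ => h e he f hfQ x hxe hxf

theorem biUnion_components (S : Finset (Sym2 V)) : (components S).biUnion id = S := by
  ext e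
  simp only [mem_biUnion, id]
  exact ⟨fun ⟨_, hX, heX⟩ => (mem_components.1 hX).1 heX, exists_mem_components⟩

theorem eq_of_isClosedIn_union (hP : IsConnectedSet P) (hQ : IsConnectedSet Q)
    (hX : X ⊆ P ∪ Q) (hcl : IsClosedIn X (P ∪ Q)) : X = ∅ ∨ X = P ∨ X = Q ∨ X = P ∪ Q := by
  have cases_of_connected {R : Finset (Sym2 V)} (hR : IsConnectedSet R) (hRS : R ⊆ P ∪ Q) :
      R ⊆ X ∨ Disjoint R X := by
    refine or_iff_not_imp_right.2 fun hne => ?_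
    obtain ⟨e, heR, heX⟩ := not_disjoint_iff.1 hne
    exact hR.subset_of_isClosedIn hRS hcl heR heX
  rcases cases_of_connected hP subset_union_left with hPX | hPX <;>
    rcases cases_of_connected hQ subset_union_right with hQX | hQX
  · exact .inr (.inr (.inr (hX.antisymm (union_subset hPX hQX))))
  · exact .inr (.inl ((hQX.symm.left_le_of_le_sup_right hX).antisymm hPX))
  · exact .inr (.inr (.inl ((hPX.symm.left_le_of_le_sup_left hX).antisymm hQX)))
  · exact .inl (disjoint_self.1 ((disjoint_union_left.2 ⟨hPX, hQX⟩).mono_left hX))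

theorem isClosedIn_union_of_eq_or (h : P = Q ∨ VertexDisjoint P Q) : IsClosedIn P (P ∪ Q) := by
  rcases h with rfl | h
  · exact fun _ _ f hf _ _ _ => union_self P ▸ hf
  · exact h.isClosedIn_union

theorem components_union (hP : IsConnectedSet P) (hQ : IsConnectedSet Q)
    (h : VertexDisjoint P Q) : components (P ∪ Q) = {P, Q} := by
  have hPmem : P ∈ components (P ∪ Q) :=
    mem_components.2 ⟨subset_union_left, h.isClosedIn_union, hP⟩
  have hQmem : Q ∈ components (P ∪ Q) :=
    mem_components.2 ⟨subset_union_right, union_comm P Q ▸ h.symm.isClosedIn_union, hQ⟩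
  refine Subset.antisymm (fun X hX => ?_) (insert_subset hPmem (singleton_subset_iff.2 hQmem))
  obtain ⟨hXS, -, e, he⟩ := mem_components.1 hX |>.imp_right (And.imp_right And.left)
  rw [mem_insert, mem_singleton]
  exact (mem_union.1 (hXS he)).imp (eq_of_mem_components hX hPmem he)
    (eq_of_mem_components hX hQmem he)

/-- The number of members of `C` that contain the edge `e`. -/
def coverage (C : Multiset (Finset (Sym2 V))) (e : Sym2 V) : ℕ := C.countP (e ∈ ·)

theorem coverage_add (C D : Multiset (Finset (Sym2 V))) (e : Sym2 V) :
    coverage (C + D) e = coverage C e + coverage D e :=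
  Multiset.countP_add _ C D

theorem coverage_cons (K : Finset (Sym2 V)) (C : Multiset (Finset (Sym2 V))) (e : Sym2 V) :
    coverage (K ::ₘ C) e = coverage C e + if e ∈ K then 1 else 0 :=
  Multiset.countP_cons _ K C

theorem coverage_components (S : Finset (Sym2 V)) (e : Sym2 V) :
    coverage (components S).val e = if e ∈ S then 1 else 0 := by
  rw [coverage, Multiset.countP_eq_card_filter, ← filter_val, card_val]
  split_ifs with he
  · obtain ⟨X, hX, heX⟩ := exists_mem_components he
    refine card_eq_one.2 ⟨X, ext fun Y => ?_⟩
    rw [mem_filter, mem_singleton]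
    exact ⟨fun hY => eq_of_mem_components hY.1 hX hY.2 heX, fun hY => hY ▸ ⟨hX, heX⟩⟩
  · exact card_eq_zero.2 (filter_eq_empty_iff.2 fun _ hY heY => he ((mem_components.1 hY).1 heY))

/-- A circuit as an edge set: connected, and 2-regular on the vertices it covers. -/
def IsCircuitSet (K : Finset (Sym2 V)) : Prop :=
  IsConnectedSet K ∧ ∀ x, edgeDegree K x = 0 ∨ edgeDegree K x = 2

end EdgeSets

section DoubleCovers

variable {V W : Type*} [DecidableEq W]

theorem isConnectedSet_image_map {f : V → W} (hf : f.Injective) {K : Finset (Sym2 V)}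
    (hK : IsConnectedSet K) : IsConnectedSet (K.image (Sym2.map f)) := by
  refine ⟨hK.1.image _, fun Y hY hne hcl => ?_⟩
  obtain ⟨X, hX, rfl⟩ := subset_image_iff.1 hY
  rw [hK.2 X hX (image_nonempty.1 hne) fun c hc d hd x hxc hxd => ?_]
  have hmem := hcl _ (mem_image_of_mem _ hc) _ (mem_image_of_mem (Sym2.map f) hd) (f x)
    (Sym2.mem_map.2 ⟨x, hxc, rfl⟩) (Sym2.mem_map.2 ⟨x, hxd, rfl⟩)
  exact (Sym2.map.injective hf).mem_finset_image.1 hmem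

variable [DecidableEq V]

/-- A circuit double cover of an edge set, by circuits that are themselves edge sets. -/
def IsDoubleCover_s11 (E : Finset (Sym2 V)) (C : Multiset (Finset (Sym2 V))) : Prop :=
  (∀ K ∈ C, IsCircuitSet K ∧ K ⊆ E) ∧ ∀ e ∈ E, coverage C e = 2

theorem count_le_coverage {K : Finset (Sym2 V)} {e : Sym2 V} (he : e ∈ K)
    (C : Multiset (Finset (Sym2 V))) : C.count K ≤ coverage C e := by
  rw [Multiset.count, coverage, Multiset.countP_eq_card_filter, Multiset.countP_eq_card_filter]
  exact Multiset.card_le_card (Multiset.monotone_filter_right C fun _ h => h ▸ he)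

theorem finite_setOf_isDoubleCover (E : Finset (Sym2 V)) : {C | IsDoubleCover_s11 E C}.Finite := by
  refine (Set.finite_Iic (2 • E.powerset.val)).subset fun C hC => ?_
  refine Multiset.le_iff_count.2 fun K => ?_
  by_cases hK : K ∈ C
  · obtain ⟨hcirc, hKE⟩ := hC.1 K hK
    obtain ⟨e, he⟩ := hcirc.1.1
    rw [Multiset.count_nsmul, Multiset.count_eq_one_of_mem E.powerset.nodup (mem_powerset.2 hKE),
      mul_one, ← hC.2 e (hKE he)]
    exact count_le_coverage he C
  · simp [hK]

/-- The number of circuit double covers of an edge set. -/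
noncomputable def coverCount (E : Finset (Sym2 V)) : ℕ := {C | IsDoubleCover_s11 E C}.ncard

theorem map_map_eq_self {α β : Type*} {C : Multiset α} {φ : α → β} {ψ : β → α}
    (h : ∀ K ∈ C, ψ (φ K) = K) : (C.map φ).map ψ = C := by
  exact (Multiset.map_map ψ φ C).trans ((Multiset.map_congr rfl h).trans (Multiset.map_id' C))

theorem countP_map_congr {α β : Type*} {C : Multiset α} {φ : α → β} {p : α → Prop} {q : β → Prop}
    [DecidablePred p] [DecidablePred q] (h : ∀ K ∈ C, q (φ K) ↔ p K) :
    (C.map φ).countP q = C.countP p := by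
  rw [Multiset.countP_map, Multiset.countP_eq_card_filter, Multiset.filter_congr h]

theorem coverCount_le_of_leftInverse {E : Finset (Sym2 V)} {F : Finset (Sym2 W)}
    (φ : Finset (Sym2 V) → Finset (Sym2 W)) (ψ : Finset (Sym2 W) → Finset (Sym2 V))
    (hφ : ∀ K ⊆ E, IsCircuitSet K → IsCircuitSet (φ K) ∧ φ K ⊆ F)
    (hψ : ∀ K ⊆ E, ψ (φ K) = K)
    (hcov : ∀ f ∈ F, ∃ e ∈ E, ∀ K ⊆ E, IsCircuitSet K → (f ∈ φ K ↔ e ∈ K)) :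
    coverCount E ≤ coverCount F := by
  refine Set.ncard_le_ncard_of_injOn (Multiset.map φ) (fun C hC => ⟨?_, fun f hf => ?_⟩)
    (fun C hC C' hC' h => ?_) (finite_setOf_isDoubleCover F)
  · simp only [Multiset.mem_map, forall_exists_index, and_imp, forall_apply_eq_imp_iff₂]
    exact fun K hK => hφ K (hC.1 K hK).2 (hC.1 K hK).1
  · obtain ⟨e, he, hef⟩ := hcov f hf
    rw [← hC.2 e he]
    exact countP_map_congr fun K hK => hef K (hC.1 K hK).2 (hC.1 K hK).1
  · rw [← map_map_eq_self fun K hK => hψ K (hC.1 K hK).2, h,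
      map_map_eq_self fun K hK => hψ K (hC'.1 K hK).2]

theorem IsCircuitSet.image_map {f : V → W} (hf : f.Injective) {K : Finset (Sym2 V)}
    (hK : IsCircuitSet K) : IsCircuitSet (K.image (Sym2.map f)) := by
  refine ⟨isConnectedSet_image_map hf hK.1, fun y => ?_⟩
  by_cases hy : y ∈ Set.range f
  · obtain ⟨x, rfl⟩ := hy
    simpa only [edgeDegree_image_map hf] using hK.2 x
  · left
    simp only [edgeDegree_eq_zero, mem_image, forall_exists_index, and_imp,
      forall_apply_eq_imp_iff₂, Sym2.mem_map]
    exact fun e _ ⟨x, _, hx⟩ => hy ⟨x, hx⟩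

theorem coverCount_le_image_map {f : V → W} (hf : f.Injective) (E : Finset (Sym2 V)) :
    coverCount E ≤ coverCount (E.image (Sym2.map f)) := by
  have hinj := Sym2.map.injective hf
  refine coverCount_le_of_leftInverse (fun K => K.image (Sym2.map f))
    (fun L => L.preimage (Sym2.map f) hinj.injOn) (fun K hKE hK => ⟨hK.image_map hf,
      image_subset_image hKE⟩) (fun K _ => by ext e; simp [hinj.eq_iff]) ?_
  simp only [mem_image, forall_exists_index, and_imp, forall_apply_eq_imp_iff₂]
  exact fun e he => ⟨e, he, fun K _ _ => by simp [hinj.eq_iff]⟩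

end DoubleCovers

section Graphs

variable {V : Type*} {G : SimpleGraph V}

/-- The subgraph of `G` spanned by the edges of `G` in `K`. -/
def subgraphOf (G : SimpleGraph V) (K : Finset (Sym2 V)) : G.Subgraph where
  verts := {x | ∃ y, s(x, y) ∈ K ∧ G.Adj x y}
  Adj x y := s(x, y) ∈ K ∧ G.Adj x y
  adj_sub h := h.2
  edge_vert h := ⟨_, h⟩
  symm := ⟨fun _ _ h => ⟨Sym2.eq_swap ▸ h.1, h.2.symm⟩⟩

theorem subgraphOf_adj {K : Finset (Sym2 V)} {x y : V} :
    (subgraphOf G K).Adj x y ↔ s(x, y) ∈ K ∧ G.Adj x y := Iff.rfl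

theorem mem_edgeSet_subgraphOf {K : Finset (Sym2 V)} (hK : ∀ e ∈ K, e ∈ G.edgeSet) (e : Sym2 V) :
    e ∈ (subgraphOf G K).edgeSet ↔ e ∈ K := by
  induction e with | _ x y => exact and_iff_left_of_imp (hK s(x, y))

theorem connected_subgraphOf {K : Finset (Sym2 V)} (hG : ∀ e ∈ K, e ∈ G.edgeSet)
    (hK : IsConnectedSet K) : (subgraphOf G K).Connected := by
  classical
  have vert {c : Sym2 V} (hc : c ∈ K) {x : V} (hx : x ∈ c) : x ∈ (subgraphOf G K).verts :=
    (subgraphOf G K).mem_verts_of_mem_edge ((mem_edgeSet_subgraphOf hG c).2 hc) hx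
  obtain ⟨e, he⟩ := hK.1
  refine Subgraph.connected_iff.2 ⟨⟨?_⟩, ⟨_, vert he e.out_fst_mem⟩⟩
  rintro ⟨x, a, hxa, hadj⟩ ⟨y, b, hyb, -⟩
  let x' : (subgraphOf G K).verts := ⟨x, a, hxa, hadj⟩
  let X := K.filter fun c => ∀ z (hz : z ∈ c) (hc : c ∈ K),
    (subgraphOf G K).coe.Reachable x' ⟨z, vert hc hz⟩
  have reach_of_mem {c : Sym2 V} (hc : c ∈ K) {z w : V} (hz : z ∈ c) (hw : w ∈ c)
      (h : (subgraphOf G K).coe.Reachable x' ⟨z, vert hc hz⟩) :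
      (subgraphOf G K).coe.Reachable x' ⟨w, vert hc hw⟩ := by
    by_cases hzw : z = w
    · subst hzw; exact h
    · obtain rfl := (Sym2.mem_and_mem_iff hzw).1 ⟨hz, hw⟩
      exact h.trans (Adj.reachable ⟨hc, hG _ hc⟩)
  have hX : X = K := by
    refine hK.2 X (filter_subset _ _) ⟨s(x, a), ?_⟩ fun c hc f hf z hzc hzf => ?_
    · exact mem_filter.2 ⟨hxa, fun z hz hc =>
        reach_of_mem hc (Sym2.mem_mk_left x a) hz (Reachable.refl _)⟩
    · exact mem_filter.2 ⟨hf, fun w hw _ =>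
        reach_of_mem hf hzf hw ((mem_filter.1 hc).2 z hzc (mem_filter.1 hc).1)⟩
  have hyX : s(y, b) ∈ X := hX.symm ▸ hyb
  exact (mem_filter.1 hyX).2 y (Sym2.mem_mk_left y b) hyb

variable [Finite V]

/-- The edges of a subgraph as a finite set. -/
noncomputable def edgesOf (H : G.Subgraph) : Finset (Sym2 V) := H.edgeSet.toFinite.toFinset

theorem mem_edgesOf {H : G.Subgraph} {e : Sym2 V} : e ∈ edgesOf H ↔ e ∈ H.edgeSet :=
  Set.Finite.mem_toFinset _

theorem mk_mem_edgesOf {H : G.Subgraph} {x y : V} : s(x, y) ∈ edgesOf H ↔ H.Adj x y := by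
  rw [mem_edgesOf, Subgraph.mem_edgeSet]

theorem edgeDegree_edgesOf [DecidableEq V] (H : G.Subgraph) (x : V) :
    edgeDegree (edgesOf H) x = (H.neighborSet x).ncard := by
  have hstar : ((edgesOf H).filter (x ∈ ·) : Set (Sym2 V)) = (s(x, ·)) '' H.neighborSet x := by
    ext e
    rw [mem_coe, mem_filter]
    constructor
    · rintro ⟨he, y, rfl⟩
      exact ⟨y, mk_mem_edgesOf.1 he, rfl⟩
    · rintro ⟨y, hxy, rfl⟩
      exact ⟨mk_mem_edgesOf.2 hxy, Sym2.mem_mk_left x y⟩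
  rw [edgeDegree, ← Set.ncard_coe_finset, hstar,
    Set.ncard_image_of_injective _ fun _ _ => Sym2.congr_right.1]

theorem isConnectedSet_edgesOf {H : G.Subgraph} (hH : H.Connected) (hne : H.edgeSet.Nonempty) :
    IsConnectedSet (edgesOf H) := by
  refine ⟨by simpa [edgesOf] using hne, fun X hXH ⟨e, heX⟩ hcl => hXH.antisymm fun f hf => ?_⟩
  have step {y z : V} (hyz : H.Adj y z) (hy : ∃ c ∈ X, y ∈ c) : ∃ c ∈ X, z ∈ c := by
    obtain ⟨c, hc, hyc⟩ := hy
    exact ⟨s(y, z), hcl c hc _ (mk_mem_edgesOf.2 hyz) y hyc (Sym2.mem_mk_left y z),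
      Sym2.mem_mk_right y z⟩
  have hx : (e.out.1) ∈ H.verts := H.mem_verts_of_mem_edge (mem_edgesOf.1 (hXH heX)) e.out_fst_mem
  have hy : (f.out.1) ∈ H.verts := H.mem_verts_of_mem_edge (mem_edgesOf.1 hf) f.out_fst_mem
  have covered (z : H.verts) : ∃ c ∈ X, z.1 ∈ c := by
    induction (reachable_iff_reflTransGen _ z).1 (hH.preconnected ⟨_, hx⟩ z) with
    | refl => exact ⟨e, heX, e.out_fst_mem⟩
    | tail _ hadj ih => exact step hadj ih
  obtain ⟨c, hc, hfc⟩ := covered ⟨_, hy⟩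
  exact hcl c hc f hf _ hfc f.out_fst_mem

theorem edgesOf_subgraphOf {K : Finset (Sym2 V)} (hK : ∀ e ∈ K, e ∈ G.edgeSet) :
    edgesOf (subgraphOf G K) = K :=
  ext fun e => mem_edgesOf.trans (mem_edgeSet_subgraphOf hK e)

theorem subgraphOf_edgesOf {H : G.Subgraph} (hH : IsCircuit H) : subgraphOf G (edgesOf H) = H := by
  have hadj (x y : V) : (subgraphOf G (edgesOf H)).Adj x y ↔ H.Adj x y := by
    rw [subgraphOf_adj, mk_mem_edgesOf]
    exact and_iff_left_of_imp H.adj_sub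
  refine Subgraph.ext (Set.ext fun x => ⟨fun ⟨y, hy⟩ => ?_, fun hx => ?_⟩)
    (funext₂ fun x y => propext (hadj x y))
  · exact H.edge_vert ((hadj x y).1 hy)
  · obtain ⟨y, hy⟩ := Set.nonempty_of_ncard_ne_zero (s := H.neighborSet x) (by simp [hH.2 x hx])
    exact ⟨y, (hadj x y).2 hy⟩

theorem IsCircuit.isCircuitSet [DecidableEq V] {H : G.Subgraph} (hH : IsCircuit H) :
    IsCircuitSet (edgesOf H) := by
  obtain ⟨x, hx⟩ := hH.1.nonempty
  obtain ⟨y, hy⟩ := Set.nonempty_of_ncard_ne_zero (s := H.neighborSet x) (by simp [hH.2 x hx])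
  refine ⟨isConnectedSet_edgesOf hH.1 ⟨s(x, y), hy⟩, fun z => ?_⟩
  rw [edgeDegree_edgesOf]
  by_cases hz : z ∈ H.verts
  · exact Or.inr (hH.2 z hz)
  · have hempty : H.neighborSet z = ∅ :=
      Set.eq_empty_of_forall_notMem fun w hw => hz (H.edge_vert hw)
    exact Or.inl (by rw [hempty, Set.ncard_empty])

theorem IsCircuitSet.isCircuit [DecidableEq V] {K : Finset (Sym2 V)} (hK : IsCircuitSet K)
    (hG : ∀ e ∈ K, e ∈ G.edgeSet) : IsCircuit (subgraphOf G K) := by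
  refine ⟨connected_subgraphOf hG hK.1, fun x ⟨y, hy⟩ => ?_⟩
  rw [← edgeDegree_edgesOf, edgesOf_subgraphOf hG]
  exact (hK.2 x).resolve_left (edgeDegree_ne_zero.2 ⟨s(x, y), hy.1, Sym2.mem_mk_left x y⟩)

theorem nu_eq_coverCount [DecidableEq V] {E : Finset (Sym2 V)} (hE : ∀ e, e ∈ E ↔ e ∈ G.edgeSet) :
    nu G = coverCount E := by
  classical
  have mem_graph {K : Finset (Sym2 V)} (hKE : K ⊆ E) : ∀ e ∈ K, e ∈ G.edgeSet :=
    fun e he => (hE e).1 (hKE he)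
  refine Set.ncard_congr (fun C _ => C.map edgesOf) (fun C hC => ⟨?_, fun e he => ?_⟩)
    (fun C C' hC hC' h => ?_) (fun D hD => ⟨D.map (subgraphOf G), ⟨?_, fun e he => ?_⟩, ?_⟩)
  · simp only [Multiset.mem_map, forall_exists_index, and_imp, forall_apply_eq_imp_iff₂]
    exact fun H hH => ⟨(hC.1 H hH).isCircuitSet,
      fun e he => (hE e).2 (H.edgeSet_subset (mem_edgesOf.1 he))⟩
  · rw [← hC.2 e ((hE e).1 he)]
    exact countP_map_congr fun H _ => mem_edgesOf
  · rw [← map_map_eq_self fun H hH => subgraphOf_edgesOf (hC.1 H hH), h,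
      map_map_eq_self fun H hH => subgraphOf_edgesOf (hC'.1 H hH)]
  · simp only [Multiset.mem_map, forall_exists_index, and_imp, forall_apply_eq_imp_iff₂]
    exact fun K hK => (hD.1 K hK).1.isCircuit (mem_graph (hD.1 K hK).2)
  · rw [← hD.2 e ((hE e).2 he)]
    exact countP_map_congr fun K hK => mem_edgeSet_subgraphOf (mem_graph (hD.1 K hK).2) e
  · exact map_map_eq_self fun K hK => edgesOf_subgraphOf (mem_graph (hD.1 K hK).2)

end Graphs

section Subdivision

variable {V : Type*} [DecidableEq V] {a b x : V} {K E : Finset (Sym2 V)}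

theorem isConnectedSet_subdivide (hab : s(a, b) ∉ K) (hK : IsConnectedSet (insert s(a, b) K)) :
    IsConnectedSet (insert s(a, x) (insert s(x, b) K)) := by
  refine ⟨insert_nonempty _ _, fun X hX hne hcl => ?_⟩
  have hiff : s(a, x) ∈ X ↔ s(x, b) ∈ X :=
    ⟨fun h => hcl _ h _ (by simp) x (by simp) (by simp),
      fun h => hcl _ h _ (by simp) x (by simp) (by simp)⟩
  let Y := (insert s(a, b) K).filter fun f => if f = s(a, b) then s(a, x) ∈ X else f ∈ X
  have lift {f : Sym2 V} (hf : f ∈ insert s(a, b) K) {y : V} (hy : y ∈ f) :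
      ∃ f' ∈ insert s(a, x) (insert s(x, b) K), y ∈ f' ∧ (f' ∈ X ↔ f ∈ Y) := by
    obtain rfl | hfK := mem_insert.1 hf
    · obtain rfl | rfl := Sym2.mem_iff.1 hy
      · exact ⟨s(y, x), by simp, by simp, by simp [Y]⟩
      · exact ⟨s(x, y), by simp, by simp, by simp [Y, hiff]⟩
    · have hne : f ≠ s(a, b) := fun h => hab (h ▸ hfK)
      exact ⟨f, by simp [hfK], hy, by simp [Y, hfK, hne]⟩
  have hYne : Y.Nonempty := by
    obtain ⟨f, hf⟩ := hne
    by_cases hax : s(a, x) ∈ X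
    · exact ⟨s(a, b), by simp [Y, hax]⟩
    · have hfK : f ∈ K := by grind
      exact ⟨f, by simp only [Y, mem_filter, mem_insert]; grind⟩
  have hY : Y = insert s(a, b) K := by
    refine hK.2 Y (filter_subset _ _) hYne fun c hc f hf y hyc hyf => ?_
    obtain ⟨c', -, hyc', hcX⟩ := lift (mem_filter.1 hc).1 hyc
    obtain ⟨f', hf', hyf', hfX⟩ := lift hf hyf
    exact hfX.1 (hcl c' (hcX.2 hc) f' hf' y hyc' hyf')
  have hmem (f : Sym2 V) (hf : f ∈ insert s(a, b) K) :
      if f = s(a, b) then s(a, x) ∈ X else f ∈ X := (mem_filter.1 (hY.symm ▸ hf : f ∈ Y)).2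
  have hax : s(a, x) ∈ X := by simpa using hmem s(a, b) (mem_insert_self _ _)
  refine hX.antisymm (insert_subset hax (insert_subset (hiff.1 hax) fun f hf => ?_))
  simpa [show f ≠ s(a, b) from fun h => hab (h ▸ hf)] using hmem f (mem_insert_of_mem hf)

theorem IsCircuitSet.subdivide (hab : a ≠ b) (hxa : x ≠ a) (habK : s(a, b) ∉ K)
    (hx : ∀ e ∈ K, x ∉ e) (hK : IsCircuitSet (insert s(a, b) K)) :
    IsCircuitSet (insert s(a, x) (insert s(x, b) K)) := by
  refine ⟨isConnectedSet_subdivide habK hK.1, fun y => ?_⟩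
  have hxbK : s(x, b) ∉ K := fun h => hx _ h (Sym2.mem_mk_left x b)
  have haxK : s(a, x) ∉ insert s(x, b) K := by
    rw [mem_insert, not_or]
    exact ⟨by simp [hab, hxa.symm], fun h => hx _ h (Sym2.mem_mk_right a x)⟩
  have hy := hK.2 y
  rw [edgeDegree_insert habK] at hy
  rw [edgeDegree_insert haxK, edgeDegree_insert hxbK]
  simp only [Sym2.mem_iff] at hy ⊢
  by_cases hyx : y = x
  · simp [hyx, edgeDegree_eq_zero.2 hx]
  · grind

theorem coverCount_subdivide_le (hab : a ≠ b) (hxa : x ≠ a) (hxb : x ≠ b) (habE : s(a, b) ∉ E)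
    (hx : ∀ e ∈ E, x ∉ e) :
    coverCount (insert s(a, b) E) ≤ coverCount (insert s(a, x) (insert s(x, b) E)) := by
  have hax : s(a, x) ∉ insert s(a, b) E := by
    rw [mem_insert, not_or]
    exact ⟨by simp [hxb, hxa], fun h => hx _ h (Sym2.mem_mk_right a x)⟩
  have hxb' : s(x, b) ∉ insert s(a, b) E := by
    rw [mem_insert, not_or]
    exact ⟨by simp [hxb, hxa], fun h => hx _ h (Sym2.mem_mk_left x b)⟩
  refine coverCount_le_of_leftInverse
    (fun K => if s(a, b) ∈ K then insert s(a, x) (insert s(x, b) (K.erase s(a, b))) else K)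
    (fun L => if s(a, x) ∈ L then insert s(a, b) ((L.erase s(a, x)).erase s(x, b)) else L)
    (fun K hKE hK => ?_) (fun K hKE => ?_) (fun f hf => ?_)
  · split_ifs with h
    · have hKE' : K.erase s(a, b) ⊆ E := subset_insert_iff.1 hKE
      exact ⟨.subdivide hab hxa (notMem_erase _ _) (fun e he => hx e (hKE' he))
        (by rwa [insert_erase h]), by grind⟩
    · exact ⟨hK, by grind⟩
  · grind
  · obtain rfl | rfl | hfE : f = s(a, x) ∨ f = s(x, b) ∨ f ∈ E := by simpa using hf
    · exact ⟨s(a, b), by simp, fun K _ _ => by grind⟩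
    · exact ⟨s(a, b), by simp, fun K _ _ => by grind⟩
    · exact ⟨f, by simp [hfE], fun K _ _ => by grind⟩

end Subdivision

section Wheel

/-- The degree of the `k`-th vertex of the 4-cycle `0, 1, 2, 3` in the edge set consisting of the
spokes at the vertices of `I` and, for `j ∈ J`, the cycle edges from `j` to `j + 1`. -/
def wheelDegree (I J : Finset (Fin 4)) (k : Fin 4) : ℕ :=
  (if k ∈ I then 1 else 0) + ((if k ∈ J then 1 else 0) + if k - 1 ∈ J then 1 else 0)

/-- The cycle edges `J` close up two paths outside the cycle, attached to it by the spokes `I` and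
`I'`, to a single circuit. The paths may be equal; then so are `I` and `I'`. -/
def IsCircuitPattern (I I' J : Finset (Fin 4)) : Prop :=
  (∀ k, wheelDegree (I ∪ I') J k = 0 ∨ wheelDegree (I ∪ I') J k = 2) ∧
  ∀ Z ∈ ({∅, I, I', I ∪ I'} : Finset (Finset (Fin 4))), ∀ J' ∈ J.powerset,
    (∀ k, wheelDegree Z J' k = 0 ∨ wheelDegree Z J' k = wheelDegree (I ∪ I') J k) →
      Z = ∅ ∧ J' = ∅ ∨ Z = I ∪ I' ∧ J' = J

instance (I I' J : Finset (Fin 4)) : Decidable (IsCircuitPattern I I' J) :=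
  inferInstanceAs (Decidable (_ ∧ _))

/-- For `#I = 2`, the edges of one of the two arcs of the cycle between the vertices of `I`; for
`I = univ`, the perfect matching `{0, 2}` of the cycle. -/
def arc (I : Finset (Fin 4)) : Finset (Fin 4) := {k | Odd #{i ∈ I | i ≤ k}}

set_option maxRecDepth 100000 in
theorem isCircuitPattern_self : ∀ I, #I = 2 → ∀ J,
    (IsCircuitPattern I I J ↔ J = arc I ∨ J = (arc I)ᶜ) := by
  decide +kernel

set_option maxRecDepth 100000 in
theorem isCircuitPattern_compl : ∀ I, #I = 2 → ∀ J, (IsCircuitPattern I Iᶜ J ↔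
    (J = arc univ ∨ J = (arc univ)ᶜ) ∧ ∀ k ∈ J, (k ∈ I ↔ k + 1 ∉ I)) := by
  decide +kernel

theorem eq_univ_of_wheelDegree_empty : ∀ J, J.Nonempty →
    (∀ k, wheelDegree ∅ J k = 0 ∨ wheelDegree ∅ J k = 2) → J = univ := by
  decide

end Wheel

/-- A 4-cycle `v 0, v 1, v 2, v 3` of vertices of degree 3 attached to a set `outer` of further
edges by the spokes `s(v k, u k)`; the spokes belong to `outer`, the edges of the 4-cycle do not. -/
structure SquareFrame (V : Type*) [DecidableEq V] where
  v : Fin 4 → V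
  u : Fin 4 → V
  outer : Finset (Sym2 V)
  v_injective : v.Injective
  u_ne_v : ∀ j k, u j ≠ v k
  not_isDiag : ∀ e ∈ outer, ¬ e.IsDiag
  eq_spoke : ∀ e ∈ outer, ∀ k, v k ∈ e → e = s(v k, u k)
  spoke_mem : ∀ k, s(v k, u k) ∈ outer
  edgeDegree_u : ∀ k, edgeDegree outer (u k) = 3

namespace SquareFrame

variable {V : Type*} [DecidableEq V] (S : SquareFrame V) {P Q T X Z : Finset (Sym2 V)}
  {J J' : Finset (Fin 4)} {k : Fin 4} {e : Sym2 V} {x : V}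

/-- The edges of the 4-cycle. -/
def rim (k : Fin 4) : Sym2 V := s(S.v k, S.v (k + 1))

/-- A set of edges of the 4-cycle, given by its indices. -/
def rims (J : Finset (Fin 4)) : Finset (Sym2 V) := J.image S.rim

/-- The edge set with outer part `P` that contains the edges `J` of the 4-cycle. -/
def glue (P : Finset (Sym2 V)) (J : Finset (Fin 4)) : Finset (Sym2 V) := P ∪ S.rims J

/-- The indices of the spokes in `P`. -/
def ends (P : Finset (Sym2 V)) : Finset (Fin 4) := {k | s(S.v k, S.u k) ∈ P}

variable {S}

theorem mem_ends : k ∈ S.ends P ↔ s(S.v k, S.u k) ∈ P := by simp [ends]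

theorem ends_union : S.ends (P ∪ Q) = S.ends P ∪ S.ends Q := by
  ext k
  simp [mem_ends]

theorem ends_empty : S.ends ∅ = ∅ := by simp [ends]

theorem v_mem_rim (j k : Fin 4) : S.v j ∈ S.rim k ↔ j = k ∨ j = k + 1 := by
  simp [rim, S.v_injective.eq_iff]

theorem rim_injective : S.rim.Injective := by
  intro j k h
  have hj := S.v_mem_rim j j
  have hj' := S.v_mem_rim (j + 1) j
  rw [h, v_mem_rim] at hj hj'
  grind

theorem rim_notMem_outer (k : Fin 4) : S.rim k ∉ S.outer := fun h =>
  S.u_ne_v k (k + 1) (Sym2.congr_right.1 (S.eq_spoke _ h k ((v_mem_rim k k).2 (Or.inl rfl)))).symm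

theorem rim_mem_rims : S.rim k ∈ S.rims J ↔ k ∈ J := rim_injective.mem_finset_image

theorem disjoint_rims (hP : P ⊆ S.outer) (J : Finset (Fin 4)) : Disjoint P (S.rims J) := by
  rw [disjoint_right]
  intro e he heP
  obtain ⟨k, -, rfl⟩ := mem_image.1 he
  exact rim_notMem_outer k (hP heP)

theorem glue_subset_glue (hPQ : P ⊆ Q) (hJ : J' ⊆ J) : S.glue P J' ⊆ S.glue Q J :=
  union_subset_union hPQ (image_subset_image hJ)

theorem mem_glue_of_mem_outer (he : e ∈ S.outer) : e ∈ S.glue P J ↔ e ∈ P :=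
  mem_union.trans (or_iff_left (disjoint_left.1 (disjoint_rims Subset.rfl J) he))

theorem rim_mem_glue (hP : P ⊆ S.outer) : S.rim k ∈ S.glue P J ↔ k ∈ J :=
  mem_union.trans ((or_iff_right fun h => rim_notMem_outer k (hP h)).trans rim_mem_rims)

theorem glue_inter_outer (hP : P ⊆ S.outer) : S.glue P J ∩ S.outer = P := by
  ext e
  rw [mem_inter]
  exact ⟨fun h => (mem_glue_of_mem_outer h.2).1 h.1,
    fun h => ⟨(mem_glue_of_mem_outer (hP h)).2 h, hP h⟩⟩

theorem glue_left_cancel (hP : P ⊆ S.outer) (h : S.glue P J = S.glue P J') : J = J' :=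
  ext fun k => by rw [← rim_mem_glue hP, h, rim_mem_glue hP]

theorem exists_eq_glue (hX : X ⊆ S.glue S.outer J) : ∃ J' ⊆ J, X = S.glue (X ∩ S.outer) J' := by
  refine ⟨{k ∈ J | S.rim k ∈ X}, filter_subset _ _, ext fun e => ?_⟩
  simp only [glue, rims, mem_union, mem_inter, mem_image, mem_filter]
  refine ⟨fun he => ?_, ?_⟩
  · refine (mem_union.1 (hX he)).imp (⟨he, ·⟩) fun h => ?_
    obtain ⟨k, hk, rfl⟩ := mem_image.1 h
    exact ⟨k, ⟨hk, he⟩, rfl⟩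
  · rintro (h | ⟨k, ⟨-, hk⟩, rfl⟩)
    exacts [h.1, hk]

theorem edgeDegree_v (hP : P ⊆ S.outer) (k : Fin 4) :
    edgeDegree P (S.v k) = if k ∈ S.ends P then 1 else 0 := by
  have hspoke (e : Sym2 V) (he : e ∈ P) : S.v k ∈ e ↔ e = s(S.v k, S.u k) :=
    ⟨S.eq_spoke e (hP he) k, fun h => h ▸ Sym2.mem_mk_left _ _⟩
  rw [edgeDegree, filter_congr hspoke, filter_eq']
  simp only [mem_ends]
  split_ifs <;> rfl

theorem edgeDegree_rims_v (J : Finset (Fin 4)) (k : Fin 4) :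
    edgeDegree (S.rims J) (S.v k) = (if k ∈ J then 1 else 0) + if k - 1 ∈ J then 1 else 0 := by
  have hcard : ∀ J : Finset (Fin 4), ∀ k, #{j ∈ J | k = j ∨ k = j + 1} =
      (if k ∈ J then 1 else 0) + if k - 1 ∈ J then 1 else 0 := by decide
  rw [edgeDegree, rims, filter_image, card_image_of_injective _ rim_injective]
  simp only [v_mem_rim, hcard]

theorem edgeDegree_rims_of_ne (J : Finset (Fin 4)) (hx : ∀ k, x ≠ S.v k) :
    edgeDegree (S.rims J) x = 0 := by
  simp [edgeDegree_eq_zero, rims, rim, hx]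

theorem edgeDegree_glue_v (hP : P ⊆ S.outer) (k : Fin 4) :
    edgeDegree (S.glue P J) (S.v k) = wheelDegree (S.ends P) J k := by
  rw [glue, edgeDegree_union (disjoint_rims hP J), edgeDegree_v hP, edgeDegree_rims_v, wheelDegree]

theorem edgeDegree_glue_of_ne (hP : P ⊆ S.outer) (hx : ∀ k, x ≠ S.v k) :
    edgeDegree (S.glue P J) x = edgeDegree P x := by
  rw [glue, edgeDegree_union (disjoint_rims hP J), edgeDegree_rims_of_ne J hx, add_zero]

theorem isClosedIn_glue_iff (hZT : Z ⊆ T) (hT : T ⊆ S.outer) (hJ : J' ⊆ J)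
    (hcl : IsClosedIn Z T) : IsClosedIn (S.glue Z J') (S.glue T J) ↔
      ∀ k, wheelDegree (S.ends Z) J' k = 0 ∨
        wheelDegree (S.ends Z) J' k = wheelDegree (S.ends T) J k := by
  have hZ := hZT.trans hT
  rw [isClosedIn_iff_edgeDegree (glue_subset_glue hZT hJ)]
  simp only [← edgeDegree_glue_v hZ, ← edgeDegree_glue_v hT]
  refine ⟨fun h k => h (S.v k), fun h x => ?_⟩
  by_cases hx : ∃ k, x = S.v k
  · obtain ⟨k, rfl⟩ := hx
    exact h k
  · rw [edgeDegree_glue_of_ne hZ (not_exists.1 hx), edgeDegree_glue_of_ne hT (not_exists.1 hx)]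
    exact (isClosedIn_iff_edgeDegree hZT).1 hcl x

theorem isClosedIn_inter_outer {K : Finset (Sym2 V)} (hX : IsClosedIn X K) :
    IsClosedIn (X ∩ S.outer) (K ∩ S.outer) := fun e he f hf x hxe hxf =>
  mem_inter.2 ⟨hX e (mem_inter.1 he).1 f (mem_inter.1 hf).1 x hxe hxf, (mem_inter.1 hf).2⟩

theorem isCircuitSet_glue_empty_iff : IsCircuitSet (S.glue ∅ J) ↔ J = univ := by
  have degree (J : Finset (Fin 4)) (k : Fin 4) :
      edgeDegree (S.glue ∅ J) (S.v k) = wheelDegree ∅ J k := by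
    rw [edgeDegree_glue_v (empty_subset _), ends_empty]
  have nonempty (J : Finset (Fin 4)) : (S.glue ∅ J).Nonempty ↔ J.Nonempty := by simp [glue, rims]
  constructor
  · intro hK
    refine eq_univ_of_wheelDegree_empty J ((nonempty J).1 hK.1.1) fun k => ?_
    simpa only [degree] using hK.2 (S.v k)
  · rintro rfl
    have hwheel : ∀ k, wheelDegree ∅ univ k = 2 := by decide
    refine ⟨⟨(nonempty _).2 univ_nonempty, fun X hX hne hcl => ?_⟩, fun x => ?_⟩
    · obtain ⟨J', hJ', hXJ⟩ :=
        exists_eq_glue (hX.trans (glue_subset_glue (empty_subset _) Subset.rfl))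
      have hempty : X ∩ S.outer = ∅ :=
        subset_empty.1 (glue_inter_outer (S := S) (empty_subset _) ▸ inter_subset_inter_right hX)
      rw [hempty] at hXJ
      subst hXJ
      rw [isClosedIn_glue_iff Subset.rfl (empty_subset _) hJ' (by simp [IsClosedIn])] at hcl
      simp only [ends_empty, hwheel] at hcl
      rw [eq_univ_of_wheelDegree_empty J' ((nonempty J').1 hne) hcl]
    · by_cases hx : ∃ k, x = S.v k
      · obtain ⟨k, rfl⟩ := hx
        exact Or.inr ((degree _ k).trans (hwheel k))
      · exact Or.inl ((edgeDegree_glue_of_ne (empty_subset _) (not_exists.1 hx)).trans rfl)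

section Strands

/-- A strand: a connected set of outer edges in which every vertex off the 4-cycle has degree 0 or
2, that is, a circuit off the 4-cycle or a path between two vertices of the 4-cycle. -/
def IsStrand (S : SquareFrame V) (P : Finset (Sym2 V)) : Prop :=
  P ⊆ S.outer ∧ IsConnectedSet P ∧
    ∀ x, (∀ k, x ≠ S.v k) → edgeDegree P x = 0 ∨ edgeDegree P x = 2

theorem IsStrand.edgeDegree_le (hP : S.IsStrand P) (x : V) : edgeDegree P x ≤ 2 := by
  by_cases hx : ∃ k, x = S.v k
  · obtain ⟨k, rfl⟩ := hx
    rw [edgeDegree_v hP.1]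
    split_ifs <;> omega
  · have := hP.2.2 x (not_exists.1 hx)
    omega

theorem IsStrand.card_ends (hP : S.IsStrand P) : #(S.ends P) = 0 ∨ #(S.ends P) = 2 := by
  have hends : (S.ends P).image S.v = {x ∈ support P | edgeDegree P x = 1} := by
    ext x
    simp only [mem_image, mem_filter, mem_support]
    constructor
    · rintro ⟨k, hk, rfl⟩
      exact ⟨⟨_, mem_ends.1 hk, Sym2.mem_mk_left _ _⟩, by rw [edgeDegree_v hP.1, if_pos hk]⟩
    · rintro ⟨-, hx⟩
      by_contra! hne
      by_cases hxv : ∃ k, x = S.v k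
      · obtain ⟨k, rfl⟩ := hxv
        rw [edgeDegree_v hP.1, if_neg fun hk => hne k hk rfl] at hx
        omega
      · have := hP.2.2 x (not_exists.1 hxv)
        omega
  rw [← card_image_of_injective _ S.v_injective, hends]
  exact hP.2.1.card_edgeDegree_one (fun e he => S.not_isDiag e (hP.1 he)) hP.edgeDegree_le

theorem IsStrand.card_ends_eq_two (hP : S.IsStrand P) (hne : S.ends P ≠ ∅) : #(S.ends P) = 2 :=
  hP.card_ends.resolve_left (card_ne_zero.2 (nonempty_iff_ne_empty.2 hne))

theorem IsStrand.isCircuitSet (hP : S.IsStrand P) (hends : S.ends P = ∅) : IsCircuitSet P := by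
  refine ⟨hP.2.1, fun x => ?_⟩
  by_cases hx : ∃ k, x = S.v k
  · obtain ⟨k, rfl⟩ := hx
    simp [edgeDegree_v hP.1, hends]
  · exact hP.2.2 x (not_exists.1 hx)

variable {K : Finset (Sym2 V)}

theorem isStrand_of_mem_components (hK : IsCircuitSet K) (hKS : K ⊆ S.glue S.outer J)
    (hP : P ∈ components (K ∩ S.outer)) : S.IsStrand P := by
  obtain ⟨hPK, hcl, hconn⟩ := mem_components.1 hP
  refine ⟨hPK.trans inter_subset_right, hconn, fun x hx => ?_⟩
  obtain ⟨J', -, hKJ⟩ := exists_eq_glue hKS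
  have hdeg := hK.2 x
  rw [hKJ, edgeDegree_glue_of_ne inter_subset_right hx] at hdeg
  have := (isClosedIn_iff_edgeDegree hPK).1 hcl x
  omega

theorem eq_of_mem_components_of_ends_eq_empty (hK : IsCircuitSet K) (hKS : K ⊆ S.glue S.outer J)
    (hP : P ∈ components (K ∩ S.outer)) (hends : S.ends P = ∅) : K = P := by
  have hstrand := isStrand_of_mem_components hK hKS hP
  obtain ⟨hPK, -, hconn⟩ := mem_components.1 hP
  have hPK' := hPK.trans inter_subset_left
  refine (hK.1.2 P hPK' hconn.1 ((isClosedIn_iff_edgeDegree hPK').2 fun x => ?_)).symm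
  have := (hstrand.isCircuitSet hends).2 x
  have := hK.2 x
  have := edgeDegree_mono hPK' x
  omega

theorem IsStrand.components_inter_outer (hP : S.IsStrand P) : components (P ∩ S.outer) = {P} := by
  rw [inter_eq_left.2 hP.1, hP.2.1.components_eq]

end Strands

end SquareFrame

namespace SquareFrame

section Circuits

variable {V : Type*} [DecidableEq V] {S : SquareFrame V} {P Q T X Z K : Finset (Sym2 V)}
  {J J' : Finset (Fin 4)}

theorem ends_disjoint (h : VertexDisjoint P Q) : Disjoint (S.ends P) (S.ends Q) :=
  disjoint_left.2 fun _ hP hQ => disjoint_left.1 h.disjoint (mem_ends.1 hP) (mem_ends.1 hQ)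

theorem eq_union_of_ends_eq (h : P = Q ∨ VertexDisjoint P Q) (hPe : S.ends P ≠ ∅)
    (hQe : S.ends Q ≠ ∅) (hZ : Z = ∅ ∨ Z = P ∨ Z = Q ∨ Z = P ∪ Q)
    (hends : S.ends Z = S.ends P ∪ S.ends Q) : Z = P ∪ Q := by
  rcases h with rfl | h
  · have hZne : Z ≠ ∅ := by
      rintro rfl
      rw [ends_empty, union_self] at hends
      exact hPe hends.symm
    simpa [hZne] using hZ
  · have hdisj := ends_disjoint (S := S) h
    rcases hZ with rfl | rfl | rfl | rfl
    · rw [ends_empty] at hends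
      exact absurd (union_eq_empty.1 hends.symm).1 hPe
    · exact absurd (disjoint_self.1 (hdisj.mono_left (union_eq_left.1 hends.symm))) hQe
    · exact absurd (disjoint_self.1 (hdisj.mono_right (union_eq_right.1 hends.symm))) hPe
    · rfl

theorem exists_isClosedIn_of_mem (h : P = Q ∨ VertexDisjoint P Q) {I : Finset (Fin 4)}
    (hI : I ∈ ({∅, S.ends P, S.ends Q, S.ends P ∪ S.ends Q} : Finset (Finset (Fin 4)))) :
    ∃ Z ⊆ P ∪ Q, IsClosedIn Z (P ∪ Q) ∧ S.ends Z = I := by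
  simp only [mem_insert, mem_singleton] at hI
  rcases hI with rfl | rfl | rfl | rfl
  · exact ⟨∅, empty_subset _, fun _ h => absurd h (notMem_empty _), ends_empty⟩
  · exact ⟨P, subset_union_left, isClosedIn_union_of_eq_or h, rfl⟩
  · exact ⟨Q, subset_union_right, union_comm P Q ▸
      isClosedIn_union_of_eq_or (h.imp Eq.symm VertexDisjoint.symm), rfl⟩
  · exact ⟨P ∪ Q, Subset.rfl, fun _ _ f hf _ _ _ => hf, ends_union⟩

theorem isCircuitPattern_of_isCircuitSet (hP : S.IsStrand P) (hQ : S.IsStrand Q)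
    (h : P = Q ∨ VertexDisjoint P Q) (hK : IsCircuitSet (S.glue (P ∪ Q) J)) :
    IsCircuitPattern (S.ends P) (S.ends Q) J := by
  have hPQ := union_subset hP.1 hQ.1
  rw [IsCircuitPattern, ← ends_union]
  refine ⟨fun k => by simpa only [edgeDegree_glue_v hPQ] using hK.2 (S.v k),
    fun I hI J' hJ' hdeg => ?_⟩
  rw [ends_union] at hI
  obtain ⟨Z, hZ, hcl, rfl⟩ := exists_isClosedIn_of_mem h hI
  rw [mem_powerset] at hJ'
  obtain hempty | hne := (S.glue Z J').eq_empty_or_nonempty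
  · obtain ⟨rfl, hJ⟩ := union_eq_empty.1 hempty
    exact Or.inl ⟨ends_empty, image_eq_empty.1 hJ⟩
  · have hglue := hK.1.2 _ (glue_subset_glue hZ hJ') hne
      ((isClosedIn_glue_iff hZ hPQ hJ' hcl).2 hdeg)
    have hZPQ : Z = P ∪ Q := by
      rw [← glue_inter_outer (hZ.trans hPQ), hglue, glue_inter_outer hPQ]
    subst hZPQ
    exact Or.inr ⟨rfl, glue_left_cancel hPQ hglue⟩

theorem isConnectedSet_of_isCircuitPattern (hP : S.IsStrand P) (hQ : S.IsStrand Q)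
    (h : P = Q ∨ VertexDisjoint P Q) (hPe : S.ends P ≠ ∅) (hQe : S.ends Q ≠ ∅)
    (hpat : IsCircuitPattern (S.ends P) (S.ends Q) J) :
    IsConnectedSet (S.glue (P ∪ Q) J) := by
  have hPQ := union_subset hP.1 hQ.1
  refine ⟨hP.2.1.1.mono (subset_union_left.trans subset_union_left), fun X hX hne hcl => ?_⟩
  obtain ⟨J', hJ', hXJ⟩ := exists_eq_glue (hX.trans (glue_subset_glue hPQ Subset.rfl))
  have hZ : X ∩ S.outer ⊆ P ∪ Q := glue_inter_outer hPQ ▸ inter_subset_inter_right hX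
  have hZcl : IsClosedIn (X ∩ S.outer) (P ∪ Q) := by
    simpa only [glue_inter_outer hPQ] using isClosedIn_inter_outer (S := S) hcl
  rw [hXJ, isClosedIn_glue_iff hZ hPQ hJ' hZcl, ends_union] at hcl
  have hcases := eq_of_isClosedIn_union hP.2.1 hQ.2.1 hZ hZcl
  have hends : S.ends (X ∩ S.outer) ∈
      ({∅, S.ends P, S.ends Q, S.ends P ∪ S.ends Q} : Finset (Finset (Fin 4))) := by
    rw [← ends_union]
    rcases hcases with h | h | h | h <;> simp [h, ends_empty]
  obtain ⟨hZe, rfl⟩ | ⟨hZe, rfl⟩ := hpat.2 _ hends J' (mem_powerset.2 hJ') hcl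
  · have hZ0 : X ∩ S.outer = ∅ := by
      rcases hcases with h | h | h | h
      · exact h
      · exact absurd (h ▸ hZe) hPe
      · exact absurd (h ▸ hZe) hQe
      · exact absurd (union_eq_empty.1 (ends_union (S := S) ▸ h ▸ hZe)).1 hPe
    rw [hZ0] at hXJ
    exact absurd hXJ hne.ne_empty
  · rw [hXJ, eq_union_of_ends_eq h hPe hQe hcases hZe]

theorem isCircuitSet_glue_union_iff (hP : S.IsStrand P) (hQ : S.IsStrand Q)
    (h : P = Q ∨ VertexDisjoint P Q) (hPe : S.ends P ≠ ∅) (hQe : S.ends Q ≠ ∅) :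
    IsCircuitSet (S.glue (P ∪ Q) J) ↔ IsCircuitPattern (S.ends P) (S.ends Q) J := by
  refine ⟨isCircuitPattern_of_isCircuitSet hP hQ h, fun hpat =>
    ⟨isConnectedSet_of_isCircuitPattern hP hQ h hPe hQe hpat, fun x => ?_⟩⟩
  have hPQ := union_subset hP.1 hQ.1
  by_cases hx : ∃ k, x = S.v k
  · obtain ⟨k, rfl⟩ := hx
    rw [edgeDegree_glue_v hPQ, ends_union]
    exact hpat.1 k
  · rw [edgeDegree_glue_of_ne hPQ (not_exists.1 hx)]
    have hPx := hP.2.2 x (not_exists.1 hx)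
    rcases h with rfl | h
    · rwa [union_self]
    · have hQx := hQ.2.2 x (not_exists.1 hx)
      have hcl := (isClosedIn_iff_edgeDegree subset_union_left).1 h.isClosedIn_union x
      rw [edgeDegree_union h.disjoint] at hcl ⊢
      omega

theorem exists_components_eq_pair (hK : IsCircuitSet K) (hKS : K ⊆ S.glue S.outer J)
    (hP : P ∈ components (K ∩ S.outer)) (hends : ∀ R ∈ components (K ∩ S.outer), S.ends R ≠ ∅) :
    ∃ Q, components (K ∩ S.outer) = {P, Q} ∧
      (Q = P ∨ VertexDisjoint P Q ∧ S.ends Q = (S.ends P)ᶜ) := by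
  have card_ends {R} (hR : R ∈ components (K ∩ S.outer)) : #(S.ends R) = 2 :=
    (isStrand_of_mem_components hK hKS hR).card_ends_eq_two (hends R hR)
  have ends_compl {R} (hR : R ∈ components (K ∩ S.outer)) (hne : R ≠ P) :
      VertexDisjoint P R ∧ S.ends R = (S.ends P)ᶜ := by
    have hdisj := vertexDisjoint_of_mem_components hP hR hne.symm
    refine ⟨hdisj, eq_of_subset_of_card_le
      (subset_compl_iff_disjoint_left.2 (ends_disjoint hdisj)) ?_⟩
    rw [card_compl, card_ends hR, card_ends hP, Fintype.card_fin]
  by_cases hex : ∃ Q ∈ components (K ∩ S.outer), Q ≠ P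
  · obtain ⟨Q, hQ, hne⟩ := hex
    refine ⟨Q, Subset.antisymm (fun R hR => ?_) (by grind), Or.inr (ends_compl hQ hne)⟩
    rw [mem_insert, mem_singleton, or_iff_not_imp_left]
    intro hRP
    obtain ⟨k, hk⟩ := nonempty_iff_ne_empty.2 (hends Q hQ)
    have hkR : k ∈ S.ends R := by rwa [(ends_compl hR hRP).2, ← (ends_compl hQ hne).2]
    exact eq_of_mem_components hR hQ (mem_ends.1 hkR) (mem_ends.1 hk)
  · push Not at hex
    exact ⟨P, by rw [pair_eq_singleton]; exact eq_singleton_iff_unique_mem.2 ⟨hP, hex⟩, Or.inl rfl⟩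

end Circuits

end SquareFrame

section EndTypes

/-- The pairs of spokes used by four paths that together use every spoke twice. -/
def endTypes (a b : Fin 4) : Fin 4 → Finset (Fin 4) := ![{0, a}, {0, a}ᶜ, {0, b}, {0, b}ᶜ]

theorem compl_endTypes : ∀ a, a ≠ 0 → ∀ b, b ≠ 0 → ∀ i j,
    endTypes a b j = (endTypes a b i)ᶜ → j = i + 1 ∨ i = j + 1 := by
  decide

theorem exists_eq_pair_zero : ∀ I : Finset (Fin 4), #I = 2 → 0 ∈ I → ∃ a, a ≠ 0 ∧ I = {0, a} := by
  decide

set_option maxRecDepth 100000 in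
theorem eq_compl_pairs : ∀ a, a ≠ 0 → ∀ b, b ≠ 0 → ∀ C, #C = 2 → ∀ D, #D = 2 →
    (∀ k : Fin 4, ((if k ∈ ({0, a} : Finset (Fin 4)) then 1 else 0) +
      if k ∈ ({0, b} : Finset (Fin 4)) then 1 else 0) +
      ((if k ∈ C then 1 else 0) + if k ∈ D then 1 else 0) = 2) →
    C = {0, a}ᶜ ∧ D = {0, b}ᶜ ∨ C = {0, b}ᶜ ∧ D = {0, a}ᶜ := by
  decide +kernel

theorem sum_countP_mem {α ι : Type*} [Fintype ι] [DecidableEq ι] (f : α → Finset ι)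
    (N : Multiset α) : ∑ k, N.countP (k ∈ f ·) = (N.map fun P => #(f P)).sum := by
  induction N using Multiset.induction with
  | empty => simp
  | cons P N ih => simp [Multiset.countP_cons, sum_add_distrib, ih, add_comm]

theorem card_eq_four_of_countP_mem {α : Type*} {f : α → Finset (Fin 4)} {N : Multiset α}
    (hcard : ∀ P ∈ N, #(f P) = 2) (hcount : ∀ k, N.countP (k ∈ f ·) = 2) :
    Multiset.card N = 4 := by
  have hsum := sum_countP_mem f N
  rw [Multiset.map_congr rfl hcard, sum_congr rfl fun k _ => hcount k, Multiset.map_const',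
    Multiset.sum_replicate, sum_const, card_univ, Fintype.card_fin, smul_eq_mul,
    smul_eq_mul] at hsum
  omega

theorem univ_val_map_vecCons {α : Type*} (w x y z : α) :
    (univ : Finset (Fin 4)).val.map ![w, x, y, z] = ({w, y} + {x, z} : Multiset α) := by
  change (w ::ₘ x ::ₘ y ::ₘ {z} : Multiset α) = w ::ₘ y ::ₘ x ::ₘ {z}
  rw [Multiset.cons_swap x y]

theorem exists_endTypes {α : Type*} {f : α → Finset (Fin 4)} {N : Multiset α}
    (hcard : ∀ P ∈ N, #(f P) = 2) (hcount : ∀ k, N.countP (k ∈ f ·) = 2) :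
    ∃ (p : Fin 4 → α) (a b : Fin 4), a ≠ 0 ∧ b ≠ 0 ∧ N = univ.val.map p ∧ f ∘ p = endTypes a b := by
  have hsplit := Multiset.filter_add_not (0 ∈ f ·) N
  have hwith : Multiset.card (N.filter (0 ∈ f ·)) = 2 := by
    rw [← Multiset.countP_eq_card_filter, hcount]
  have hwithout : Multiset.card (N.filter (0 ∉ f ·)) = 2 := by
    have hN := card_eq_four_of_countP_mem hcard hcount
    rw [← hsplit, Multiset.card_add, hwith] at hN
    omega
  obtain ⟨P, Q, hPQ⟩ := Multiset.card_eq_two.1 hwith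
  obtain ⟨R, R', hR⟩ := Multiset.card_eq_two.1 hwithout
  have mem_with (X : α) (hX : X ∈ ({P, Q} : Multiset α)) : #(f X) = 2 ∧ 0 ∈ f X := by
    rw [← hPQ, Multiset.mem_filter] at hX
    exact ⟨hcard X hX.1, hX.2⟩
  have mem_without (X : α) (hX : X ∈ ({R, R'} : Multiset α)) : #(f X) = 2 := by
    rw [← hR, Multiset.mem_filter] at hX
    exact hcard X hX.1
  obtain ⟨a, ha, hPa⟩ := exists_eq_pair_zero (f P) (mem_with P (by simp)).1 (mem_with P (by simp)).2
  obtain ⟨b, hb, hQb⟩ := exists_eq_pair_zero (f Q) (mem_with Q (by simp)).1 (mem_with Q (by simp)).2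
  rw [hPQ, hR] at hsplit
  have hcounts (k : Fin 4) := hcount k
  simp only [← hsplit, Multiset.insert_eq_cons, Multiset.countP_add, Multiset.countP_cons,
    ← Multiset.cons_zero, Multiset.countP_zero, zero_add, hPa, hQb] at hcounts
  obtain ⟨hCa, hDb⟩ | ⟨hCb, hDa⟩ := eq_compl_pairs a ha b hb (f R) (mem_without R (by simp)) (f R')
    (mem_without R' (by simp)) fun k => by have := hcounts k; omega
  · refine ⟨![P, R, Q, R'], a, b, ha, hb, ?_, ?_⟩
    · rw [← hsplit, univ_val_map_vecCons]
    · funext i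
      fin_cases i <;> simp [endTypes, hPa, hQb, hCa, hDb]
  · refine ⟨![P, R', Q, R], a, b, ha, hb, ?_, ?_⟩
    · rw [← hsplit, univ_val_map_vecCons, Multiset.pair_comm R]
    · funext i
      fin_cases i <;> simp [endTypes, hPa, hQb, hCb, hDa]

end EndTypes

namespace SquareFrame

variable {V : Type*} [DecidableEq V] {S : SquareFrame V} {P Q K : Finset (Sym2 V)}
  {C T : Multiset (Finset (Sym2 V))} {J : Finset (Fin 4)} {e : Sym2 V}

/-- The multiset of all connected components of the outer parts of the members of `C`. -/
noncomputable def trace (S : SquareFrame V) (C : Multiset (Finset (Sym2 V))) :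
    Multiset (Finset (Sym2 V)) :=
  C.bind fun K => (components (K ∩ S.outer)).val

theorem coverage_trace (he : e ∈ S.outer) : coverage (S.trace C) e = coverage C e := by
  induction C using Multiset.induction with
  | empty => rfl
  | cons K C ih =>
    rw [trace, Multiset.cons_bind, coverage_add, coverage_components, coverage_cons, ← ih, trace,
      add_comm]
    simp [he]

/-- A multiset of strands that covers every outer edge twice. -/
def IsStrandCover (S : SquareFrame V) (T : Multiset (Finset (Sym2 V))) : Prop :=
  (∀ P ∈ T, S.IsStrand P) ∧ ∀ e ∈ S.outer, coverage T e = 2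

theorem isStrandCover_trace (hC : IsDoubleCover_s11 (S.glue S.outer J) C) :
    S.IsStrandCover (S.trace C) := by
  refine ⟨fun P hP => ?_, fun e he => ?_⟩
  · obtain ⟨K, hK, hPK⟩ := Multiset.mem_bind.1 hP
    exact isStrand_of_mem_components (hC.1 K hK).1 (hC.1 K hK).2 hPK
  · rw [coverage_trace he]
    exact hC.2 e (mem_union_left _ he)

-- Two copies of `P` use up both of its edges at `u k`; no strand can then pass through the third
-- edge at `u k`.
theorem IsStrandCover.count_le_one (hT : S.IsStrandCover T) (hP : P ∈ T) (hne : S.ends P ≠ ∅) :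
    T.count P ≤ 1 := by
  obtain ⟨k, hk⟩ := nonempty_iff_ne_empty.2 hne
  have degree_u {R : Finset (Sym2 V)} (hR : R ∈ T) {f : Sym2 V} (hf : f ∈ R) (hu : S.u k ∈ f) :
      #(R.filter (S.u k ∈ ·)) = 2 :=
    ((hT.1 R hR).2.2 _ (S.u_ne_v k)).resolve_left (edgeDegree_ne_zero.2 ⟨f, hf, hu⟩)
  have star_subset {R : Finset (Sym2 V)} (hR : R ∈ T) :
      R.filter (S.u k ∈ ·) ⊆ S.outer.filter (S.u k ∈ ·) := filter_subset_filter _ (hT.1 R hR).1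
  have hstar : #(S.outer.filter (S.u k ∈ ·)) = 3 := S.edgeDegree_u k
  have hPk := degree_u hP (mem_ends.1 hk) (Sym2.mem_mk_right _ _)
  obtain ⟨f, hf, hfP⟩ := exists_mem_notMem_of_card_lt_card
    (by omega : #(P.filter (S.u k ∈ ·)) < #(S.outer.filter (S.u k ∈ ·)))
  obtain ⟨hfS, hfu⟩ := mem_filter.1 hf
  obtain ⟨R, hR, hfR⟩ := Multiset.countP_pos.1 (two_pos.trans_eq (hT.2 f hfS).symm)
  have hRP : P ≠ R := fun h => hfP (mem_filter.2 ⟨h ▸ hfR, hfu⟩)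
  obtain ⟨e, he⟩ := inter_nonempty_of_card_lt_card_add_card (star_subset hP) (star_subset hR)
    (by rw [hPk, degree_u hR hfR hfu, hstar]; norm_num)
  have heP := (mem_filter.1 (mem_inter.1 he).1).1
  have heR := (mem_filter.1 (mem_inter.1 he).2).1
  by_contra! hcount
  have hle : {P, P, R} ≤ T := by
    rw [Multiset.le_iff_count]
    intro Z
    have := Multiset.one_le_count_iff_mem.2 hR
    simp only [Multiset.insert_eq_cons, Multiset.count_cons, Multiset.count_singleton]
    grind
  have hcov : coverage {P, P, R} e ≤ coverage T e := Multiset.countP_le_of_le _ hle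
  rw [hT.2 e ((hT.1 P hP).1 heP), Multiset.insert_eq_cons, Multiset.insert_eq_cons,
    ← Multiset.cons_zero, coverage_cons, coverage_cons, coverage_cons, if_pos heP,
    if_pos heR] at hcov
  omega

/-- A multiset of strands covering every outer edge twice, split into its circuits and its four
paths. -/
structure StrandSystem (S : SquareFrame V) where
  circuits : Multiset (Finset (Sym2 V))
  path : Fin 4 → Finset (Sym2 V)
  isStrandCover : S.IsStrandCover (circuits + univ.val.map path)
  ends_circuits : ∀ P ∈ circuits, S.ends P = ∅
  ends_path : ∃ a ≠ 0, ∃ b ≠ 0, S.ends ∘ path = endTypes a b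
  path_injective : path.Injective

theorem IsStrandCover.exists_strandSystem (hT : S.IsStrandCover T) :
    ∃ Y : S.StrandSystem, Y.circuits + univ.val.map Y.path = T := by
  have hcard : ∀ P ∈ T.filter (S.ends · ≠ ∅), #(S.ends P) = 2 := fun P hP =>
    (hT.1 P (Multiset.mem_filter.1 hP).1).card_ends_eq_two (Multiset.mem_filter.1 hP).2
  have hcount (k : Fin 4) : (T.filter (S.ends · ≠ ∅)).countP (k ∈ S.ends ·) = 2 := by
    rw [Multiset.countP_filter, ← hT.2 _ (S.spoke_mem k)]
    refine Multiset.countP_congr rfl fun P _ => propext ?_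
    rw [mem_ends]
    exact and_iff_left_of_imp fun hP => ne_empty_of_mem (mem_ends.2 hP)
  obtain ⟨p, a, b, ha, hb, hp, hends⟩ := exists_endTypes hcard hcount
  have hsplit : T.filter (S.ends · = ∅) + univ.val.map p = T := by
    rw [← hp, Multiset.filter_add_not]
  have hpT (i : Fin 4) : p i ∈ T ∧ S.ends (p i) ≠ ∅ :=
    Multiset.mem_filter.1 (hp ▸ Multiset.mem_map_of_mem p (mem_univ i))
  refine ⟨⟨T.filter (S.ends · = ∅), p, hsplit.symm ▸ hT, fun P hP => (Multiset.mem_filter.1 hP).2,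
    ⟨a, ha, b, hb, hends⟩, fun i j hij => ?_⟩, hsplit⟩
  have hnodup : (univ.val.map p).Nodup := by
    refine Multiset.nodup_iff_count_le_one.2 fun P => ?_
    by_cases hP : P ∈ univ.val.map p
    · obtain ⟨i, -, rfl⟩ := Multiset.mem_map.1 hP
      exact (Multiset.count_le_of_le _ (hsplit ▸ Multiset.le_add_left _ _)).trans
        (hT.count_le_one (hpT i).1 (hpT i).2)
    · exact (Multiset.count_eq_zero_of_notMem hP).trans_le zero_le_one
  exact Multiset.inj_on_of_nodup_map hnodup i (mem_univ i) j (mem_univ j) hij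

namespace StrandSystem

variable (Y : S.StrandSystem) {i j : Fin 4}

/-- The pair of spokes used by the `i`-th path. -/
def type (i : Fin 4) : Finset (Fin 4) := S.ends (Y.path i)

variable {Y}

theorem isStrand_path (i : Fin 4) : S.IsStrand (Y.path i) :=
  Y.isStrandCover.1 _ (Multiset.mem_add.2 (Or.inr (Multiset.mem_map_of_mem _ (mem_univ i))))

theorem isStrand_of_mem_circuits (hP : P ∈ Y.circuits) : S.IsStrand P :=
  Y.isStrandCover.1 _ (Multiset.mem_add.2 (Or.inl hP))

theorem exists_type_eq : ∃ a ≠ 0, ∃ b ≠ 0, Y.type = endTypes a b := Y.ends_path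

theorem card_type (i : Fin 4) : #(Y.type i) = 2 := by
  have hcard : ∀ a, a ≠ 0 → ∀ b, b ≠ 0 → ∀ i, #(endTypes a b i) = 2 := by decide
  obtain ⟨a, ha, b, hb, h⟩ := Y.exists_type_eq
  rw [h, hcard a ha b hb]

theorem type_ne_empty (i : Fin 4) : Y.type i ≠ ∅ := fun h => by
  simpa [h] using Y.card_type i

theorem adjacent_of_type_eq_compl (h : Y.type j = (Y.type i)ᶜ) : j = i + 1 ∨ i = j + 1 := by
  obtain ⟨a, ha, b, hb, htype⟩ := Y.exists_type_eq
  rw [htype] at h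
  exact compl_endTypes a ha b hb i j h

theorem path_notMem_circuits (i : Fin 4) : Y.path i ∉ Y.circuits := fun h =>
  type_ne_empty i (Y.ends_circuits _ h)

end StrandSystem

end SquareFrame

section Codes

/-- A code `(M, F)` tells how four paths are closed up to circuits by edges of the 4-cycle: the
paths `i` and `i + 1` lie on a common circuit iff `i ∈ M`, and `F` selects between the two sets of
edges of the 4-cycle that may close up a circuit. -/
abbrev Code : Type := Finset (Fin 4) × Finset (Fin 4)

namespace Code

variable (I : Fin 4 → Finset (Fin 4)) (c : Code)

/-- The indices `i` such that the path `i` lies on a common circuit with the path `i + 1`. -/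
abbrev joined : Finset (Fin 4) := c.1

/-- The leaders whose circuit uses the complementary set of edges of the 4-cycle. -/
abbrev flipped : Finset (Fin 4) := c.2

/-- One index for each circuit: the first one when the circuit contains two paths. -/
def leaders : Finset (Fin 4) := {i | i - 1 ∉ c.joined}

/-- The index of the second path on the circuit of the leader `i`, and `i` if there is none. -/
def partner (i : Fin 4) : Fin 4 := if i ∈ c.joined then i + 1 else i

/-- The edges of the 4-cycle on the circuit of the leader `i`, if the path `j` uses the spokes
`I j`. -/
def connector (i : Fin 4) : Finset (Fin 4) :=
  if i ∈ c.flipped then (arc (I i ∪ I (c.partner i)))ᶜ else arc (I i ∪ I (c.partner i))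

/-- The circuits described by the code are indeed circuits. -/
def IsValid : Prop :=
  c.flipped ⊆ c.leaders ∧ ∀ i ∈ c.joined, i + 1 ∉ c.joined ∧ I (i + 1) = (I i)ᶜ ∧
    ∀ k ∈ c.connector I i, k ∈ I i ↔ k + 1 ∉ I i

instance : Decidable (c.IsValid I) := inferInstanceAs (Decidable (_ ∧ _))

/-- The number of circuits of the code through the `k`-th edge of the 4-cycle. -/
def rimCount (k : Fin 4) : ℕ := #{i ∈ c.leaders | k ∈ c.connector I i}

/-- The valid codes whose circuits use only the edges `J` of the 4-cycle. -/
def within (J : Finset (Fin 4)) : Finset Code :=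
  {c | c.IsValid I ∧ ∀ i ∈ c.leaders, c.connector I i ⊆ J}

/-- The valid codes that use all edges of the 4-cycle equally often, and at most twice. -/
def balanced : Finset Code :=
  {c | c.IsValid I ∧ ∀ k, c.rimCount I k = c.rimCount I 0 ∧ c.rimCount I 0 ≤ 2}

set_option maxRecDepth 100000 in
theorem two_mul_card_within_add_le : ∀ b, b ≠ 0 → ∀ a, a ≠ 0 → ∀ Δ : Finset (Fin 4),
    2 * #{c ∈ within (endTypes a b) {1, 3} | c.joined ⊆ Δ} +
      2 * #{c ∈ within (endTypes a b) {0, 2} | c.joined ⊆ Δ} ≤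
        #{c ∈ balanced (endTypes a b) | c.joined ⊆ Δ} := by
  decide +kernel

theorem bind_leaders (h : ∀ i ∈ c.joined, i + 1 ∉ c.joined) :
    c.leaders.val.bind (fun i => ({i, c.partner i} : Finset (Fin 4)).val) = univ.val := by
  have hbind : ∀ M : Finset (Fin 4), (∀ i ∈ M, i + 1 ∉ M) →
      ({i | i - 1 ∉ M} : Finset (Fin 4)).val.bind (fun i =>
        ({i, if i ∈ M then i + 1 else i} : Finset (Fin 4)).val) = univ.val := by decide
  exact hbind c.joined h

theorem arc_ne_compl : ∀ I : Finset (Fin 4), arc I ≠ (arc I)ᶜ := by decide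

end Code

end Codes

namespace SquareFrame

namespace StrandSystem

variable {V : Type*} [DecidableEq V] {S : SquareFrame V} (Y : S.StrandSystem) {c c' : Code}
  {K P : Finset (Sym2 V)} {J : Finset (Fin 4)} {i k l : Fin 4} {n n' : ℕ}

/-- The circuit of the leader `i` in the code `c`. -/
def block (c : Code) (i : Fin 4) : Finset (Sym2 V) :=
  S.glue (Y.path i ∪ Y.path (c.partner i)) (c.connector Y.type i)

/-- The circuits obtained from the strands of `Y` according to the code `c`, together with `n`
copies of the 4-cycle. -/
def realize (c : Code) (n : ℕ) : Multiset (Finset (Sym2 V)) :=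
  Y.circuits + c.leaders.val.map (Y.block c) + Multiset.replicate n (S.glue ∅ univ)

open Classical in
/-- The indices `i` such that the paths `i` and `i + 1` may lie on a common circuit. -/
noncomputable def disjointSteps : Finset (Fin 4) := {i | VertexDisjoint (Y.path i) (Y.path (i + 1))}

variable {Y}

theorem mem_disjointSteps : i ∈ Y.disjointSteps ↔ VertexDisjoint (Y.path i) (Y.path (i + 1)) := by
  simp [disjointSteps]

theorem path_union_subset_outer (i j : Fin 4) : Y.path i ∪ Y.path j ⊆ S.outer :=
  union_subset (isStrand_path i).1 (isStrand_path j).1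

theorem eq_or_vertexDisjoint_partner (hΔ : c.joined ⊆ Y.disjointSteps) (l : Fin 4) :
    Y.path l = Y.path (c.partner l) ∨ VertexDisjoint (Y.path l) (Y.path (c.partner l)) := by
  unfold Code.partner
  split_ifs with hl
  · exact Or.inr (mem_disjointSteps.1 (hΔ hl))
  · exact Or.inl rfl

theorem isCircuitPattern_partner_iff
    (hpartner : c.partner l = l ∨ Y.type (c.partner l) = (Y.type l)ᶜ) :
    IsCircuitPattern (Y.type l) (Y.type (c.partner l)) J ↔
      (J = arc (Y.type l ∪ Y.type (c.partner l)) ∨ J = (arc (Y.type l ∪ Y.type (c.partner l)))ᶜ) ∧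
        (c.partner l ≠ l → ∀ k ∈ J, k ∈ Y.type l ↔ k + 1 ∉ Y.type l) := by
  obtain h | h := hpartner
  · simp [h, isCircuitPattern_self _ (card_type l)]
  · have hne : c.partner l ≠ l := fun heq => by
      rw [heq] at h
      simpa using congrArg (0 ∈ ·) h
    rw [h, isCircuitPattern_compl _ (card_type l), union_compl]
    simp [hne]

theorem components_block (hΔ : c.joined ⊆ Y.disjointSteps) (l : Fin 4) :
    components (Y.block c l ∩ S.outer) = {Y.path l, Y.path (c.partner l)} := by
  rw [block, glue_inter_outer (path_union_subset_outer _ _)]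
  obtain h | h := eq_or_vertexDisjoint_partner hΔ l
  · rw [← h, union_self, (isStrand_path l).2.1.components_eq, pair_eq_singleton]
  · exact components_union (isStrand_path l).2.1 (isStrand_path _).2.1 h

theorem isCircuitSet_block (hc : c.IsValid Y.type) (hΔ : c.joined ⊆ Y.disjointSteps) (l : Fin 4) :
    IsCircuitSet (Y.block c l) := by
  rw [block, isCircuitSet_glue_union_iff (isStrand_path l) (isStrand_path _)
    (eq_or_vertexDisjoint_partner hΔ l) (type_ne_empty l) (type_ne_empty _)]
  refine (isCircuitPattern_partner_iff ?_).2 ⟨?_, fun hne => ?_⟩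
  · unfold Code.partner
    split_ifs with hl
    exacts [Or.inr (hc.2 l hl).2.1, Or.inl rfl]
  · unfold Code.connector
    split_ifs
    exacts [Or.inr rfl, Or.inl rfl]
  · exact (hc.2 l (by_contra fun hl => hne (if_neg hl))).2.2

theorem trace_realize (hc : c.IsValid Y.type) (hΔ : c.joined ⊆ Y.disjointSteps) (n : ℕ) :
    S.trace (Y.realize c n) = Y.circuits + univ.val.map Y.path := by
  have hcircuits : S.trace Y.circuits = Y.circuits := by
    rw [trace, Multiset.bind_congr fun P hP => by
      rw [(isStrand_of_mem_circuits hP).components_inter_outer, singleton_val],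
      Multiset.bind_singleton, Multiset.map_id']
  have hblocks : S.trace (c.leaders.val.map (Y.block c)) = univ.val.map Y.path := by
    rw [trace, Multiset.bind_map, ← c.bind_leaders fun i hi => (hc.2 i hi).1, Multiset.map_bind]
    refine Multiset.bind_congr fun l _ => ?_
    rw [components_block hΔ, ← image_val_of_injOn Y.path_injective.injOn, image_insert,
      image_singleton]
  have hcycles : S.trace (Multiset.replicate n (S.glue ∅ univ)) = 0 := by
    refine Multiset.eq_zero_of_forall_notMem fun P hP => ?_
    obtain ⟨K, hK, hPK⟩ := Multiset.mem_bind.1 hP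
    rw [Multiset.eq_of_mem_replicate hK, glue_inter_outer (empty_subset _),
      components_empty] at hPK
    exact notMem_empty _ hPK
  rw [trace, realize, Multiset.add_bind, Multiset.add_bind, ← trace, ← trace, ← trace, hcircuits,
    hblocks, hcycles, add_zero]

theorem coverage_realize_rim (c : Code) (n : ℕ) (k : Fin 4) :
    coverage (Y.realize c n) (S.rim k) = c.rimCount Y.type k + n := by
  have hcircuits : coverage Y.circuits (S.rim k) = 0 :=
    Multiset.countP_eq_zero.2 fun P hP h =>
      rim_notMem_outer k ((isStrand_of_mem_circuits hP).1 h)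
  have hblocks : coverage (c.leaders.val.map (Y.block c)) (S.rim k) = c.rimCount Y.type k := by
    rw [coverage, Multiset.countP_map, Code.rimCount, card_def, filter_val]
    simp only [block, rim_mem_glue (path_union_subset_outer _ _)]
  have hcycles : coverage (Multiset.replicate n (S.glue ∅ univ)) (S.rim k) = n := by
    rw [coverage, Multiset.countP_eq_card.2 fun K hK => ?_, Multiset.card_replicate]
    rw [Multiset.eq_of_mem_replicate hK, rim_mem_glue (empty_subset _)]
    exact mem_univ k
  rw [realize, coverage_add, coverage_add, hcircuits, hblocks, hcycles, zero_add]

theorem isDoubleCover_realize (hc : c ∈ Code.balanced Y.type) (hΔ : c.joined ⊆ Y.disjointSteps) :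
    IsDoubleCover_s11 (S.glue S.outer univ) (Y.realize c (2 - c.rimCount Y.type 0)) := by
  obtain ⟨hvalid, hbal⟩ := (mem_filter.1 hc).2
  refine ⟨fun K hK => ?_, fun e he => ?_⟩
  · obtain (hK | hK) | hK := by simpa only [realize, Multiset.mem_add] using hK
    · have hstrand := isStrand_of_mem_circuits hK
      exact ⟨hstrand.isCircuitSet (Y.ends_circuits K hK),
        hstrand.1.trans subset_union_left⟩
    · obtain ⟨l, -, rfl⟩ := Multiset.mem_map.1 hK
      exact ⟨isCircuitSet_block hvalid hΔ l,
        glue_subset_glue (path_union_subset_outer _ _) (subset_univ _)⟩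
    · rw [Multiset.eq_of_mem_replicate hK]
      exact ⟨isCircuitSet_glue_empty_iff.2 rfl, glue_subset_glue (empty_subset _) Subset.rfl⟩
  · obtain he | he := mem_union.1 he
    · rw [← coverage_trace he, trace_realize hvalid hΔ]
      exact Y.isStrandCover.2 e he
    · obtain ⟨k, -, rfl⟩ := mem_image.1 he
      rw [coverage_realize_rim, (hbal k).1]
      have := (hbal k).2
      omega

theorem exists_leader_of_mem_realize (hΔ : c.joined ⊆ Y.disjointSteps) (hK : K ∈ Y.realize c n)
    (hi : Y.path i ∈ components (K ∩ S.outer)) :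
    ∃ l ∈ c.leaders, K = Y.block c l ∧ (i = l ∨ i = c.partner l) := by
  obtain (hK | hK) | hK := by simpa only [realize, Multiset.mem_add] using hK
  · rw [(isStrand_of_mem_circuits hK).components_inter_outer, mem_singleton] at hi
    exact absurd (hi ▸ hK) (path_notMem_circuits i)
  · obtain ⟨l, hl, rfl⟩ := Multiset.mem_map.1 hK
    refine ⟨l, hl, rfl, ?_⟩
    simpa [components_block hΔ, Y.path_injective.eq_iff] using hi
  · rw [Multiset.eq_of_mem_replicate hK, glue_inter_outer (empty_subset _), components_empty] at hi
    exact absurd hi (notMem_empty _)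

theorem block_mem_realize (hl : l ∈ c.leaders) : Y.block c l ∈ Y.realize c n := by
  simp only [realize, Multiset.mem_add]
  exact Or.inl (Or.inr (Multiset.mem_map_of_mem _ hl))

theorem eq_block_of_mem_realize (hΔ : c.joined ⊆ Y.disjointSteps) (hK : K ∈ Y.realize c n)
    (hl : l ∈ c.leaders) (hpath : Y.path l ∈ components (K ∩ S.outer)) : K = Y.block c l := by
  obtain ⟨l', -, rfl, rfl | h⟩ := exists_leader_of_mem_realize hΔ hK hpath
  · rfl
  · unfold Code.partner at h
    split_ifs at h with hl'
    · simp [h, Code.leaders, hl'] at hl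
    · rw [h]

theorem mem_joined_iff (hc : c.IsValid Y.type) (hΔ : c.joined ⊆ Y.disjointSteps) (n : ℕ) :
    i ∈ c.joined ↔ ∃ K ∈ Y.realize c n,
      Y.path i ∈ components (K ∩ S.outer) ∧ Y.path (i + 1) ∈ components (K ∩ S.outer) := by
  constructor
  · intro hi
    have hlead : i ∈ c.leaders := by
      refine mem_filter.2 ⟨mem_univ i, fun hpred => (hc.2 _ hpred).1 ?_⟩
      rwa [sub_add_cancel]
    refine ⟨_, block_mem_realize hlead, ?_⟩
    rw [components_block hΔ, Code.partner, if_pos hi]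
    exact ⟨mem_insert_self _ _, mem_insert_of_mem (mem_singleton_self _)⟩
  · rintro ⟨K, hK, hi, hi'⟩
    obtain ⟨l, -, rfl, hl⟩ := exists_leader_of_mem_realize hΔ hK hi
    rw [components_block hΔ, mem_insert, mem_singleton, Y.path_injective.eq_iff,
      Y.path_injective.eq_iff] at hi'
    unfold Code.partner at hl hi'
    grind

theorem mem_flipped_iff (hc : c.IsValid Y.type) (l : Fin 4) :
    l ∈ c.flipped ↔ l ∈ c.leaders ∧
      c.connector Y.type l ≠ arc (Y.type l ∪ Y.type (c.partner l)) := by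
  unfold Code.connector
  split_ifs with hl
  · simp [hc.1 hl, hl, (Code.arc_ne_compl _).symm]
  · simp [hl]

theorem eq_of_realize_eq (hc : c.IsValid Y.type) (hΔ : c.joined ⊆ Y.disjointSteps)
    (hc' : c'.IsValid Y.type) (hΔ' : c'.joined ⊆ Y.disjointSteps)
    (h : Y.realize c n = Y.realize c' n') : c = c' := by
  have hjoined : c.joined = c'.joined := ext fun i => by
    rw [mem_joined_iff hc hΔ n, mem_joined_iff hc' hΔ' n', h]
  have hleaders : c.leaders = c'.leaders := by simp only [Code.leaders, hjoined]
  have hpartner (l : Fin 4) : c.partner l = c'.partner l := by simp only [Code.partner, hjoined]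
  have hconnector (l : Fin 4) (hl : l ∈ c.leaders) :
      c.connector Y.type l = c'.connector Y.type l := by
    have hblock : Y.block c l = Y.block c' l := by
      refine eq_block_of_mem_realize hΔ' (h ▸ block_mem_realize hl) (hleaders ▸ hl) ?_
      rw [components_block hΔ]
      exact mem_insert_self _ _
    rw [block, block, hpartner] at hblock
    exact glue_left_cancel (path_union_subset_outer _ _) hblock
  refine Prod.ext hjoined (ext fun l => ?_)
  rw [mem_flipped_iff hc, mem_flipped_iff hc', hpartner, hleaders]
  exact and_congr_right fun hl => by rw [hconnector l (hleaders ▸ hl)]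

end StrandSystem

end SquareFrame

namespace SquareFrame

variable {V : Type*} [DecidableEq V] {S : SquareFrame V} {P Q X : Finset (Sym2 V)}
  {D : Multiset (Finset (Sym2 V))} {J : Finset (Fin 4)} {i j l : Fin 4}

theorem ends_mono (h : P ⊆ Q) : S.ends P ⊆ S.ends Q := fun _ hk => mem_ends.2 (h (mem_ends.1 hk))

theorem ends_subset_of_mem_components (hP : P ∈ components (X ∩ S.outer)) : S.ends P ⊆ S.ends X :=
  ends_mono ((mem_components.1 hP).1.trans inter_subset_left)

theorem inter_outer_nonempty (hX : IsCircuitSet X) (hXS : X ⊆ S.glue S.outer J) (hJ : J ≠ univ) :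
    (X ∩ S.outer).Nonempty := by
  by_contra hempty
  obtain ⟨J', hJ', hXJ⟩ := exists_eq_glue hXS
  rw [not_nonempty_iff_eq_empty.1 hempty] at hXJ
  rw [hXJ, isCircuitSet_glue_empty_iff] at hX
  exact hJ (univ_subset_iff.1 (hX ▸ hJ'))

theorem components_filter_ends (hX : IsCircuitSet X) (hXS : X ⊆ S.glue S.outer J) (hJ : J ≠ univ) :
    (components (X ∩ S.outer)).filter (S.ends · = ∅) = if S.ends X = ∅ then {X} else ∅ := by
  split_ifs with hends
  · obtain ⟨e, he⟩ := inter_outer_nonempty hX hXS hJ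
    obtain ⟨P, hP, -⟩ := exists_mem_components he
    have hPends : S.ends P = ∅ := subset_empty.1 (hends ▸ ends_subset_of_mem_components hP)
    obtain rfl := eq_of_mem_components_of_ends_eq_empty hX hXS hP hPends
    rw [(isStrand_of_mem_components hX hXS hP).components_inter_outer, filter_singleton,
      if_pos hends]
  · refine filter_eq_empty_iff.2 fun P hP hPends => hends ?_
    rwa [eq_of_mem_components_of_ends_eq_empty hX hXS hP hPends]

theorem trace_filter_ends (hD : ∀ X ∈ D, IsCircuitSet X ∧ X ⊆ S.glue S.outer J) (hJ : J ≠ univ) :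
    (S.trace D).filter (S.ends · = ∅) = D.filter (S.ends · = ∅) := by
  induction D using Multiset.induction with
  | empty => rfl
  | cons X D ih =>
    obtain ⟨hX, hXS⟩ := hD X (Multiset.mem_cons_self X D)
    rw [trace, Multiset.cons_bind, Multiset.filter_add, ← trace,
      ih fun Z hZ => hD Z (Multiset.mem_cons_of_mem hZ), ← filter_val,
      components_filter_ends hX hXS hJ, Multiset.filter_cons]
    split_ifs <;> rfl

theorem count_trace : (S.trace D).count P = D.countP fun X => P ∈ components (X ∩ S.outer) := by
  induction D using Multiset.induction with
  | empty => rfl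
  | cons X D ih =>
    rw [trace, Multiset.cons_bind, Multiset.count_add, ← trace, ih, Multiset.countP_cons,
      Multiset.count_eq_of_nodup (components _).nodup, add_comm]
    rfl

namespace StrandSystem

variable {Y : S.StrandSystem} {K : Fin 4 → Finset (Sym2 V)}

/-- The circuits `K i` close up the paths of `Y` by edges in `J` of the 4-cycle; `K i` is the
circuit containing the path `i`. -/
structure IsClosure (Y : S.StrandSystem) (J : Finset (Fin 4)) (K : Fin 4 → Finset (Sym2 V)) :
    Prop where
  isCircuitSet : ∀ i, IsCircuitSet (K i)
  subset_glue : ∀ i, K i ⊆ S.glue S.outer J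
  mem_components : ∀ i P, P ∈ components (K i ∩ S.outer) ↔ ∃ j, K j = K i ∧ Y.path j = P

theorem mem_trace_iff (hD : S.trace D = Y.circuits + univ.val.map Y.path) :
    (∃ X ∈ D, P ∈ components (X ∩ S.outer)) ↔ P ∈ Y.circuits ∨ ∃ j, Y.path j = P := by
  have hmem : P ∈ S.trace D ↔ _ := Multiset.mem_bind
  simp only [mem_val, hD, Multiset.mem_add, Multiset.mem_map, mem_univ, true_and] at hmem
  exact hmem.symm

theorem exists_path_of_ends_ne_empty (hD : S.trace D = Y.circuits + univ.val.map Y.path)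
    (hX : X ∈ D) (hends : S.ends X ≠ ∅) : ∃ j, Y.path j ∈ components (X ∩ S.outer) := by
  obtain ⟨k, hk⟩ := nonempty_iff_ne_empty.2 hends
  obtain ⟨P, hP, hkP⟩ := exists_mem_components (mem_inter.2 ⟨mem_ends.1 hk, S.spoke_mem k⟩)
  obtain hcirc | ⟨j, rfl⟩ := (mem_trace_iff hD).1 ⟨X, hX, hP⟩
  · exact absurd (Y.ends_circuits P hcirc) (ne_empty_of_mem (mem_ends.2 hkP))
  · exact ⟨j, hP⟩

theorem exists_filter_path_eq_singleton (hD : S.trace D = Y.circuits + univ.val.map Y.path)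
    (i : Fin 4) : ∃ X, D.filter (fun Z => Y.path i ∈ components (Z ∩ S.outer)) = {X} := by
  rw [← Multiset.card_eq_one, ← Multiset.countP_eq_card_filter, ← count_trace, hD,
    Multiset.count_add, Multiset.count_eq_zero_of_notMem (path_notMem_circuits i), zero_add,
    Multiset.count_map_eq_count' _ _ Y.path_injective]
  exact Multiset.count_univ i

theorem filter_ends_eq_circuits (hJ : J ≠ univ) (hcover : IsDoubleCover_s11 (S.glue S.outer J) D)
    (hD : S.trace D = Y.circuits + univ.val.map Y.path) :
    D.filter (S.ends · = ∅) = Y.circuits := by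
  rw [← trace_filter_ends hcover.1 hJ, hD, Multiset.filter_add,
    Multiset.filter_eq_self.2 Y.ends_circuits, Multiset.filter_eq_nil.2, add_zero]
  intro P hP
  obtain ⟨i, -, rfl⟩ := Multiset.mem_map.1 hP
  exact type_ne_empty i

theorem eq_iff_of_filter_path (hK : D.filter (fun Z => Y.path i ∈ components (Z ∩ S.outer)) = {P}) :
    X = P ↔ X ∈ D ∧ Y.path i ∈ components (X ∩ S.outer) := by
  rw [← Multiset.mem_singleton, ← hK, Multiset.mem_filter]

theorem filter_ends_eq_image (hD : S.trace D = Y.circuits + univ.val.map Y.path)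
    (hK : ∀ i, D.filter (fun Z => Y.path i ∈ components (Z ∩ S.outer)) = {K i}) :
    D.filter (S.ends · ≠ ∅) = (univ.image K).val := by
  have exists_eq {X : Finset (Sym2 V)} (hX : X ∈ D.filter (S.ends · ≠ ∅)) : ∃ j, K j = X := by
    obtain ⟨hXD, hends⟩ := Multiset.mem_filter.1 hX
    obtain ⟨j, hj⟩ := exists_path_of_ends_ne_empty hD hXD hends
    exact ⟨j, ((eq_iff_of_filter_path (hK j)).2 ⟨hXD, hj⟩).symm⟩
  have path_mem (j : Fin 4) := (eq_iff_of_filter_path (hK j)).1 rfl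
  refine (Multiset.Nodup.ext (Multiset.nodup_iff_count_le_one.2 fun X => ?_) (nodup _)).2
    fun X => ⟨fun hX => ?_, fun hX => ?_⟩
  · by_cases hX : X ∈ D.filter (S.ends · ≠ ∅)
    · obtain ⟨j, rfl⟩ := exists_eq hX
      have hcount := congrArg (Multiset.count (K j)) (hK j)
      rw [Multiset.count_filter_of_pos (p := fun Z => Y.path j ∈ components (Z ∩ S.outer))
        (path_mem j).2, Multiset.count_singleton_self] at hcount
      exact (Multiset.count_le_of_le _ (Multiset.filter_le _ D)).trans hcount.le
    · exact (Multiset.count_eq_zero_of_notMem hX).trans_le zero_le_one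
  · obtain ⟨j, rfl⟩ := exists_eq hX
    exact mem_image_of_mem K (mem_univ j)
  · rw [mem_val, mem_image] at hX
    obtain ⟨j, -, rfl⟩ := hX
    refine Multiset.mem_filter.2 ⟨(path_mem j).1, fun hends => type_ne_empty (Y := Y) j ?_⟩
    exact subset_empty.1 (hends ▸ ends_subset_of_mem_components (path_mem j).2)

theorem isClosure_of_filter_path (hcover : IsDoubleCover_s11 (S.glue S.outer J) D)
    (hD : S.trace D = Y.circuits + univ.val.map Y.path)
    (hK : ∀ i, D.filter (fun Z => Y.path i ∈ components (Z ∩ S.outer)) = {K i}) :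
    Y.IsClosure J K := by
  have path_mem (j : Fin 4) := (eq_iff_of_filter_path (hK j)).1 rfl
  have hcirc (i : Fin 4) := hcover.1 _ (path_mem i).1
  refine ⟨fun i => (hcirc i).1, fun i => (hcirc i).2, fun i P => ⟨fun hP => ?_, ?_⟩⟩
  · obtain hPcirc | ⟨j, rfl⟩ := (mem_trace_iff hD).1 ⟨_, (path_mem i).1, hP⟩
    · have hKP := eq_of_mem_components_of_ends_eq_empty (hcirc i).1 (hcirc i).2 hP
        (Y.ends_circuits P hPcirc)
      have hmem := (path_mem i).2
      rw [hKP, (isStrand_of_mem_circuits hPcirc).components_inter_outer, mem_singleton] at hmem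
      exact absurd (hmem ▸ hPcirc) (path_notMem_circuits i)
    · exact ⟨j, ((eq_iff_of_filter_path (hK j)).2 ⟨(path_mem i).1, hP⟩).symm, rfl⟩
  · rintro ⟨j, hj, rfl⟩
    exact hj ▸ (path_mem j).2

theorem exists_isClosure (hJ : J ≠ univ) (hcover : IsDoubleCover_s11 (S.glue S.outer J) D)
    (hD : S.trace D = Y.circuits + univ.val.map Y.path) :
    ∃ K, Y.IsClosure J K ∧ D = Y.circuits + (univ.image K).val := by
  choose K hK using exists_filter_path_eq_singleton hD
  refine ⟨K, isClosure_of_filter_path hcover hD hK, ?_⟩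
  rw [← filter_ends_eq_circuits hJ hcover hD, ← filter_ends_eq_image hD hK,
    Multiset.filter_add_not]

/-- The code of a family of circuits that close up the paths of `Y`. -/
def closureCode (Y : S.StrandSystem) (K : Fin 4 → Finset (Sym2 V)) : Code :=
  let unflipped : Code := (univ.filter fun i => K i = K (i + 1), ∅)
  (unflipped.joined, {l ∈ unflipped.leaders | K l ≠ Y.block unflipped l})

theorem mem_joined_closureCode : i ∈ (Y.closureCode K).joined ↔ K i = K (i + 1) := by
  simp [closureCode, Code.joined]

theorem mem_leaders_closureCode : l ∈ (Y.closureCode K).leaders ↔ K (l - 1) ≠ K l := by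
  rw [Code.leaders, mem_filter_univ, mem_joined_closureCode, sub_add_cancel]

theorem mem_flipped_closureCode : l ∈ (Y.closureCode K).flipped ↔ l ∈ (Y.closureCode K).leaders ∧
    K l ≠ S.glue (Y.path l ∪ Y.path ((Y.closureCode K).partner l))
      (arc (Y.type l ∪ Y.type ((Y.closureCode K).partner l))) :=
  mem_filter

namespace IsClosure

theorem exists_components_eq (hK : Y.IsClosure J K) (i : Fin 4) : ∃ j,
    components (K i ∩ S.outer) = {Y.path i, Y.path j} ∧ K j = K i ∧
      (j = i ∨ VertexDisjoint (Y.path i) (Y.path j) ∧ Y.type j = (Y.type i)ᶜ) := by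
  have path_mem : Y.path i ∈ components (K i ∩ S.outer) := (hK.mem_components i _).2 ⟨i, rfl, rfl⟩
  obtain ⟨Q, hQ, hdisj⟩ := exists_components_eq_pair (hK.isCircuitSet i) (hK.subset_glue i)
    path_mem fun R hR => by
      obtain ⟨j, -, rfl⟩ := (hK.mem_components i R).1 hR
      exact type_ne_empty j
  obtain ⟨j, hj, rfl⟩ := (hK.mem_components i Q).1 (by simp [hQ])
  exact ⟨j, hQ, hj, hdisj.imp_left (Y.path_injective ·)⟩

theorem eq_or_eq_of_eq (hK : Y.IsClosure J K) {j m : Fin 4}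
    (hj : components (K i ∩ S.outer) = {Y.path i, Y.path j}) (hm : K m = K i) : m = i ∨ m = j := by
  simpa [hj, Y.path_injective.eq_iff] using (hK.mem_components i (Y.path m)).2 ⟨m, hm, rfl⟩

theorem succ_ne_of_eq_succ (hK : Y.IsClosure J K) (hi : K i = K (i + 1)) :
    K (i + 1) ≠ K (i + 1 + 1) := fun h => by
  obtain ⟨j, hj, -⟩ := hK.exists_components_eq i
  have hsucc := hK.eq_or_eq_of_eq hj hi.symm
  have hsucc₂ := hK.eq_or_eq_of_eq hj (hi.trans h).symm
  grind

theorem components_of_leader (hK : Y.IsClosure J K) (hl : l ∈ (Y.closureCode K).leaders) :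
    components (K l ∩ S.outer) = {Y.path l, Y.path ((Y.closureCode K).partner l)} ∧
      ((Y.closureCode K).partner l = l ∨
        VertexDisjoint (Y.path l) (Y.path ((Y.closureCode K).partner l)) ∧
          Y.type ((Y.closureCode K).partner l) = (Y.type l)ᶜ) := by
  obtain ⟨j, hj, hKj, hdisj⟩ := hK.exists_components_eq l
  suffices hpartner : (Y.closureCode K).partner l = j by
    rw [hpartner]
    exact ⟨hj, hdisj⟩
  unfold Code.partner
  split_ifs with hjoined
  · exact (hK.eq_or_eq_of_eq hj (mem_joined_closureCode.1 hjoined).symm).resolve_left (by simp)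
  · obtain rfl | ⟨-, htype⟩ := hdisj
    · rfl
    · obtain rfl | rfl := adjacent_of_type_eq_compl htype
      · exact absurd (mem_joined_closureCode.2 hKj.symm) hjoined
      · rw [mem_leaders_closureCode, add_sub_cancel_right] at hl
        exact absurd hKj hl

theorem mem_leaders_of_mem_joined (hK : Y.IsClosure J K) (hi : i ∈ (Y.closureCode K).joined) :
    i ∈ (Y.closureCode K).leaders := by
  rw [mem_joined_closureCode] at hi
  rw [mem_leaders_closureCode]
  intro h
  have := hK.succ_ne_of_eq_succ (i := i - 1)
  rw [sub_add_cancel] at this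
  exact this h hi

theorem joined_subset (hK : Y.IsClosure J K) : (Y.closureCode K).joined ⊆ Y.disjointSteps :=
    fun i hi => by
  have hdisj := (hK.components_of_leader (hK.mem_leaders_of_mem_joined hi)).2
  rw [Code.partner, if_pos hi] at hdisj
  exact mem_disjointSteps.2 (hdisj.resolve_left (by simp)).1

theorem isCircuitSet_glue_iff (hK : Y.IsClosure J K) (hl : l ∈ (Y.closureCode K).leaders)
    {J' : Finset (Fin 4)} :
    IsCircuitSet (S.glue (Y.path l ∪ Y.path ((Y.closureCode K).partner l)) J') ↔
      (J' = arc (Y.type l ∪ Y.type ((Y.closureCode K).partner l)) ∨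
        J' = (arc (Y.type l ∪ Y.type ((Y.closureCode K).partner l)))ᶜ) ∧
        ((Y.closureCode K).partner l ≠ l → ∀ k ∈ J', k ∈ Y.type l ↔ k + 1 ∉ Y.type l) := by
  have hpartner := (hK.components_of_leader hl).2
  rw [isCircuitSet_glue_union_iff (isStrand_path l) (isStrand_path _)
    (hpartner.imp (fun h => by rw [h]) And.left) (type_ne_empty l) (type_ne_empty _)]
  exact isCircuitPattern_partner_iff (hpartner.imp_right And.right)

theorem block_eq (hK : Y.IsClosure J K) (hl : l ∈ (Y.closureCode K).leaders) :
    Y.block (Y.closureCode K) l = K l := by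
  obtain ⟨J', -, hKJ⟩ := exists_eq_glue (hK.subset_glue l)
  rw [← biUnion_components (K l ∩ S.outer), (hK.components_of_leader hl).1, biUnion_insert,
    singleton_biUnion, id, id] at hKJ
  have hcirc := hK.isCircuitSet l
  rw [hKJ, hK.isCircuitSet_glue_iff hl] at hcirc
  rw [block, Code.connector]
  split_ifs with hflip
  · have hne := (mem_flipped_closureCode.1 hflip).2
    rw [hKJ, hcirc.1.resolve_left fun h => hne (h ▸ hKJ)]
  · by_contra hne
    exact hflip (mem_flipped_closureCode.2 ⟨hl, Ne.symm hne⟩)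

theorem connector_subset (hK : Y.IsClosure J K) (hl : l ∈ (Y.closureCode K).leaders) :
    (Y.closureCode K).connector Y.type l ⊆ J := fun k hk => by
  have hrim : S.rim k ∈ K l := by
    rw [← hK.block_eq hl, block, rim_mem_glue (path_union_subset_outer _ _)]
    exact hk
  exact (rim_mem_glue Subset.rfl).1 (hK.subset_glue l hrim)

theorem isValid (hK : Y.IsClosure J K) : (Y.closureCode K).IsValid Y.type := by
  refine ⟨filter_subset _ _, fun i hi => ?_⟩
  have hlead := hK.mem_leaders_of_mem_joined hi
  have hpartner : (Y.closureCode K).partner i = i + 1 := if_pos hi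
  have hne : (Y.closureCode K).partner i ≠ i := by simp [hpartner]
  have htype := ((hK.components_of_leader hlead).2.resolve_left hne).2
  have hcirc := hK.isCircuitSet i
  rw [← hK.block_eq hlead, block, hK.isCircuitSet_glue_iff hlead] at hcirc
  refine ⟨fun hsucc => ?_, hpartner ▸ htype, hcirc.2 hne⟩
  exact hK.succ_ne_of_eq_succ (mem_joined_closureCode.1 hi) (mem_joined_closureCode.1 hsucc)

theorem closureCode_mem_within (hK : Y.IsClosure J K) : Y.closureCode K ∈ Code.within Y.type J :=
  mem_filter.2 ⟨mem_univ _, hK.isValid, fun _ hl => hK.connector_subset hl⟩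

theorem exists_leader (hK : Y.IsClosure J K) (i : Fin 4) :
    ∃ l ∈ (Y.closureCode K).leaders, K l = K i := by
  by_cases hi : i ∈ (Y.closureCode K).leaders
  · exact ⟨i, hi, rfl⟩
  · have hpred : K (i - 1) = K i := by simpa [mem_leaders_closureCode] using hi
    refine ⟨i - 1, hK.mem_leaders_of_mem_joined (mem_joined_closureCode.2 ?_), hpred⟩
    rwa [sub_add_cancel]

theorem injOn_leaders (hK : Y.IsClosure J K) : Set.InjOn K (Y.closureCode K).leaders := by
  intro l hl m hm h
  obtain heq | heq := hK.eq_or_eq_of_eq (hK.components_of_leader hl).1 h.symm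
  · exact heq.symm
  · unfold Code.partner at heq
    split_ifs at heq with hjoined
    · rw [heq, mem_coe, mem_leaders_closureCode, add_sub_cancel_right] at hm
      exact absurd (mem_joined_closureCode.1 hjoined) hm
    · exact heq.symm

theorem image_eq_map_block (hK : Y.IsClosure J K) :
    (univ.image K).val = (Y.closureCode K).leaders.val.map (Y.block (Y.closureCode K)) := by
  have himage : univ.image K = (Y.closureCode K).leaders.image K := by
    refine (image_subset_image (subset_univ _)).antisymm' fun X hX => ?_
    obtain ⟨i, -, rfl⟩ := mem_image.1 hX
    obtain ⟨l, hl, hli⟩ := hK.exists_leader i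
    exact hli ▸ mem_image_of_mem K hl
  rw [himage, image_val_of_injOn hK.injOn_leaders]
  exact (Multiset.map_congr rfl fun l hl => hK.block_eq hl).symm

end IsClosure

theorem exists_code_of_isDoubleCover (hJ : J ≠ univ) (hcover : IsDoubleCover_s11 (S.glue S.outer J) D)
    (hD : S.trace D = Y.circuits + univ.val.map Y.path) :
    ∃ c ∈ Code.within Y.type J, c.joined ⊆ Y.disjointSteps ∧ D = Y.realize c 0 := by
  obtain ⟨K, hK, rfl⟩ := exists_isClosure hJ hcover hD
  refine ⟨Y.closureCode K, hK.closureCode_mem_within, hK.joined_subset, ?_⟩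
  rw [realize, hK.image_eq_map_block, Multiset.replicate_zero, add_zero]

end StrandSystem

end SquareFrame

namespace SquareFrame

variable {V : Type*} [DecidableEq V] (S : SquareFrame V) {J : Finset (Fin 4)}
  {D T : Multiset (Finset (Sym2 V))}

/-- The double covers that use only the edges `J` of the 4-cycle. -/
noncomputable def covers (J : Finset (Fin 4)) : Finset (Multiset (Finset (Sym2 V))) :=
  (finite_setOf_isDoubleCover (S.glue S.outer J)).toFinset

variable {S}

theorem mem_covers : D ∈ S.covers J ↔ IsDoubleCover_s11 (S.glue S.outer J) D :=
  Set.Finite.mem_toFinset _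

theorem coverCount_eq_card_covers : coverCount (S.glue S.outer J) = #(S.covers J) :=
  Set.ncard_eq_toFinset_card _ _

namespace StrandSystem

variable (Y : S.StrandSystem)

theorem card_covers_le (hJ : J ≠ univ) :
    #{D ∈ S.covers J | S.trace D = Y.circuits + univ.val.map Y.path} ≤
      #{c ∈ Code.within Y.type J | c.joined ⊆ Y.disjointSteps} := by
  refine card_le_card_of_surjOn (Y.realize · 0) fun D hD => ?_
  obtain ⟨hcover, htrace⟩ := mem_filter.1 hD
  obtain ⟨c, hc, hΔ, rfl⟩ := exists_code_of_isDoubleCover hJ (mem_covers.1 hcover) htrace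
  exact ⟨c, mem_coe.2 (mem_filter.2 ⟨hc, hΔ⟩), rfl⟩

theorem le_card_covers :
    #{c ∈ Code.balanced Y.type | c.joined ⊆ Y.disjointSteps} ≤
      #{D ∈ S.covers univ | S.trace D = Y.circuits + univ.val.map Y.path} := by
  have isValid {c : Code} (hc : c ∈ Code.balanced Y.type) : c.IsValid Y.type :=
    (mem_filter.1 hc).2.1
  refine card_le_card_of_injOn (fun c => Y.realize c (2 - c.rimCount Y.type 0))
    (fun c hc => ?_) fun c hc c' hc' h => ?_
  · obtain ⟨hbal, hΔ⟩ := mem_filter.1 hc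
    exact mem_filter.2 ⟨mem_covers.2 (isDoubleCover_realize hbal hΔ),
      trace_realize (isValid hbal) hΔ _⟩
  · obtain ⟨hbal, hΔ⟩ := mem_filter.1 hc
    obtain ⟨hbal', hΔ'⟩ := mem_filter.1 hc'
    exact eq_of_realize_eq (isValid hbal) hΔ (isValid hbal') hΔ' h

theorem two_mul_card_covers_add_le :
    2 * #{D ∈ S.covers {1, 3} | S.trace D = Y.circuits + univ.val.map Y.path} +
      2 * #{D ∈ S.covers {0, 2} | S.trace D = Y.circuits + univ.val.map Y.path} ≤
        #{D ∈ S.covers univ | S.trace D = Y.circuits + univ.val.map Y.path} := by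
  obtain ⟨a, ha, b, hb, htype⟩ := Y.exists_type_eq
  have hcodes := Code.two_mul_card_within_add_le b hb a ha Y.disjointSteps
  rw [← htype] at hcodes
  calc _ ≤ _ := by gcongr 2 * ?_ + 2 * ?_ <;> exact Y.card_covers_le (by decide)
    _ ≤ _ := hcodes
    _ ≤ _ := Y.le_card_covers

end StrandSystem

theorem two_mul_coverCount_add_le (S : SquareFrame V) :
    2 * coverCount (S.glue S.outer {1, 3}) + 2 * coverCount (S.glue S.outer {0, 2}) ≤
      coverCount (S.glue S.outer univ) := by
  let traces := (S.covers {1, 3} ∪ S.covers {0, 2} ∪ S.covers univ).image S.trace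
  have card_fiberwise {J} (hJ : S.covers J ⊆ S.covers {1, 3} ∪ S.covers {0, 2} ∪ S.covers univ) :
      #(S.covers J) = ∑ T ∈ traces, #{D ∈ S.covers J | S.trace D = T} :=
    card_eq_sum_card_fiberwise fun D hD => mem_image_of_mem _ (hJ hD)
  simp only [coverCount_eq_card_covers]
  rw [card_fiberwise (subset_union_left.trans subset_union_left),
    card_fiberwise (subset_union_right.trans subset_union_left),
    card_fiberwise subset_union_right, mul_sum, mul_sum, ← sum_add_distrib]
  refine sum_le_sum fun T hT => ?_
  obtain ⟨D, hD, rfl⟩ := mem_image.1 hT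
  have hstrand : S.IsStrandCover (S.trace D) := by
    obtain (hD | hD) | hD := by simpa only [mem_union, mem_covers] using hD
    all_goals exact isStrandCover_trace hD
  obtain ⟨Y, hY⟩ := hstrand.exists_strandSystem
  rw [← hY]
  exact Y.two_mul_card_covers_add_le

end SquareFrame

section Reduction

variable {V : Type*} [DecidableEq V]

theorem coverCount_subdivide_twice_le {E : Finset (Sym2 V)} {a b x y : V} (hab : a ≠ b)
    (hxa : x ≠ a) (hxb : x ≠ b) (hya : y ≠ a) (hyb : y ≠ b) (hxy : x ≠ y) (habE : s(a, b) ∉ E)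
    (hx : ∀ e ∈ E, x ∉ e) (hy : ∀ e ∈ E, y ∉ e) :
    coverCount (insert s(a, b) E) ≤
      coverCount (insert s(a, x) (insert s(x, y) (insert s(y, b) E))) := by
  refine (coverCount_subdivide_le hab hxa hxb habE hx).trans ?_
  rw [insert_comm s(a, x), insert_comm s(a, x), insert_comm s(a, x)]
  refine coverCount_subdivide_le hxb hxy.symm hyb (fun h => ?_) fun e he => ?_
  · obtain h | h := mem_insert.1 h
    · rcases Sym2.eq_iff.1 h with h | h <;> simp_all
    · exact hx _ h (Sym2.mem_mk_left x b)
  · obtain rfl | he := mem_insert.1 he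
    · simp [hya, hxy.symm]
    · exact hy e he

namespace SquareFrame

variable {S : SquareFrame V} {e : Sym2 V}

/-- The edges that remain after deleting the vertices of the 4-cycle. -/
def core (S : SquareFrame V) : Finset (Sym2 V) := {e ∈ S.outer | ∀ k, S.v k ∉ e}

theorem mem_outer_iff (j : Fin 4) : e ∈ S.outer ↔ e ∈ S.core ∨ e = s(S.v j, S.u j) ∨
    e = s(S.v (j + 1), S.u (j + 1)) ∨ e = s(S.v (j + 2), S.u (j + 2)) ∨
      e = s(S.v (j + 3), S.u (j + 3)) := by
  constructor
  · intro he
    by_cases hcore : ∀ k, S.v k ∉ e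
    · exact Or.inl (mem_filter.2 ⟨he, hcore⟩)
    · push Not at hcore
      obtain ⟨k, hk⟩ := hcore
      have hcases : ∀ j k : Fin 4, k = j ∨ k = j + 1 ∨ k = j + 2 ∨ k = j + 3 := by decide
      rw [S.eq_spoke e he k hk]
      obtain rfl | rfl | rfl | rfl := hcases j k <;> simp
  · rintro (he | rfl | rfl | rfl | rfl)
    exacts [(mem_filter.1 he).1, S.spoke_mem _, S.spoke_mem _, S.spoke_mem _, S.spoke_mem _]

theorem glue_pair_eq (j : Fin 4) : S.glue S.outer {j, j + 2} =
    insert s(S.u (j + 2), S.v (j + 2)) (insert s(S.v (j + 2), S.v (j + 3))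
      (insert s(S.v (j + 3), S.u (j + 3)) (insert s(S.u j, S.v j) (insert s(S.v j, S.v (j + 1))
        (insert s(S.v (j + 1), S.u (j + 1)) S.core))))) := by
  ext e
  have hadd : j + 2 + 1 = j + 3 := by rw [add_assoc]; rfl
  simp only [glue, rims, rim, mem_union, mem_outer_iff j, image_insert, image_singleton, mem_insert,
    mem_singleton, hadd, Sym2.eq_swap (a := S.u _)]
  tauto

theorem coverCount_core_le (hu : S.u.Injective) (j : Fin 4)
    (hj : s(S.u j, S.u (j + 1)) ∉ S.outer) (hj' : s(S.u (j + 2), S.u (j + 3)) ∉ S.outer) :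
    coverCount (insert s(S.u j, S.u (j + 1)) (insert s(S.u (j + 2), S.u (j + 3)) S.core)) ≤
      coverCount (S.glue S.outer {j, j + 2}) := by
  have v_ne_u (i k : Fin 4) : S.v i ≠ S.u k := (S.u_ne_v k i).symm
  have u_pair_ne : s(S.u j, S.u (j + 1)) ≠ s(S.u (j + 2), S.u (j + 3)) := by
    simp [hu.eq_iff]
  have notMem_core {e : Sym2 V} (he : e ∈ S.core) (k : Fin 4) : S.v k ∉ e := (mem_filter.1 he).2 k
  have core_subset : S.core ⊆ S.outer := filter_subset _ _
  rw [glue_pair_eq]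
  refine (coverCount_subdivide_twice_le (x := S.v j) (y := S.v (j + 1)) (hu.ne (by simp))
    (v_ne_u _ _) (v_ne_u _ _) (v_ne_u _ _) (v_ne_u _ _) (S.v_injective.ne (by simp))
    (by simpa [u_pair_ne] using fun h => hj (core_subset h)) ?_ ?_).trans ?_
  · simpa [v_ne_u] using fun e he => notMem_core he j
  · simpa [v_ne_u] using fun e he => notMem_core he (j + 1)
  rw [insert_comm _ s(S.u (j + 2), S.u (j + 3)), insert_comm _ s(S.u (j + 2), S.u (j + 3)),
    insert_comm _ s(S.u (j + 2), S.u (j + 3))]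
  refine coverCount_subdivide_twice_le (hu.ne (by simp)) (v_ne_u _ _) (v_ne_u _ _) (v_ne_u _ _)
    (v_ne_u _ _) (S.v_injective.ne (by simp)) ?_ ?_ ?_
  · simpa [S.u_ne_v] using fun h => hj' (core_subset h)
  · simpa [v_ne_u, S.v_injective.eq_iff] using fun e he => notMem_core he (j + 2)
  · simpa [v_ne_u, S.v_injective.eq_iff] using fun e he => notMem_core he (j + 3)

end SquareFrame

end Reduction

section Application

variable {V : Type*} {G : SimpleGraph V} {v u : Fin 4 → V}

/-- A 4-cycle `v 0, v 1, v 2, v 3` of `G` in which every `v k` has exactly one further neighbour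
`u k`, and every `u k` has degree 3. -/
structure IsAttachedSquare (G : SimpleGraph V) (v u : Fin 4 → V) : Prop where
  v_injective : v.Injective
  u_ne_v : ∀ j k, u j ≠ v k
  adj_succ : ∀ k, G.Adj (v k) (v (k + 1))
  adj_spoke : ∀ k, G.Adj (v k) (u k)
  ncard_neighborSet_v : ∀ k, (G.neighborSet (v k)).ncard = 3
  ncard_neighborSet_u : ∀ k, (G.neighborSet (u k)).ncard = 3

namespace IsAttachedSquare

theorem eq_of_adj (h : IsAttachedSquare G v u) {k : Fin 4} {y : V} (hy : G.Adj (v k) y) :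
    y = v (k + 1) ∨ y = v (k - 1) ∨ y = u k := by
  have hsub : {v (k + 1), v (k - 1), u k} ⊆ G.neighborSet (v k) := by
    rintro z (rfl | rfl | rfl)
    · exact h.adj_succ k
    · have := h.adj_succ (k - 1)
      rw [sub_add_cancel] at this
      exact this.symm
    · exact h.adj_spoke k
  have hcard : ({v (k + 1), v (k - 1), u k} : Set V).ncard = 3 := by
    have hne : ∀ k : Fin 4, k + 1 ≠ k - 1 := by decide
    exact Set.ncard_eq_three.2 ⟨_, _, _, h.v_injective.ne (hne k), (h.u_ne_v _ _).symm,
      (h.u_ne_v _ _).symm, rfl⟩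
  have heq := Set.eq_of_subset_of_ncard_le hsub (by rw [hcard, h.ncard_neighborSet_v])
    (Set.finite_of_ncard_ne_zero (by simp [h.ncard_neighborSet_v]))
  exact heq.symm.subset hy

variable [Finite V] [DecidableEq V]

/-- The frame of the 4-cycle; its outer edges are all edges of `G` off the 4-cycle. -/
noncomputable def frame (h : IsAttachedSquare G v u) : SquareFrame V where
  v := v
  u := u
  outer := edgesOf (⊤ : G.Subgraph) \ univ.image fun k => s(v k, v (k + 1))
  v_injective := h.v_injective
  u_ne_v := h.u_ne_v
  not_isDiag e he := G.not_isDiag_of_mem_edgeSet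
    (Subgraph.edgeSet_subset _ (mem_edgesOf.1 (mem_sdiff.1 he).1))
  eq_spoke e he k hk := by
    obtain ⟨y, rfl⟩ := hk
    simp only [mem_sdiff, mk_mem_edgesOf, Subgraph.top_adj, mem_image, mem_univ, true_and,
      not_exists] at he
    obtain rfl | rfl | rfl := h.eq_of_adj he.1
    · exact absurd rfl (he.2 k)
    · exact absurd (by rw [sub_add_cancel, Sym2.eq_swap]) (he.2 (k - 1))
    · rfl
  spoke_mem k := by
    simp [mk_mem_edgesOf, h.adj_spoke, h.v_injective.eq_iff, (h.u_ne_v _ _).symm]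
  edgeDegree_u k := by
    refine .trans ?_ (h.ncard_neighborSet_u k)
    rw [← Subgraph.neighborSet_top, ← edgeDegree_edgesOf, edgeDegree, edgeDegree]
    congr 1
    ext e
    simp only [mem_filter, mem_sdiff, and_assoc, and_congr_right_iff, and_iff_right_iff_imp]
    rintro - hk hrim
    obtain ⟨j, -, rfl⟩ := mem_image.1 hrim
    simp [h.u_ne_v] at hk

theorem mem_frame_outer (h : IsAttachedSquare G v u) {e : Sym2 V} :
    e ∈ h.frame.outer ↔ e ∈ G.edgeSet ∧ ∀ k, e ≠ s(v k, v (k + 1)) := by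
  simp [frame, mem_edgesOf, eq_comm]

theorem mem_frame_core (h : IsAttachedSquare G v u) {e : Sym2 V} :
    e ∈ h.frame.core ↔ e ∈ G.edgeSet ∧ ∀ k, v k ∉ e := by
  rw [SquareFrame.core, mem_filter, mem_frame_outer, and_assoc, and_congr_right_iff]
  refine fun _ => and_iff_right_of_imp fun hv k => ?_
  rintro rfl
  exact hv k (Sym2.mem_mk_left _ _)

theorem nu_eq_coverCount_glue (h : IsAttachedSquare G v u) :
    nu G = coverCount (h.frame.glue h.frame.outer univ) := by
  refine nu_eq_coverCount fun e => ?_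
  rw [SquareFrame.glue, mem_union, mem_frame_outer, SquareFrame.rims, mem_image]
  constructor
  · rintro (he | ⟨k, -, rfl⟩)
    exacts [he.1, h.adj_succ k]
  · intro he
    by_cases hrim : ∃ k, h.frame.rim k = e
    · simpa using Or.inr hrim
    · exact Or.inl ⟨he, fun k hk => hrim ⟨k, hk.symm⟩⟩

theorem image_edgesOf_reduction (h : IsAttachedSquare G v u) {A : Set V} (hA : A = Set.range v)
    (G' : SimpleGraph {x // x ∉ A}) (j : Fin 4)
    (hG' : ∀ p q, G'.Adj p q ↔ s(p.1, q.1) = s(u j, u (j + 1)) ∨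
      s(p.1, q.1) = s(u (j + 2), u (j + 3)) ∨ G.Adj p.1 q.1) :
    (edgesOf (⊤ : G'.Subgraph)).image (Sym2.map Subtype.val) =
      insert s(u j, u (j + 1)) (insert s(u (j + 2), u (j + 3)) h.frame.core) := by
  have u_notMem (k : Fin 4) : u k ∉ A := by simp [hA, (h.u_ne_v _ _).symm]
  have mem_core {x y : V} : s(x, y) ∈ h.frame.core ↔ G.Adj x y ∧ x ∉ A ∧ y ∉ A := by
    simp [mem_frame_core, hA, not_or, forall_and, eq_comm]
  have mem_image_iff {p q : {x // x ∉ A}} :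
      s(p.1, q.1) ∈ (edgesOf (⊤ : G'.Subgraph)).image (Sym2.map Subtype.val) ↔ G'.Adj p q := by
    rw [← Sym2.map_mk, (Sym2.map.injective Subtype.val_injective).mem_finset_image, mk_mem_edgesOf,
      Subgraph.top_adj]
  ext e
  constructor
  · intro he
    obtain ⟨f, hf, rfl⟩ := mem_image.1 he
    induction f with | _ p q
    rw [Sym2.map_mk, mem_insert, mem_insert, mem_core]
    exact ((hG' p q).1 (mk_mem_edgesOf.1 hf)).imp_right
      (Or.imp_right fun hadj => ⟨hadj, p.2, q.2⟩)
  · intro he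
    induction e with | _ x y
    obtain ⟨hx, hy⟩ : x ∉ A ∧ y ∉ A := by
      rw [mem_insert, mem_insert, mem_core, Sym2.eq_iff, Sym2.eq_iff] at he
      obtain (⟨rfl, rfl⟩ | ⟨rfl, rfl⟩) | (⟨rfl, rfl⟩ | ⟨rfl, rfl⟩) | ⟨-, hxy⟩ := he
      exacts [⟨u_notMem _, u_notMem _⟩, ⟨u_notMem _, u_notMem _⟩, ⟨u_notMem _, u_notMem _⟩,
        ⟨u_notMem _, u_notMem _⟩, hxy]
    rw [mem_insert, mem_insert, mem_core] at he
    exact mem_image_iff.2 ((hG' ⟨x, hx⟩ ⟨y, hy⟩).2 (he.imp_right (Or.imp_right And.left)))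

theorem nu_reduction_le (h : IsAttachedSquare G v u) (hu : u.Injective) {A : Set V}
    (hA : A = Set.range v) (G' : SimpleGraph {x // x ∉ A}) (j : Fin 4)
    (hj : ¬ G.Adj (u j) (u (j + 1))) (hj' : ¬ G.Adj (u (j + 2)) (u (j + 3)))
    (hG' : ∀ p q, G'.Adj p q ↔ s(p.1, q.1) = s(u j, u (j + 1)) ∨
      s(p.1, q.1) = s(u (j + 2), u (j + 3)) ∨ G.Adj p.1 q.1) :
    nu G' ≤ coverCount (h.frame.glue h.frame.outer {j, j + 2}) := by
  rw [nu_eq_coverCount (E := edgesOf (⊤ : G'.Subgraph)) fun e => by simp [mem_edgesOf]]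
  refine (coverCount_le_image_map Subtype.val_injective _).trans ?_
  rw [h.image_edgesOf_reduction hA G' j hG']
  exact SquareFrame.coverCount_core_le hu j (fun hmem => hj (h.mem_frame_outer.1 hmem).1)
    fun hmem => hj' (h.mem_frame_outer.1 hmem).1

end IsAttachedSquare

end Application

theorem stmt11_general {V : Type*} [Finite V] (G : SimpleGraph V)
    (v₁ v₂ v₃ v₄ u₁ u₂ u₃ u₄ : V)
    (hdeg : ∀ x ∈ ({v₁, v₂, v₃, v₄, u₁, u₂, u₃, u₄} : Set V), (G.neighborSet x).ncard = 3)
    (hv13 : v₁ ≠ v₃) (hv24 : v₂ ≠ v₄)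
    (h12 : G.Adj v₁ v₂) (h23 : G.Adj v₂ v₃) (h34 : G.Adj v₃ v₄) (h41 : G.Adj v₄ v₁)
    (hu1 : G.Adj v₁ u₁) (hu2 : G.Adj v₂ u₂) (hu3 : G.Adj v₃ u₃) (hu4 : G.Adj v₄ u₄)
    (hu12 : u₁ ≠ u₂) (hu13 : u₁ ≠ u₃) (hu14 : u₁ ≠ u₄)
    (hu23 : u₂ ≠ u₃) (hu24 : u₂ ≠ u₄) (hu34 : u₃ ≠ u₄)
    (huv : ∀ x ∈ ({u₁, u₂, u₃, u₄} : Set V), x ∉ ({v₁, v₂, v₃, v₄} : Set V))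
    (hna12 : ¬ G.Adj u₁ u₂) (hna23 : ¬ G.Adj u₂ u₃)
    (hna34 : ¬ G.Adj u₃ u₄) (hna14 : ¬ G.Adj u₁ u₄)
    (G₁ G₂ : SimpleGraph {x : V // x ∉ ({v₁, v₂, v₃, v₄} : Set V)})
    (hG₁ : ∀ p q, G₁.Adj p q ↔ G.Adj p.1 q.1 ∨
      (p.1 = u₁ ∧ q.1 = u₄) ∨ (p.1 = u₄ ∧ q.1 = u₁) ∨
      (p.1 = u₂ ∧ q.1 = u₃) ∨ (p.1 = u₃ ∧ q.1 = u₂))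
    (hG₂ : ∀ p q, G₂.Adj p q ↔ G.Adj p.1 q.1 ∨
      (p.1 = u₁ ∧ q.1 = u₂) ∨ (p.1 = u₂ ∧ q.1 = u₁) ∨
      (p.1 = u₃ ∧ q.1 = u₄) ∨ (p.1 = u₄ ∧ q.1 = u₃)) :
    2 * nu G₁ + 2 * nu G₂ ≤ nu G := by
  classical
  have hv : Function.Injective ![v₁, v₂, v₃, v₄] := by
    simp [Fin.forall_fin_succ, Function.Injective, h12.ne, h23.ne, h34.ne, h41.ne, h12.ne', h23.ne',
      h34.ne', h41.ne', hv13, hv24, hv13.symm, hv24.symm]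
  have hu : Function.Injective ![u₁, u₂, u₃, u₄] := by
    simp [Fin.forall_fin_succ, Function.Injective, hu12, hu13, hu14, hu23, hu24, hu34, hu12.symm,
      hu13.symm, hu14.symm, hu23.symm, hu24.symm, hu34.symm]
  have hA : ({v₁, v₂, v₃, v₄} : Set V) = Set.range ![v₁, v₂, v₃, v₄] := by
    simp only [Matrix.range_cons, Matrix.range_empty, Set.union_empty, Set.insert_eq]
  have hS : IsAttachedSquare G ![v₁, v₂, v₃, v₄] ![u₁, u₂, u₃, u₄] :=
    { v_injective := hv
      u_ne_v := by simpa [Fin.forall_fin_succ] using huv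
      adj_succ := by simp [Fin.forall_fin_succ, *]
      adj_spoke := by simp [Fin.forall_fin_succ, *]
      ncard_neighborSet_v := by simp [Fin.forall_fin_succ, hdeg]
      ncard_neighborSet_u := by simp [Fin.forall_fin_succ, hdeg] }
  have hG₁' (p q) : G₁.Adj p q ↔
      s(p.1, q.1) = s(u₂, u₃) ∨ s(p.1, q.1) = s(u₄, u₁) ∨ G.Adj p.1 q.1 := by
    rw [hG₁, Sym2.eq_iff, Sym2.eq_iff]; tauto
  have hG₂' (p q) : G₂.Adj p q ↔
      s(p.1, q.1) = s(u₁, u₂) ∨ s(p.1, q.1) = s(u₃, u₄) ∨ G.Adj p.1 q.1 := by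
    rw [hG₂, Sym2.eq_iff, Sym2.eq_iff]; tauto
  have hnu₁ : nu G₁ ≤ coverCount (hS.frame.glue hS.frame.outer {1, 3}) :=
    hS.nu_reduction_le hu hA G₁ 1 hna23 (fun h => hna14 h.symm) hG₁'
  have hnu₂ : nu G₂ ≤ coverCount (hS.frame.glue hS.frame.outer {0, 2}) :=
    hS.nu_reduction_le hu hA G₂ 0 hna12 hna34 hG₂'
  calc 2 * nu G₁ + 2 * nu G₂
      ≤ 2 * coverCount (hS.frame.glue hS.frame.outer {1, 3}) +
          2 * coverCount (hS.frame.glue hS.frame.outer {0, 2}) := by gcongr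
    _ ≤ coverCount (hS.frame.glue hS.frame.outer univ) := hS.frame.two_mul_coverCount_add_le
    _ = nu G := hS.nu_eq_coverCount_glue.symm

/-- Reducing a 4-cycle `v₁v₂v₃v₄` in a cyclically 4-edge-connected cubic graph:
deleting the cycle vertices and rejoining the third neighbors `u₁, u₂, u₃, u₄` either by
the edges `u₁u₄, u₂u₃` (giving `G₁`) or by the edges `u₁u₂, u₃u₄` (giving `G₂`) yields
`ν(G) ≥ 4 · min{ν(G₁), ν(G₂)}`. -/
theorem stmt11 {V : Type*} [Fintype V] (G : SimpleGraph V)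
    (hcyc : CyclicallyFourEdgeConnected G) (hcubic : IsCubic G)
    (v₁ v₂ v₃ v₄ u₁ u₂ u₃ u₄ : V)
    (hv13 : v₁ ≠ v₃) (hv24 : v₂ ≠ v₄)
    (h12 : G.Adj v₁ v₂) (h23 : G.Adj v₂ v₃) (h34 : G.Adj v₃ v₄) (h41 : G.Adj v₄ v₁)
    (hu1 : G.Adj v₁ u₁) (hu2 : G.Adj v₂ u₂) (hu3 : G.Adj v₃ u₃) (hu4 : G.Adj v₄ u₄)
    (hu12 : u₁ ≠ u₂) (hu13 : u₁ ≠ u₃) (hu14 : u₁ ≠ u₄)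
    (hu23 : u₂ ≠ u₃) (hu24 : u₂ ≠ u₄) (hu34 : u₃ ≠ u₄)
    (huv : ∀ x ∈ ({u₁, u₂, u₃, u₄} : Set V), x ∉ ({v₁, v₂, v₃, v₄} : Set V))
    (hna12 : ¬ G.Adj u₁ u₂) (hna23 : ¬ G.Adj u₂ u₃)
    (hna34 : ¬ G.Adj u₃ u₄) (hna14 : ¬ G.Adj u₁ u₄)
    (G₁ G₂ : SimpleGraph {x : V // x ∉ ({v₁, v₂, v₃, v₄} : Set V)})
    (hG₁ : ∀ p q, G₁.Adj p q ↔ G.Adj p.1 q.1 ∨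
      (p.1 = u₁ ∧ q.1 = u₄) ∨ (p.1 = u₄ ∧ q.1 = u₁) ∨
      (p.1 = u₂ ∧ q.1 = u₃) ∨ (p.1 = u₃ ∧ q.1 = u₂))
    (hG₂ : ∀ p q, G₂.Adj p q ↔ G.Adj p.1 q.1 ∨
      (p.1 = u₁ ∧ q.1 = u₂) ∨ (p.1 = u₂ ∧ q.1 = u₁) ∨
      (p.1 = u₃ ∧ q.1 = u₄) ∨ (p.1 = u₄ ∧ q.1 = u₃)) :
    4 * min (nu G₁) (nu G₂) ≤ nu G := by
  have := stmt11_general G v₁ v₂ v₃ v₄ u₁ u₂ u₃ u₄ (fun x _ => hcubic x) hv13 hv24 h12 h23 h34 h41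
    hu1 hu2 hu3 hu4 hu12 hu13 hu14 hu23 hu24 hu34 huv hna12 hna23 hna34 hna14 G₁ G₂ hG₁ hG₂
  omega

end CiDC
end
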